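/- Let α ∈ (0,2). For a compact set E ⊆ ℝ² let W_α(E) = inf over Borel probability measures μ supported in E of ∫_E ∫_E |x − y|^{α−2} dμ(x) dμ(y), and define the Riesz α-capacity 𝓘_α(E) = 1 / W_α(E). Then, for any regular hexagon H* with |H*| = 1, 𝓘_α(H*) ≤ 𝓘_α(H) for every H ∈ 𝓗 with |H| = 1; equivalently W_α(H*) ≥ W_α(H), i.e. among convex polygons of unit area that tile the plane by translations, the regular hexagon minimizes the Riesz α-capacity. -/

import Mathlib

open MeasureTheory Metric Filter Real Set
open scoped Topology ENNReal NNReal RealInnerProductSpace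

noncomputable section

/-- The Euclidean plane. -/
abbrev E2 : Type := EuclideanSpace ℝ (Fin 2)

/-- The line through `x` with direction `v`. -/
def lineThrough (x v : E2) : Set E2 := {y : E2 | ∃ t : ℝ, y = x + t • v}

/-- Steiner symmetrization of `A` with respect to the affine line `{x | ⟪x, v⟫ = c}`,
where `v` is a unit normal vector of the line. -/
def steiner (v : E2) (c : ℝ) (A : Set E2) : Set E2 :=
  {y : E2 | ∃ x : E2, ⟪x, v⟫ = c ∧ (A ∩ lineThrough x v).Nonempty ∧
    ∃ r : ℝ, y = x + r • v ∧
      ENNReal.ofReal (2 * |r|) ≤ μH[1] (A ∩ lineThrough x v)}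

/-- The class `𝓗` of centrally symmetric convex hexagons (possibly degenerated to
parallelograms), i.e. the convex polygons tiling the plane by translations. -/
def Hex (H : Set E2) : Prop :=
  (∃ x₀ p q r : E2, H = (fun y => x₀ + y) '' convexHull ℝ ({p, q, r, -p, -q, -r} : Set E2)) ∧
  (interior H).Nonempty

/-- The `k`-th vertex of the standard regular hexagon. -/
def hexVertex (k : ℕ) : E2 :=
  (WithLp.equiv 2 (Fin 2 → ℝ)).symm ![Real.cos (k * π / 3), Real.sin (k * π / 3)]

/-- The standard regular hexagon, with vertices `(cos (kπ/3), sin (kπ/3))`, `k = 0, …, 5`. -/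
def stdHexagon : Set E2 := convexHull ℝ (Set.range fun k : Fin 6 => hexVertex k)

/-- A similarity of the plane (composition of a rotation, a dilation and a translation,
possibly with a reflection). -/
def IsSimilarity (f : E2 → E2) : Prop :=
  ∃ s : ℝ, 0 < s ∧ ∀ x y, dist (f x) (f y) = s * dist x y

/-- A regular hexagon is any image of the standard one under a similarity. -/
def IsRegularHexagon (H : Set E2) : Prop := ∃ f : E2 → E2, IsSimilarity f ∧ H = f '' stdHexagon

/-- Convergence of a sequence of sets in the Hausdorff distance. -/
def HausdorffTendsto (Hn : ℕ → Set E2) (H : Set E2) : Prop :=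
  Tendsto (fun n => EMetric.hausdorffEdist (Hn n) H) atTop (𝓝 0)

/-- The planar cross product (determinant) of two vectors. -/
def det2 (u w : E2) : ℝ := u 0 * w 1 - u 1 * w 0

/-- `A, B, C, D, E, F` are (consecutive) vertices of the centrally symmetric hexagon `H`:
`H` is their convex hull, `D, E, F` are the antipodes of `A, B, C` with respect to a center
`o`, and `H` has nonempty interior. -/
def HexWithVertices (A B C D E F : E2) (H : Set E2) : Prop :=
  H = convexHull ℝ ({A, B, C, D, E, F} : Set E2) ∧
  (∃ o : E2, D = (2:ℝ) • o - A ∧ E = (2:ℝ) • o - B ∧ F = (2:ℝ) • o - C) ∧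
  (interior H).Nonempty

/-- The vertices `A, B, C, D, E, F` are listed in counterclockwise order. -/
def CCWList (A B C D E F : E2) : Prop :=
  0 ≤ det2 (B - A) (C - B) ∧ 0 ≤ det2 (C - B) (D - C) ∧ 0 ≤ det2 (D - C) (E - D) ∧
  0 ≤ det2 (E - D) (F - E) ∧ 0 ≤ det2 (F - E) (A - F) ∧ 0 ≤ det2 (A - F) (B - A)

/-- The six vertices are distinct and no three of them are collinear. -/
def NondegenerateHex (A B C D E F : E2) : Prop :=
  [A, B, C, D, E, F].Pairwise (· ≠ ·) ∧
  ∀ P Q R : E2, P ∈ ({A, B, C, D, E, F} : Set E2) → Q ∈ ({A, B, C, D, E, F} : Set E2) →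
    R ∈ ({A, B, C, D, E, F} : Set E2) → P ≠ Q → P ≠ R → Q ≠ R →
      ¬ Collinear ℝ ({P, Q, R} : Set E2)

/-- The Riesz `α`-energy infimum `W_α(E)`: the infimum over Borel probability measures
supported in `E` of `∫_E ∫_E |x−y|^{α−2} dμ dμ`. -/
def rieszW (α : ℝ) (E : Set E2) : ℝ≥0∞ :=
  ⨅ (μ : Measure E2) (_ : IsProbabilityMeasure μ) (_ : μ E = 1),
    ∫⁻ x in E, ∫⁻ y in E, edist x y ^ (α - 2) ∂μ ∂μ

/-- The Riesz `α`-capacity `𝓘_α(E) = 1 / W_α(E)`. -/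
def rieszCap (α : ℝ) (E : Set E2) : ℝ≥0∞ := 1 / rieszW α E

/-- The Hilbert space `L²(ℝ²)`. -/
abbrev PlaneL2 : Type := Lp ℝ 2 (volume : Measure E2)

/-- The Gaussian density `(π t)⁻¹ exp (-|x|² / t)` on the plane. -/
def gaussKernel (t : ℝ) (x : E2) : ℝ := (π * t)⁻¹ * Real.exp (-(‖x‖ ^ 2 / t))

lemma gaussKernel_pos {t : ℝ} (ht : 0 < t) (x : E2) : 0 < gaussKernel t x := by
  unfold gaussKernel; positivity

lemma gaussKernel_nonneg {t : ℝ} (ht : 0 < t) (x : E2) : 0 ≤ gaussKernel t x :=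
  (gaussKernel_pos ht x).le

lemma gaussKernel_neg (t : ℝ) (x : E2) : gaussKernel t (-x) = gaussKernel t x := by
  simp [gaussKernel]

lemma gaussKernel_sub_comm (t : ℝ) (x y : E2) : gaussKernel t (x - y) = gaussKernel t (y - x) := by
  rw [← gaussKernel_neg, neg_sub]

lemma gaussKernel_le_of_norm_le {t : ℝ} (ht : 0 < t) {x y : E2} (h : ‖y‖ ≤ ‖x‖) :
    gaussKernel t x ≤ gaussKernel t y := by
  unfold gaussKernel
  gcongr

@[fun_prop]
lemma continuous_gaussKernel (t : ℝ) : Continuous (gaussKernel t) := by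
  unfold gaussKernel; fun_prop

lemma measurable_gaussKernel_uncurry : Measurable fun p : ℝ × E2 => gaussKernel p.1 p.2 := by
  unfold gaussKernel; fun_prop

lemma gaussKernel_eq (t : ℝ) (x : E2) :
    gaussKernel t x = (π * t)⁻¹ * Real.exp (-(1 / t) * ‖x‖ ^ 2) := by
  unfold gaussKernel; congr 2; ring

lemma integral_gaussKernel {t : ℝ} (ht : 0 < t) : ∫ x, gaussKernel t x = 1 := by
  simp_rw [gaussKernel_eq]
  rw [integral_const_mul, GaussianFourier.integral_rexp_neg_mul_sq_norm (by positivity)]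
  simp only [finrank_euclideanSpace, Fintype.card_fin]
  norm_num
  field_simp

lemma integrable_gaussKernel {t : ℝ} (ht : 0 < t) : Integrable (gaussKernel t) :=
  Integrable.of_integral_ne_zero (by rw [integral_gaussKernel ht]; norm_num)

lemma gaussKernel_mul_gaussKernel {t s : ℝ} (ht : 0 < t) (hs : 0 < s) (u z : E2) :
    gaussKernel t z * gaussKernel s (u - z) =
      gaussKernel (t + s) u * gaussKernel (t * s / (t + s)) (z - (t / (t + s)) • u) := by
  have hts : 0 < t + s := by positivity
  have h1 : ‖u - z‖ ^ 2 = ‖u‖ ^ 2 - 2 * ⟪u, z⟫ + ‖z‖ ^ 2 := norm_sub_sq_real u z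
  have h2 : ‖z - (t / (t + s)) • u‖ ^ 2 =
      ‖z‖ ^ 2 - 2 * (t / (t + s) * ⟪u, z⟫) + (t / (t + s)) ^ 2 * ‖u‖ ^ 2 := by
    rw [norm_sub_sq_real, real_inner_smul_right, real_inner_comm, norm_smul, mul_pow,
      Real.norm_eq_abs, sq_abs]
  unfold gaussKernel
  rw [mul_mul_mul_comm, mul_mul_mul_comm (π * (t + s))⁻¹, ← Real.exp_add, ← Real.exp_add, h1, h2]
  congr 1
  · field_simp
  · congr 1
    field_simp
    ring

lemma integral_gaussKernel_mul {t s : ℝ} (ht : 0 < t) (hs : 0 < s) (u : E2) :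
    ∫ z, gaussKernel t z * gaussKernel s (u - z) = gaussKernel (t + s) u := by
  simp_rw [gaussKernel_mul_gaussKernel ht hs u]
  rw [integral_const_mul, integral_sub_right_eq_self (gaussKernel _),
    integral_gaussKernel (by positivity), mul_one]

/-- Translation on `L²(ℝ²)`. -/
def transL2 (z : E2) : PlaneL2 →ₗᵢ[ℝ] PlaneL2 :=
  Lp.compMeasurePreservingₗᵢ ℝ (fun x => z + x) (measurePreserving_add_left volume z)

lemma transL2_ae (z : E2) (f : PlaneL2) : transL2 z f =ᵐ[volume] fun x => f (z + x) :=
  Lp.coeFn_compMeasurePreserving f (measurePreserving_add_left volume z)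

lemma continuous_transL2 (f : PlaneL2) : Continuous fun z => transL2 z f := by
  have hg : Continuous fun z : E2 => (⟨fun x => z + x, by fun_prop⟩ : C(E2, E2)) :=
    ContinuousMap.continuous_of_continuous_uncurry _ continuous_add
  exact Continuous.compMeasurePreservingLp (continuous_const (y := f)) hg
    (fun z => measurePreserving_add_left volume z) (by simp)

lemma transL2_transL2 (z w : E2) (f : PlaneL2) : transL2 z (transL2 w f) = transL2 (w + z) f := by
  refine Lp.ext ?_
  filter_upwards [transL2_ae z (transL2 w f), transL2_ae (w + z) f,
    (measurePreserving_add_left volume z).quasiMeasurePreserving.ae (transL2_ae w f)]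
    with x h1 h2 h3
  rw [h1, h2, h3, add_assoc]

lemma transL2_zero (f : PlaneL2) : transL2 0 f = f := by
  refine Lp.ext ?_
  filter_upwards [transL2_ae 0 f] with x h1
  rw [h1, zero_add]

lemma integrable_gaussKernel_smul_transL2 {t : ℝ} (ht : 0 < t) (f : PlaneL2) :
    Integrable fun z => gaussKernel t z • transL2 z f := by
  refine ((integrable_gaussKernel ht).mul_const ‖f‖).mono'
    ((continuous_gaussKernel t).smul (continuous_transL2 f)).aestronglyMeasurable ?_
  filter_upwards with z
  rw [norm_smul, LinearIsometry.norm_map, Real.norm_of_nonneg (gaussKernel_nonneg ht z)]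

/-- The heat semigroup on `L²(ℝ²)`; it is the identity for `t ≤ 0`. -/
def heatL2 (t : ℝ) (f : PlaneL2) : PlaneL2 :=
  if 0 < t then ∫ z, gaussKernel t z • transL2 z f else f

lemma heatL2_of_pos {t : ℝ} (ht : 0 < t) (f : PlaneL2) :
    heatL2 t f = ∫ z, gaussKernel t z • transL2 z f := if_pos ht

lemma norm_heatL2_le (t : ℝ) (f : PlaneL2) : ‖heatL2 t f‖ ≤ ‖f‖ := by
  by_cases ht : 0 < t
  · rw [heatL2_of_pos ht]
    refine (norm_integral_le_integral_norm _).trans ?_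
    simp_rw [norm_smul, LinearIsometry.norm_map, Real.norm_of_nonneg (gaussKernel_nonneg ht _)]
    rw [integral_mul_const, integral_gaussKernel ht, one_mul]
  · simp [heatL2, ht]

/-- The heat semigroup as a continuous linear operator. -/
def heatCLM (t : ℝ) : PlaneL2 →L[ℝ] PlaneL2 :=
  LinearMap.mkContinuous
    { toFun := heatL2 t
      map_add' := fun f g => by
        by_cases ht : 0 < t
        · simp only [heatL2_of_pos ht, map_add, smul_add]
          exact integral_add (integrable_gaussKernel_smul_transL2 ht f)
            (integrable_gaussKernel_smul_transL2 ht g)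
        · simp [heatL2, ht]
      map_smul' := fun c f => by
        by_cases ht : 0 < t
        · simp only [heatL2_of_pos ht, map_smul, RingHom.id_apply]
          rw [← integral_smul]
          congr 1; ext1 z
          rw [smul_comm]
        · simp [heatL2, ht] } 1 (fun f => by simpa using norm_heatL2_le t f)

lemma heatCLM_apply {t : ℝ} (ht : 0 < t) (f : PlaneL2) :
    heatCLM t f = ∫ z, gaussKernel t z • transL2 z f := heatL2_of_pos ht f

lemma norm_heatCLM_apply_le (t : ℝ) (f : PlaneL2) : ‖heatCLM t f‖ ≤ ‖f‖ := norm_heatL2_le t f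

lemma norm_heatCLM_le (t : ℝ) : ‖heatCLM t‖ ≤ 1 :=
  LinearMap.mkContinuous_norm_le _ zero_le_one _

lemma heatCLM_zero : heatCLM 0 = 1 := by
  ext1 f; show heatL2 0 f = f; simp [heatL2]

lemma heatCLM_heatCLM {t s : ℝ} (ht : 0 < t) (hs : 0 < s) (f : PlaneL2) :
    heatCLM t (heatCLM s f) = heatCLM (t + s) f := by
  have hts : 0 < t + s := by positivity
  have hinteg : Integrable (fun p : E2 × E2 =>
      (gaussKernel t p.1 * gaussKernel s (p.2 - p.1)) • transL2 p.2 f)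
      (volume.prod volume) := by
    have h := ((integrable_gaussKernel ht).convolution_integrand (ContinuousLinearMap.mul ℝ ℝ)
      (integrable_gaussKernel hs)).swap.mul_const ‖f‖
    refine h.mono' ?_ ?_
    · have hc : Continuous fun p : E2 × E2 => gaussKernel t p.1 * gaussKernel s (p.2 - p.1) := by
        fun_prop
      exact (hc.smul ((continuous_transL2 f).comp continuous_snd)).aestronglyMeasurable
    · filter_upwards with p
      rw [norm_smul, LinearIsometry.norm_map, Real.norm_of_nonneg
        (mul_nonneg (gaussKernel_nonneg ht _) (gaussKernel_nonneg hs _))]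
      rfl
  rw [heatCLM_apply ht, heatCLM_apply hs, heatCLM_apply hts]
  calc ∫ z, gaussKernel t z • transL2 z (∫ w, gaussKernel s w • transL2 w f)
      = ∫ z, ∫ u, (gaussKernel t z * gaussKernel s (u - z)) • transL2 u f := by
        congr 1; ext1 z
        have h1 : transL2 z (∫ w, gaussKernel s w • transL2 w f) =
            ∫ w, gaussKernel s w • transL2 (w + z) f := by
          rw [← LinearIsometry.coe_toContinuousLinearMap, ← ContinuousLinearMap.integral_comp_comm _
            (integrable_gaussKernel_smul_transL2 hs f)]
          simp [transL2_transL2]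
        rw [h1, ← integral_smul,
          ← integral_sub_right_eq_self (fun w => gaussKernel t z • gaussKernel s w •
            transL2 (w + z) f) z]
        simp [smul_smul]
    _ = ∫ u, ∫ z, (gaussKernel t z * gaussKernel s (u - z)) • transL2 u f :=
        integral_integral_swap hinteg
    _ = ∫ u, gaussKernel (t + s) u • transL2 u f := by
        congr 1; ext1 u
        rw [integral_smul_const, integral_gaussKernel_mul ht hs]

lemma heatCLM_pow {t : ℝ} (ht : 0 < t) (n : ℕ) : heatCLM t ^ n = heatCLM (n * t) := by
  induction n with
  | zero => simp [heatCLM_zero]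
  | succ n ih =>
    rw [pow_succ', ih]
    ext1 f
    rcases n.eq_zero_or_pos with rfl | hn
    · simp [heatCLM_zero]
    · have : 0 < (n : ℝ) * t := by positivity
      rw [mul_apply_eq_comp, heatCLM_heatCLM ht this]
      congr 2; push_cast; ring

lemma inner_transL2 (z : E2) (f g : PlaneL2) : ⟪f, transL2 z g⟫ = ⟪transL2 (-z) f, g⟫ := by
  rw [← (transL2 z).inner_map_map (transL2 (-z) f) g, transL2_transL2]
  simp [transL2_zero]

lemma inner_heatCLM_eq {t : ℝ} (ht : 0 < t) (f g : PlaneL2) :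
    ⟪f, heatCLM t g⟫ = ∫ z, gaussKernel t z * ⟪f, transL2 z g⟫ := by
  rw [heatCLM_apply ht, ← integral_inner (integrable_gaussKernel_smul_transL2 ht g)]
  simp_rw [real_inner_smul_right]

lemma inner_heatCLM_comm {t : ℝ} (ht : 0 < t) (f g : PlaneL2) :
    ⟪f, heatCLM t g⟫ = ⟪heatCLM t f, g⟫ := by
  rw [real_inner_comm g (heatCLM t f), inner_heatCLM_eq ht, inner_heatCLM_eq ht,
    ← integral_neg_eq_self]
  congr 1; ext1 z
  rw [gaussKernel_neg, inner_transL2, neg_neg, real_inner_comm]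

lemma inner_heatCLM_self {t : ℝ} (ht : 0 < t) (f : PlaneL2) :
    ⟪f, heatCLM t f⟫ = ‖heatCLM (t / 2) f‖ ^ 2 := by
  have h := heatCLM_heatCLM (half_pos ht) (half_pos ht) f
  rw [add_halves] at h
  rw [← h, inner_heatCLM_comm (half_pos ht), real_inner_self_eq_norm_sq]

lemma inner_heatCLM_self_nonneg {t : ℝ} (ht : 0 < t) (f : PlaneL2) : 0 ≤ ⟪f, heatCLM t f⟫ := by
  rw [inner_heatCLM_self ht]; positivity

lemma inner_heatCLM_antitone {s t : ℝ} (hs : 0 ≤ s) (hst : s ≤ t) (f : PlaneL2) :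
    ⟪f, heatCLM t f⟫ ≤ ⟪f, heatCLM s f⟫ := by
  rcases hst.eq_or_lt with rfl | hlt
  · rfl
  rcases hs.eq_or_lt with rfl | hs
  · rw [heatCLM_zero, one_apply_eq_self, real_inner_self_eq_norm_sq,
      inner_heatCLM_self hlt]
    gcongr
    exact norm_heatCLM_apply_le _ _
  · have h := heatCLM_heatCLM (half_pos (sub_pos.2 hlt)) (half_pos hs) f
    rw [show (t - s) / 2 + s / 2 = t / 2 by ring] at h
    rw [inner_heatCLM_self hs, inner_heatCLM_self (hs.trans hlt), ← h]
    gcongr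
    exact norm_heatCLM_apply_le _ _

lemma integrable_gaussKernel_mul_mul {t : ℝ} (ht : 0 < t) {f g : E2 → ℝ}
    (hf : MemLp f 2 volume) (hg : MemLp g 2 volume) :
    Integrable (fun p : E2 × E2 => gaussKernel t (p.1 - p.2) * (f p.1 * g p.2))
      (volume.prod volume) := by
  have h1 := ((hg.integrable_sq).convolution_integrand (ContinuousLinearMap.mul ℝ ℝ)
      (integrable_gaussKernel ht))
  have h2 := ((hf.integrable_sq).convolution_integrand (ContinuousLinearMap.mul ℝ ℝ)
      (integrable_gaussKernel ht)).swap
  refine (h1.add h2).mono' ?_ ?_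
  · exact (by fun_prop : Continuous fun p : E2 × E2 =>
      gaussKernel t (p.1 - p.2)).aestronglyMeasurable.mul
      ((hf.1.comp_fst).mul (hg.1.comp_snd))
  · filter_upwards with p
    simp only [Pi.add_apply, Function.comp_apply, Prod.swap, ContinuousLinearMap.mul_apply']
    rw [gaussKernel_sub_comm t p.2 p.1, norm_mul, Real.norm_of_nonneg (gaussKernel_nonneg ht _),
      Real.norm_eq_abs, abs_mul, ← add_mul, mul_comm]
    refine mul_le_mul_of_nonneg_right ?_ (gaussKernel_nonneg ht _)
    rw [← sq_abs (f p.1), ← sq_abs (g p.2)]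
    nlinarith [sq_nonneg (|f p.1| - |g p.2|), sq_nonneg (|f p.1|), sq_nonneg (|g p.2|)]

lemma inner_heatCLM {t : ℝ} (ht : 0 < t) (f g : PlaneL2) :
    ⟪f, heatCLM t g⟫ = ∫ p : E2 × E2, gaussKernel t (p.1 - p.2) * (f p.1 * g p.2)
      ∂(volume.prod volume) := by
  have hinteg := integrable_gaussKernel_mul_mul ht (Lp.memLp f) (Lp.memLp g)
  have hmp := measurePreserving_prod_add_swap (volume : Measure E2) volume
  have hinteg' := hmp.integrable_comp_of_integrable hinteg
  rw [inner_heatCLM_eq ht, integral_prod _ hinteg]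
  calc ∫ z, gaussKernel t z * ⟪f, transL2 z g⟫
      = ∫ z, ∫ x, gaussKernel t (x - (x + z)) * (f x * g (x + z)) := by
        congr 1; ext1 z
        rw [L2.inner_def, ← integral_const_mul]
        refine integral_congr_ae ?_
        filter_upwards [transL2_ae z g] with x hx
        rw [hx, add_comm z x, sub_add_cancel_left, gaussKernel_neg]
        simp [mul_comm]
    _ = ∫ x, ∫ z, gaussKernel t (x - (x + z)) * (f x * g (x + z)) :=
        integral_integral_swap hinteg'
    _ = _ := by
        congr 1; ext1 x
        exact integral_add_left_eq_self (fun y => gaussKernel t (x - y) * (f x * g y)) x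

/-- Kaluza's theorem: the reciprocal of a power series with positive, decreasing, log-convex
coefficients has nonpositive higher coefficients. -/
lemma exists_reciprocal_coeff {u : ℕ → ℝ} (h0 : u 0 = 1) (hpos : ∀ n, 0 < u n) (hanti : Antitone u)
    (hlog : ∀ n, u (n + 1) ^ 2 ≤ u n * u (n + 2)) :
    ∃ b : ℕ → ℝ, (∀ n, 0 ≤ b n) ∧ (∀ n, ∑ i ∈ Finset.range n, b i ≤ 1) ∧
      ∀ n, u (n + 1) = ∑ i ∈ Finset.range (n + 1), b i * u (n - i) := by
  set U : PowerSeries ℝ := PowerSeries.mk u with hU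
  have hUc : PowerSeries.constantCoeff U ≠ 0 := by
    rw [← PowerSeries.coeff_zero_eq_constantCoeff_apply, hU, PowerSeries.coeff_mk, h0]; norm_num
  have hmul : U⁻¹ * U = 1 := PowerSeries.inv_mul_cancel _ hUc
  have ha0 : PowerSeries.coeff 0 U⁻¹ = 1 := by
    simp [hU, h0]
  set b : ℕ → ℝ := fun n => -PowerSeries.coeff (n + 1) U⁻¹ with hb
  have hrec : ∀ n, u (n + 1) = ∑ i ∈ Finset.range (n + 1), b i * u (n - i) := by
    intro n
    have := congrArg (PowerSeries.coeff (n + 1)) hmul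
    rw [PowerSeries.coeff_mul, Finset.Nat.sum_antidiagonal_eq_sum_range_succ_mk,
      Finset.sum_range_succ'] at this
    simp only [hU, PowerSeries.coeff_mk, PowerSeries.coeff_one] at this
    rw [ha0] at this
    simp only [Nat.reduceSubDiff, Nat.add_eq_zero_iff, one_ne_zero, and_false, if_false,
      tsub_zero, one_mul] at this
    rw [hb]
    simp only [neg_mul, Finset.sum_neg_distrib]
    linarith
  have hratio : ∀ m j, j ≤ m → u (j + 1) * u (m + 1) ≤ u (m + 2) * u j := by
    intro m j hjm
    induction m, hjm using Nat.le_induction with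
    | base => nlinarith [hlog j]
    | succ m hjm ih =>
      have h1 := hlog (m + 1)
      have : (u (j + 1) * u (m + 2)) * u (m + 1) ≤ (u (m + 3) * u j) * u (m + 1) := by
        calc (u (j + 1) * u (m + 2)) * u (m + 1) = (u (j + 1) * u (m + 1)) * u (m + 2) := by ring
          _ ≤ (u (m + 2) * u j) * u (m + 2) := by gcongr; exact (hpos _).le
          _ = u j * u (m + 2) ^ 2 := by ring
          _ ≤ u j * (u (m + 1) * u (m + 3)) := by gcongr; exact (hpos _).le
          _ = _ := by ring
      exact le_of_mul_le_mul_right this (hpos _)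
  have hbn : ∀ n, 0 ≤ b n := by
    intro n
    induction n using Nat.strong_induction_on with
    | _ n ih =>
      rcases n with _ | m
      · have := hrec 0
        simp [h0] at this
        rw [← this]; exact (hpos 1).le
      · have h1 := hrec (m + 1)
        rw [Finset.sum_range_succ, Nat.sub_self, h0, mul_one] at h1
        have h2 : (∑ i ∈ Finset.range (m + 1), b i * u (m + 1 - i)) * u (m + 1) ≤
            u (m + 2) * u (m + 1) := by
          conv_rhs => rw [hrec m]
          rw [Finset.sum_mul, Finset.mul_sum]
          refine Finset.sum_le_sum fun i hi => ?_
          have hi' : i ≤ m := by simpa [Nat.lt_succ_iff] using hi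
          have := hratio m (m - i) (Nat.sub_le _ _)
          rw [← Nat.sub_add_comm hi'] at this
          have hbi := ih i (by omega)
          nlinarith [mul_le_mul_of_nonneg_left this hbi]
        have h3 := le_of_mul_le_mul_right h2 (hpos _)
        have h4 : u (m + 1 + 1) = u (m + 2) := rfl
        linarith
  refine ⟨b, hbn, fun n => ?_, hrec⟩
  rcases n with _ | m
  · simp
  · have h1 : (∑ i ∈ Finset.range (m + 1), b i) * u (m + 1) ≤ 1 * u (m + 1) := by
      rw [one_mul]
      conv_rhs => rw [hrec m]
      rw [Finset.sum_mul]
      refine Finset.sum_le_sum fun i _ => ?_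
      exact mul_le_mul_of_nonneg_left (hanti (by omega)) (hbn i)
    exact le_of_mul_le_mul_right h1 (hpos _)

section Hilbert

variable {V : Type*} [NormedAddCommGroup V] [InnerProductSpace ℝ V]

lemma norm_pow_le_one {P : V →L[ℝ] V} (hP : ‖P‖ ≤ 1) (n : ℕ) : ‖P ^ n‖ ≤ 1 := by
  induction n with
  | zero => rw [pow_zero]; exact ContinuousLinearMap.norm_id_le
  | succ n ih =>
    rw [pow_succ]
    exact (norm_mul_le _ _).trans (mul_le_one₀ ih (norm_nonneg _) hP)

lemma inner_pow_comm {P : V →L[ℝ] V} (hs : ∀ x y, ⟪x, P y⟫ = ⟪P x, y⟫) (n : ℕ) (x y : V) :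
    ⟪x, (P ^ n) y⟫ = ⟪(P ^ n) x, y⟫ := by
  induction n generalizing x y with
  | zero => simp
  | succ n ih =>
    rw [pow_succ, mul_apply_eq_comp, ih, hs, ← mul_apply_eq_comp, ← pow_succ, pow_succ']

lemma inner_sq_le_of_psd {A : V →L[ℝ] V} (hs : ∀ x y, ⟪x, A y⟫ = ⟪A x, y⟫)
    (hc : ∀ x, 0 ≤ ⟪x, A x⟫) (x y : V) : ⟪x, A y⟫ ^ 2 ≤ ⟪x, A x⟫ * ⟪y, A y⟫ := by
  have h : ∀ t : ℝ, 0 ≤ ⟪y, A y⟫ * (t * t) + (2 * ⟪x, A y⟫) * t + ⟪x, A x⟫ := by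
    intro t
    have h1 := hc (x + t • y)
    have h4 : ⟪y, A x⟫ = ⟪x, A y⟫ := by rw [hs x y, real_inner_comm]
    rw [map_add, map_smul, inner_add_left, inner_add_right, inner_add_right,
        real_inner_smul_left, real_inner_smul_left, real_inner_smul_right, real_inner_smul_right,
        h4] at h1
    linarith
  have := discrim_le_zero h
  unfold discrim at this
  linarith

lemma summable_norm_smul_pow {P : V →L[ℝ] V} (hP : ‖P‖ ≤ 1) {u : ℕ → ℝ}
    (hu : Summable fun n => |u n|) : Summable fun n => ‖u n • P ^ n‖ := by
  refine Summable.of_nonneg_of_le (fun _ => norm_nonneg _) (fun n => ?_) hu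
  rw [norm_smul, Real.norm_eq_abs]
  exact mul_le_of_le_one_right (abs_nonneg _) (norm_pow_le_one hP n)

variable [CompleteSpace V]

/-- The operator `∑ uₙ Pⁿ`. -/
def powSum (P : V →L[ℝ] V) (u : ℕ → ℝ) : V →L[ℝ] V := ∑' n, u n • P ^ n

lemma hasSum_inner_powSum {P : V →L[ℝ] V} (hP : ‖P‖ ≤ 1) {u : ℕ → ℝ}
    (hu : Summable fun n => |u n|) (x y : V) :
    HasSum (fun n => u n * ⟪x, (P ^ n) y⟫) ⟪x, powSum P u y⟫ := by
  have h := (summable_norm_smul_pow hP hu).of_norm.hasSum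
  have h2 := ((innerSL ℝ x).comp (ContinuousLinearMap.apply ℝ V y)).hasSum h
  simpa [real_inner_smul_right, powSum] using h2

lemma inner_powSum_comm {P : V →L[ℝ] V} (hP : ‖P‖ ≤ 1) (hs : ∀ x y, ⟪x, P y⟫ = ⟪P x, y⟫)
    {u : ℕ → ℝ} (hu : Summable fun n => |u n|) (x y : V) :
    ⟪x, powSum P u y⟫ = ⟪powSum P u x, y⟫ := by
  refine (hasSum_inner_powSum hP hu x y).unique ?_
  rw [real_inner_comm]
  convert hasSum_inner_powSum hP hu y x using 2 with n
  rw [inner_pow_comm hs, real_inner_comm]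

/-- Coefficients `1, -b₀, -b₁, …`. -/
def oneSub (b : ℕ → ℝ) : ℕ → ℝ
  | 0 => 1
  | n + 1 => -b n

lemma powSum_mul_powSum {P : V →L[ℝ] V} (hP : ‖P‖ ≤ 1) {u b : ℕ → ℝ} (h0 : u 0 = 1)
    (hu : Summable fun n => |u n|) (hb : Summable fun n => |oneSub b n|)
    (hrec : ∀ n, u (n + 1) = ∑ i ∈ Finset.range (n + 1), b i * u (n - i)) :
    powSum P (oneSub b) * powSum P u = 1 := by
  unfold powSum
  rw [tsum_mul_tsum_eq_tsum_sum_antidiagonal_of_summable_norm (summable_norm_smul_pow hP hb)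
    (summable_norm_smul_pow hP hu), tsum_eq_single 0]
  · simp [oneSub, h0]
  · intro n hn
    obtain ⟨m, rfl⟩ := Nat.exists_eq_succ_of_ne_zero hn
    have h1 : ∑ kl ∈ Finset.HasAntidiagonal.antidiagonal (m + 1), oneSub b kl.1 * u kl.2 = 0 := by
      rw [Finset.Nat.sum_antidiagonal_eq_sum_range_succ_mk, Finset.sum_range_succ']
      simp only [oneSub, Nat.reduceSubDiff, tsub_zero, one_mul, neg_mul, Finset.sum_neg_distrib]
      rw [hrec m]; ring
    have h2 : ∀ kl ∈ Finset.HasAntidiagonal.antidiagonal (m + 1),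
        oneSub b kl.1 • P ^ kl.1 * u kl.2 • P ^ kl.2 =
        (oneSub b kl.1 * u kl.2) • P ^ (m + 1) := by
      intro kl hkl
      rw [smul_mul_smul_comm, ← pow_add, Finset.HasAntidiagonal.mem_antidiagonal.1 hkl]
    rw [Nat.succ_eq_add_one, Finset.sum_congr rfl h2, ← Finset.sum_smul, h1, zero_smul]

lemma exists_minimizer_of_coercive {G : V →L[ℝ] V} (hs : ∀ x y, ⟪x, G y⟫ = ⟪G x, y⟫)
    (hc : ∀ x, ‖x‖ ^ 2 ≤ ⟪x, G x⟫) {K : Set V} (hne : K.Nonempty) (hcl : IsClosed K)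
    (hK : Convex ℝ K) : ∃ v ∈ K, ∀ k ∈ K, ⟪v, G v⟫ ≤ ⟪G v, k⟫ := by
  set g : V → ℝ := fun x => ⟪x, G x⟫ with hg
  have hgc : Continuous g := by unfold g; fun_prop
  have hg0 : ∀ x, 0 ≤ g x := fun x => (sq_nonneg _).trans (hc x)
  have hbdd : BddBelow (g '' K) := ⟨0, by rintro _ ⟨x, _, rfl⟩; exact hg0 x⟩
  set δ := sInf (g '' K) with hδ
  have hδle : ∀ x ∈ K, δ ≤ g x := fun x hx => csInf_le hbdd ⟨x, hx, rfl⟩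
  have hseq : ∀ n : ℕ, ∃ x ∈ K, g x < δ + 1 / ((n : ℝ) + 1) := by
    intro n
    have : δ < δ + 1 / ((n : ℝ) + 1) := lt_add_of_pos_right _ (by positivity)
    obtain ⟨_, ⟨x, hx, rfl⟩, h⟩ := exists_lt_of_csInf_lt (hne.image g) this
    exact ⟨x, hx, h⟩
  choose x hxK hxg using hseq
  have hpar : ∀ y ∈ K, ∀ z ∈ K, ‖y - z‖ ^ 2 ≤ 2 * (g y - δ) + 2 * (g z - δ) := by
    intro y hy z hz
    have hmid : (1 / 2 : ℝ) • y + (1 / 2 : ℝ) • z ∈ K :=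
      hK hy hz (by norm_num) (by norm_num) (by norm_num)
    have h1 := hδle _ hmid
    have h2 := hc (y - z)
    have h3 := hs y z
    rw [real_inner_comm] at h3
    simp only [hg, map_add, map_sub, map_smul, inner_add_left, inner_add_right, inner_sub_left,
      inner_sub_right, real_inner_smul_left, real_inner_smul_right] at h1 h2 ⊢
    rw [real_inner_comm] at h3
    have h4 : ⟪z, G y⟫ = ⟪y, G z⟫ := by rw [hs y z, real_inner_comm]
    rw [h4] at h1 h2
    linarith
  have hcau : CauchySeq x := by
    refine cauchySeq_of_le_tendsto_0 (fun n : ℕ => Real.sqrt (4 * (1 / ((n : ℝ) + 1))))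
      (fun n m N hn hm => ?_) ?_
    · rw [dist_eq_norm]
      refine Real.le_sqrt_of_sq_le ((hpar _ (hxK n) _ (hxK m)).trans ?_)
      have e1 : 1 / ((n : ℝ) + 1) ≤ 1 / ((N : ℝ) + 1) := by gcongr
      have e2 : 1 / ((m : ℝ) + 1) ≤ 1 / ((N : ℝ) + 1) := by gcongr
      linarith [hxg n, hxg m]
    · have := (tendsto_one_div_add_atTop_nhds_zero_nat (𝕜 := ℝ)).const_mul 4
      simpa using this.sqrt
  obtain ⟨v, hv⟩ := cauchySeq_tendsto_of_complete hcau
  have hvK : v ∈ K := hcl.mem_of_tendsto hv (Eventually.of_forall hxK)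
  have hgv : g v ≤ δ := by
    have h1 : Tendsto (fun n => g (x n)) atTop (𝓝 (g v)) := (hgc.tendsto v).comp hv
    have h2 := (tendsto_one_div_add_atTop_nhds_zero_nat (𝕜 := ℝ)).const_add δ
    rw [add_zero] at h2
    exact le_of_tendsto_of_tendsto' h1 h2 fun n => (hxg n).le
  refine ⟨v, hvK, fun k hk => ?_⟩
  by_contra! hlt
  have hlin : ∀ t : ℝ, 0 < t → t ≤ 1 → 0 ≤ 2 * (⟪G v, k⟫ - ⟪v, G v⟫) + t * g (k - v) := by
    intro t ht ht1
    have hmem : (1 - t) • v + t • k ∈ K := hK hvK hk (by linarith) ht.le (by ring)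
    have h1 := hgv.trans (hδle _ hmem)
    rw [show (1 - t) • v + t • k = v + t • (k - v) by module] at h1
    have h4 : ⟪k - v, G v⟫ = ⟪v, G (k - v)⟫ := by rw [hs v, real_inner_comm]
    have h5 : ⟪v, G (k - v)⟫ = ⟪G v, k⟫ - ⟪v, G v⟫ := by
      rw [hs v, inner_sub_right, real_inner_comm v (G v)]
    have h6 : g (v + t • (k - v)) =
        g v + t * (2 * (⟪G v, k⟫ - ⟪v, G v⟫) + t * g (k - v)) := by
      simp only [hg]
      rw [map_add, map_smul, inner_add_left, inner_add_right, inner_add_right,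
        real_inner_smul_left, real_inner_smul_left, real_inner_smul_right, real_inner_smul_right,
        h4, h5]
      ring
    rw [h6] at h1
    have h7 : 0 ≤ t * (2 * (⟪G v, k⟫ - ⟪v, G v⟫) + t * g (k - v)) := by linarith
    exact nonneg_of_mul_nonneg_right h7 ht
  set d := ⟪v, G v⟫ - ⟪G v, k⟫ with hd
  have hdpos : 0 < d := by linarith
  have hgk := hg0 (k - v)
  have h := hlin (min 1 (d / (g (k - v) + 1))) (by positivity) (min_le_left _ _)
  have h2 : min 1 (d / (g (k - v) + 1)) * g (k - v) ≤ d := by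
    calc min 1 (d / (g (k - v) + 1)) * g (k - v) ≤ d / (g (k - v) + 1) * (g (k - v) + 1) := by
          gcongr
          · exact min_le_right _ _
          · linarith
      _ = d := by field_simp
  linarith

end Hilbert

section OneSub

variable {b : ℕ → ℝ}

lemma summable_abs_oneSub (hb : ∀ n, 0 ≤ b n) (hb1 : ∀ n, ∑ i ∈ Finset.range n, b i ≤ 1) :
    Summable fun n => |oneSub b n| := by
  rw [← summable_nat_add_iff 1]
  refine (summable_of_sum_range_le hb hb1).congr fun n => ?_
  simp [oneSub, abs_of_nonneg (hb n)]

lemma tsum_oneSub_nonneg (hb : ∀ n, 0 ≤ b n) (hb1 : ∀ n, ∑ i ∈ Finset.range n, b i ≤ 1) :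
    0 ≤ ∑' n, oneSub b n := by
  rw [(summable_abs_oneSub hb hb1).of_abs.tsum_eq_zero_add]
  simp only [oneSub, tsum_neg]
  linarith [Real.tsum_le_of_sum_range_le hb hb1]

variable {V : Type*} [NormedAddCommGroup V] [InnerProductSpace ℝ V] [CompleteSpace V]

lemma inner_powSum_oneSub_mono {P : V →L[ℝ] V} (hP : ‖P‖ ≤ 1) (hb : ∀ n, 0 ≤ b n)
    (hb1 : ∀ n, ∑ i ∈ Finset.range n, b i ≤ 1) {f g : V} (hn : ‖g‖ ≤ ‖f‖)
    (hfg : ∀ n, ⟪f, (P ^ (n + 1)) f⟫ ≤ ⟪g, (P ^ (n + 1)) g⟫) :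
    ⟪g, powSum P (oneSub b) g⟫ ≤ ⟪f, powSum P (oneSub b) f⟫ := by
  have hs := summable_abs_oneSub hb hb1
  refine hasSum_le (fun n => ?_) (hasSum_inner_powSum hP hs g g) (hasSum_inner_powSum hP hs f f)
  rcases n with _ | n
  · simp only [oneSub, pow_zero, one_mul, one_apply_eq_self, real_inner_self_eq_norm_sq]
    gcongr
  · simp only [oneSub, neg_mul, neg_le_neg_iff]
    exact mul_le_mul_of_nonneg_left (hfg n) (hb n)

lemma inner_powSum_oneSub_nonneg {P : V →L[ℝ] V} (hP : ‖P‖ ≤ 1) (hb : ∀ n, 0 ≤ b n)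
    (hb1 : ∀ n, ∑ i ∈ Finset.range n, b i ≤ 1) (f : V) :
    0 ≤ ⟪f, powSum P (oneSub b) f⟫ := by
  have hs := summable_abs_oneSub hb hb1
  have h1 := hs.of_abs.hasSum.mul_right (‖f‖ ^ 2)
  refine (mul_nonneg (tsum_oneSub_nonneg hb hb1) (sq_nonneg _)).trans
    (hasSum_le (fun n => ?_) h1 (hasSum_inner_powSum hP hs f f))
  rcases n with _ | n
  · simp [oneSub]
  · simp only [oneSub, neg_mul, neg_le_neg_iff]
    refine mul_le_mul_of_nonneg_left ?_ (hb n)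
    calc ⟪f, (P ^ (n + 1)) f⟫ ≤ ‖f‖ * ‖(P ^ (n + 1)) f‖ := real_inner_le_norm _ _
      _ ≤ ‖f‖ * (1 * ‖f‖) := by
          gcongr; exact (P ^ (n + 1)).le_of_opNorm_le (norm_pow_le_one hP _) f
      _ = ‖f‖ ^ 2 := by ring

end OneSub

lemma inner_planeL2 (f g : PlaneL2) : ⟪f, g⟫ = ∫ x, f x * g x := by
  rw [L2.inner_def]; simp [mul_comm]

lemma integrable_mul_planeL2 (f g : PlaneL2) : Integrable fun x => f x * g x :=
  (Lp.memLp f).integrable_mul (Lp.memLp g)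

/-- Every competitor for `E` yields a competitor for `F` with a larger heat content. -/
def HeatDom (E F : Set E2) : Prop :=
  ∀ f : PlaneL2, (∀ᵐ x, x ∈ E → 1 ≤ f x) → ∃ g : PlaneL2, (∀ᵐ x, x ∈ F → 1 ≤ g x) ∧
    ‖g‖ ≤ ‖f‖ ∧ ∀ t, 0 < t → ⟪f, heatCLM t f⟫ ≤ ⟪g, heatCLM t g⟫

lemma HeatDom.trans {E F G : Set E2} (h : HeatDom E F) (h' : HeatDom F G) : HeatDom E G := by
  intro f hf
  obtain ⟨g, hg, hg1, hg2⟩ := h f hf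
  obtain ⟨k, hk, hk1, hk2⟩ := h' g hg
  exact ⟨k, hk, hk1.trans hg1, fun t ht => (hg2 t ht).trans (hk2 t ht)⟩

lemma HeatDom.of_subset {E F : Set E2} (h : F ⊆ E) : HeatDom E F :=
  fun f hf => ⟨f, hf.mono fun _ hx hF => hx (h hF), le_rfl, fun _ _ => le_rfl⟩

/-- The densities of probability measures carried by `H`, described by duality. -/
def densityCone {H : Set E2} (hH : MeasurableSet H) (hHt : volume H ≠ ∞) : Set PlaneL2 :=
  {m | (∀ g : PlaneL2, (∀ᵐ x, x ∈ H → 0 ≤ g x) → 0 ≤ ⟪g, m⟫) ∧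
    ⟪indicatorConstLp 2 hH hHt (1 : ℝ), m⟫ = 1}

section densityCone

variable {H : Set E2} (hH : MeasurableSet H) (hHt : volume H ≠ ∞)

lemma isClosed_densityCone : IsClosed (densityCone hH hHt) := by
  have h : densityCone hH hHt =
      (⋂ (g : PlaneL2) (_ : ∀ᵐ x, x ∈ H → 0 ≤ g x), {m : PlaneL2 | 0 ≤ ⟪g, m⟫}) ∩
        {m : PlaneL2 | ⟪indicatorConstLp 2 hH hHt (1 : ℝ), m⟫ = 1} := by
    ext m; simp [densityCone]
  rw [h]
  refine IsClosed.inter ?_ ?_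
  · exact isClosed_iInter fun g => isClosed_iInter fun _ => isClosed_le (by fun_prop) (by fun_prop)
  · exact isClosed_eq (by fun_prop) (by fun_prop)

lemma convex_densityCone : Convex ℝ (densityCone hH hHt) := by
  intro x hx y hy a b ha hb hab
  refine ⟨fun g hg => ?_, ?_⟩
  · rw [inner_add_right, real_inner_smul_right, real_inner_smul_right]
    have := hx.1 g hg
    have := hy.1 g hg
    positivity
  · rw [inner_add_right, real_inner_smul_right, real_inner_smul_right, hx.2, hy.2]; linarith

lemma smul_indicator_mem_densityCone {S : Set E2} (hS : MeasurableSet S) (hSt : volume S ≠ ∞)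
    (hSH : S ⊆ H) (hS0 : volume S ≠ 0) :
    (volume.real S)⁻¹ • indicatorConstLp 2 hS hSt (1 : ℝ) ∈ densityCone hH hHt := by
  refine ⟨fun g hg => ?_, ?_⟩
  · rw [real_inner_smul_right, real_inner_comm, L2.inner_indicatorConstLp_one]
    refine mul_nonneg (by positivity) (setIntegral_nonneg_of_ae_restrict ?_)
    rw [EventuallyLE, ae_restrict_iff' hS]
    filter_upwards [hg] with x hx hxS using hx (hSH hxS)
  · rw [real_inner_smul_right, L2.real_inner_indicatorConstLp_one_indicatorConstLp_one,
      inter_eq_self_of_subset_right hSH, inv_mul_cancel₀]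
    exact (measureReal_ne_zero_iff hSt).2 hS0

lemma nonneg_of_mem_densityCone {m : PlaneL2} (hm : m ∈ densityCone hH hHt) :
    (∀ᵐ x, 0 ≤ m x) ∧ (∀ᵐ x, x ∉ H → m x = 0) ∧ ∫ x, m x = 1 := by
  classical
  have hmeas : MemLp (H.piecewise (fun x => max (-m x) 0) (fun x => -m x)) 2 volume := by
    refine MemLp.of_le (Lp.memLp m) ?_ (Eventually.of_forall fun x => ?_)
    · refine StronglyMeasurable.aestronglyMeasurable ?_
      have := Lp.stronglyMeasurable m
      exact StronglyMeasurable.piecewise hH (this.neg.sup stronglyMeasurable_const) this.neg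
    · by_cases hx : x ∈ H
      · simp only [hx, piecewise_eq_of_mem, Real.norm_eq_abs]
        rw [abs_of_nonneg (le_max_right _ _)]
        exact max_le (neg_le_abs _) (abs_nonneg _)
      · simp [hx]
  set g : PlaneL2 := hmeas.toLp _ with hg
  have hgae := hmeas.coeFn_toLp
  have hgm : ⟪g, m⟫ = -‖g‖ ^ 2 := by
    rw [← real_inner_self_eq_norm_sq, inner_planeL2, inner_planeL2, ← integral_neg]
    refine integral_congr_ae ?_
    filter_upwards [hgae] with x hx
    rw [hg, hx]
    by_cases hxH : x ∈ H
    · simp only [hxH, piecewise_eq_of_mem]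
      rcases le_total (m x) 0 with h | h
      · rw [max_eq_left (by linarith)]; ring
      · rw [max_eq_right (by linarith)]; ring
    · simp [hxH]
  have hg0 : g = 0 := by
    have h1 : 0 ≤ ⟪g, m⟫ := by
      refine hm.1 g ?_
      filter_upwards [hgae] with x hx hxH
      rw [hg, hx]; simp [hxH]
    rw [hgm] at h1
    have : ‖g‖ ^ 2 = 0 := le_antisymm (by linarith) (sq_nonneg _)
    simpa using this
  have hae : ∀ᵐ x, H.piecewise (fun x => max (-m x) 0) (fun x => -m x) x = 0 := by
    have h2 : ⇑g =ᵐ[volume] 0 := by rw [hg0]; exact Lp.coeFn_zero _ _ _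
    filter_upwards [hgae, h2] with x hx hx2
    rw [← hx, ← hg, hx2]; rfl
  have hoff : ∀ᵐ x, x ∉ H → m x = 0 := by
    filter_upwards [hae] with x hx hxH
    simpa [hxH] using hx
  refine ⟨?_, hoff, ?_⟩
  · filter_upwards [hae, hoff] with x hx hx2
    by_cases hxH : x ∈ H
    · simp only [hxH, piecewise_eq_of_mem] at hx
      linarith [le_max_left (-m x) 0]
    · rw [hx2 hxH]
  · rw [← hm.2, L2.inner_indicatorConstLp_one, setIntegral_eq_integral_of_ae_compl_eq_zero hoff]

end densityCone

/-- Duality between capacitary potentials and equilibrium measures for the Green operator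
`∑ uₙ Pⁿ` of a heat step `P`. -/
lemma HeatDom.exists_energy_le {τ : ℝ} (hτ : 0 < τ) {u : ℕ → ℝ} (h0 : u 0 = 1) (hpos : ∀ n, 0 < u n)
    (hanti : Antitone u) (hlog : ∀ n, u (n + 1) ^ 2 ≤ u n * u (n + 2)) (hsum : Summable u)
    {H F : Set E2} (hH : MeasurableSet H) (hH0 : volume H ≠ 0) (hHt : volume H ≠ ∞)
    (hdom : HeatDom H F) {m : PlaneL2} (hm0 : ∀ᵐ x, 0 ≤ m x) (hmF : ∀ᵐ x, x ∉ F → m x = 0)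
    (hm1 : ∫ x, m x = 1) :
    ∃ ν : PlaneL2, (∀ᵐ x, 0 ≤ ν x) ∧ (∀ᵐ x, x ∉ H → ν x = 0) ∧ ∫ x, ν x = 1 ∧
      ∃ a b : ℝ, HasSum (fun n : ℕ => u n * ⟪ν, heatCLM (n * τ) ν⟫) a ∧
        HasSum (fun n : ℕ => u n * ⟪m, heatCLM (n * τ) m⟫) b ∧ a ≤ b := by
  obtain ⟨b, hb, hb1, hrec⟩ := exists_reciprocal_coeff h0 hpos hanti hlog
  have hu : Summable fun n => |u n| := hsum.abs
  set P := heatCLM τ with hPdef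
  have hP : ‖P‖ ≤ 1 := norm_heatCLM_le τ
  have hPs : ∀ x y, ⟪x, P y⟫ = ⟪P x, y⟫ := inner_heatCLM_comm hτ
  have hbs := summable_abs_oneSub hb hb1
  set G := powSum P u with hG
  set A := powSum P (oneSub b) with hA
  have hAG : A * G = 1 := powSum_mul_powSum hP h0 hu hbs hrec
  have hAG' : ∀ x, A (G x) = x := fun x => by rw [← mul_apply_eq_comp, hAG]; rfl
  have hPn : ∀ (n : ℕ) x, 0 ≤ ⟪x, (P ^ n) x⟫ := by
    intro n x
    rcases n.eq_zero_or_pos with rfl | hn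
    · simp
    · rw [hPdef, heatCLM_pow hτ]
      exact inner_heatCLM_self_nonneg (by positivity) x
  have hc : ∀ x, ‖x‖ ^ 2 ≤ ⟪x, G x⟫ := by
    intro x
    have := le_hasSum (hasSum_inner_powSum hP hu x x) 0
      fun n _ => mul_nonneg (hpos n).le (hPn n x)
    simpa [h0] using this
  obtain ⟨ν, hνK, hν⟩ := exists_minimizer_of_coercive (inner_powSum_comm hP hPs hu) hc
    ⟨_, smul_indicator_mem_densityCone hH hHt hH hHt subset_rfl hH0⟩
    (isClosed_densityCone hH hHt) (convex_densityCone hH hHt)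
  rw [← hG] at hν
  set W := ⟪ν, G ν⟫ with hW
  set f := G ν with hf
  have hWpos : 0 < W := by
    refine lt_of_lt_of_le ?_ (hc ν)
    have : ν ≠ 0 := by
      rintro rfl
      have := hνK.2
      simp at this
    positivity
  have hfW : ∀ᵐ x, x ∈ H → W ≤ f x := by
    set S : Set E2 := H ∩ {x | f x < W} with hSdef
    have hSm : MeasurableSet S :=
      hH.inter (measurableSet_lt (Lp.stronglyMeasurable f).measurable measurable_const)
    have hSt : volume S ≠ ∞ := measure_ne_top_of_subset inter_subset_left hHt
    have hS0 : volume S = 0 := by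
      by_contra hS0
      have h1 := hν _ (smul_indicator_mem_densityCone hH hHt hSm hSt inter_subset_left hS0)
      rw [real_inner_smul_right, real_inner_comm, L2.inner_indicatorConstLp_one] at h1
      have hinteg : IntegrableOn f S :=
        integrableOn_Lp_of_measure_ne_top f (by norm_num) hSt
      have hintc : IntegrableOn (fun _ => W) S := integrableOn_const hSt
      have h2 : 0 < ∫ x in S, ((fun _ : E2 => W) - (f : E2 → ℝ)) x := by
        rw [setIntegral_pos_iff_support_of_nonneg_ae ?_ (hintc.sub hinteg)]
        · refine (pos_iff_ne_zero.2 hS0).trans_le (measure_mono fun x hx => ⟨?_, hx⟩)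
          have : f x < W := hx.2
          simp only [Function.mem_support, Pi.sub_apply]
          linarith
        · rw [EventuallyLE, ae_restrict_iff' hSm]
          refine Eventually.of_forall fun x hx => ?_
          have : f x < W := hx.2
          simp only [Pi.zero_apply, Pi.sub_apply]
          linarith
      rw [integral_sub' hintc hinteg, setIntegral_const, smul_eq_mul] at h2
      have hr : 0 < volume.real S := by
        rw [Measure.real, ENNReal.toReal_pos_iff]
        exact ⟨pos_iff_ne_zero.2 hS0, hSt.lt_top⟩
      rw [inv_mul_eq_div, le_div_iff₀ hr] at h1
      linarith
    rw [← compl_mem_ae_iff] at hS0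
    filter_upwards [hS0] with x hx hxH
    by_contra! h
    exact hx ⟨hxH, h⟩
  have hadm : ∀ᵐ x, x ∈ H → 1 ≤ (W⁻¹ • f : PlaneL2) x := by
    filter_upwards [hfW, Lp.coeFn_smul W⁻¹ f] with x hx hx2 hxH
    rw [hx2, Pi.smul_apply, smul_eq_mul, inv_mul_eq_div, le_div_iff₀ hWpos, one_mul]
    exact hx hxH
  obtain ⟨g, hg, hg1, hg2⟩ := hdom _ hadm
  have hDg : ⟪g, A g⟫ ≤ W⁻¹ := by
    refine (inner_powSum_oneSub_mono hP hb hb1 hg1 fun n => ?_).trans ?_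
    · rw [hPdef, heatCLM_pow hτ]
      exact hg2 _ (by positivity)
    · rw [← hA, map_smul, hf, hAG', real_inner_smul_left, real_inner_smul_right,
        ← inner_powSum_comm hP hPs hu, ← hG, ← hf, ← hW]
      field_simp
      exact le_rfl
  have hgm : 1 ≤ ⟪g, m⟫ := by
    have hmi : Integrable m := by
      by_contra h
      rw [integral_undef h] at hm1
      norm_num at hm1
    rw [inner_planeL2, ← hm1]
    refine integral_mono_ae hmi (integrable_mul_planeL2 g m) ?_
    filter_upwards [hg, hm0, hmF] with x h1 h2 h3
    by_cases hx : x ∈ F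
    · simpa using mul_le_mul_of_nonneg_right (h1 hx) h2
    · simp [h3 hx]
  have hcs := inner_sq_le_of_psd (inner_powSum_comm hP hPs hbs)
    (inner_powSum_oneSub_nonneg hP hb hb1) g (G m)
  rw [← hA, hAG', real_inner_comm m (G m)] at hcs
  have hWm : W ≤ ⟪m, G m⟫ := by
    have hm2 : 0 ≤ ⟪m, G m⟫ := (sq_nonneg _).trans (hc m)
    have h1 : 1 ≤ W⁻¹ * ⟪m, G m⟫ := by
      have := mul_le_mul_of_nonneg_right hDg hm2
      nlinarith
    rwa [inv_mul_eq_div, le_div_iff₀ hWpos, one_mul] at h1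
  obtain ⟨n1, n2, n3⟩ := nonneg_of_mem_densityCone hH hHt hνK
  refine ⟨ν, n1, n2, n3, W, ⟪m, G m⟫, ?_, ?_, hWm⟩
  · simpa only [hPdef, heatCLM_pow hτ] using hasSum_inner_powSum hP hu ν ν
  · simpa only [hPdef, heatCLM_pow hτ] using hasSum_inner_powSum hP hu m m

/-- The constant `c` in `∫₀^∞ t^(α/2-1) gaussKernel t x dt = c |x|^(α-2)`. -/
def rieszConst (α : ℝ) : ℝ := Real.Gamma (1 - α / 2) / π

lemma rieszConst_pos {α : ℝ} (hα : α ∈ Ioo (0 : ℝ) 2) : 0 < rieszConst α :=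
  div_pos (Real.Gamma_pos_of_pos (by linarith [hα.2])) pi_pos

lemma integral_rpow_mul_gaussKernel {α : ℝ} (hα : α ∈ Ioo (0 : ℝ) 2) {x : E2} (hx : x ≠ 0) :
    ∫ t in Ioi (0 : ℝ), t ^ (α / 2 - 1) * gaussKernel t x = rieszConst α * ‖x‖ ^ (α - 2) := by
  have hx' : 0 < ‖x‖ := norm_pos_iff.2 hx
  have h1 : ∫ t in Ioi (0 : ℝ), t ^ (α / 2 - 1) * gaussKernel t x =
      ∫ v in Ioi (0 : ℝ), π⁻¹ * (v ^ ((1 - α / 2) - 1) * Real.exp (-(‖x‖ ^ 2 * v))) := by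
    rw [← integral_comp_rpow_Ioi (fun v => π⁻¹ * (v ^ ((1 - α / 2) - 1) *
      Real.exp (-(‖x‖ ^ 2 * v)))) (p := -1) (by norm_num)]
    refine setIntegral_congr_fun measurableSet_Ioi fun t ht => ?_
    have ht : 0 < t := ht
    simp only [gaussKernel, abs_neg, abs_one, one_mul, smul_eq_mul]
    rw [Real.rpow_neg_one, Real.inv_rpow ht.le, ← Real.rpow_neg ht.le, mul_inv, ← div_eq_mul_inv]
    have e1 : t ^ (α / 2 - 1) * t⁻¹ = t ^ (-1 - 1 : ℝ) * t ^ (-(1 - α / 2 - 1)) := by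
      rw [← Real.rpow_neg_one t, ← Real.rpow_add ht, ← Real.rpow_add ht]
      congr 1; ring
    calc t ^ (α / 2 - 1) * (π⁻¹ / t * Real.exp (-(‖x‖ ^ 2 / t)))
        = (t ^ (α / 2 - 1) * t⁻¹) * (π⁻¹ * Real.exp (-(‖x‖ ^ 2 / t))) := by ring
      _ = _ := by rw [e1, div_eq_mul_inv]; ring_nf
  rw [h1, integral_const_mul, Real.integral_rpow_mul_exp_neg_mul_Ioi (by linarith [hα.2])
    (by positivity), rieszConst, one_div, Real.inv_rpow (by positivity),
    ← Real.rpow_neg (by positivity), ← Real.rpow_natCast, ← Real.rpow_mul hx'.le]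
  rw [show ((2 : ℕ) : ℝ) * -(1 - α / 2) = α - 2 by push_cast; ring]
  ring

lemma lintegral_rpow_mul_gaussKernel {α : ℝ} (hα : α ∈ Ioo (0 : ℝ) 2) (x y : E2) :
    ∫⁻ t in Ioi (0 : ℝ), ENNReal.ofReal (t ^ (α / 2 - 1)) * ENNReal.ofReal (gaussKernel t (x - y)) =
      ENNReal.ofReal (rieszConst α) * edist x y ^ (α - 2) := by
  have hC := rieszConst_pos hα
  have h0 : ∫⁻ t in Ioi (0 : ℝ), ENNReal.ofReal (t ^ (α / 2 - 1)) *
      ENNReal.ofReal (gaussKernel t (x - y)) =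
      ∫⁻ t in Ioi (0 : ℝ), ENNReal.ofReal (t ^ (α / 2 - 1) * gaussKernel t (x - y)) := by
    refine setLIntegral_congr_fun measurableSet_Ioi fun t ht => ?_
    exact (ENNReal.ofReal_mul (Real.rpow_nonneg (le_of_lt ht) _)).symm
  have hnn : 0 ≤ᵐ[volume.restrict (Ioi (0 : ℝ))]
      fun t => t ^ (α / 2 - 1) * gaussKernel t (x - y) := by
    rw [EventuallyLE, ae_restrict_iff' measurableSet_Ioi]
    exact Eventually.of_forall fun t ht =>
      mul_nonneg (Real.rpow_nonneg (le_of_lt ht) _) (gaussKernel_nonneg ht _)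
  rw [h0]
  rcases eq_or_ne x y with rfl | hxy
  · rw [edist_self, ENNReal.zero_rpow_of_neg (by linarith [hα.2]), ENNReal.mul_top (by simpa using hC)]
    by_contra hne
    have hinteg : IntegrableOn (fun t => t ^ (α / 2 - 1) * gaussKernel t (x - x)) (Ioi 0) := by
      refine ⟨?_, ?_⟩
      · refine Measurable.aestronglyMeasurable ?_
        exact (by fun_prop : Measurable fun t : ℝ => t ^ (α / 2 - 1)).mul
          (measurable_gaussKernel_uncurry.comp (by fun_prop : Measurable fun t : ℝ => (t, x - x)))
      · rw [hasFiniteIntegral_iff_ofReal hnn]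
        exact lt_top_iff_ne_top.2 hne
    refine not_integrableOn_Ioi_rpow (α / 2 - 2) 
      (IntegrableOn.congr_fun (Integrable.const_mul hinteg π) ?_ measurableSet_Ioi)
    intro t ht
    have ht : 0 < t := ht
    simp only [gaussKernel, sub_self, norm_zero]
    rw [show α / 2 - 2 = (α / 2 - 1) + (-1) by ring, Real.rpow_add ht, Real.rpow_neg_one]
    have := pi_ne_zero
    simp
    field_simp
  · have hxy' : x - y ≠ 0 := sub_ne_zero.2 hxy
    have hpos : 0 < ‖x - y‖ := norm_pos_iff.2 hxy'
    have hv := integral_rpow_mul_gaussKernel hα hxy'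
    have hinteg := Integrable.of_integral_ne_zero (by
      rw [hv]; positivity :
        ∫ t in Ioi (0 : ℝ), t ^ (α / 2 - 1) * gaussKernel t (x - y) ≠ 0)
    rw [← ofReal_integral_eq_lintegral_ofReal hinteg hnn, hv, ENNReal.ofReal_mul hC.le,
      edist_dist, dist_eq_norm, ENNReal.ofReal_rpow_of_pos hpos]

/-- The heat energy of a measure. -/
def heatEnergy (μ : Measure E2) (t : ℝ) : ℝ≥0∞ :=
  ∫⁻ x, ∫⁻ y, ENNReal.ofReal (gaussKernel t (x - y)) ∂μ ∂μ

/-- The Riesz energy of a measure. -/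
def rieszEnergy (α : ℝ) (μ : Measure E2) : ℝ≥0∞ := ∫⁻ x, ∫⁻ y, edist x y ^ (α - 2) ∂μ ∂μ

lemma lintegral_heatEnergy {α : ℝ} (hα : α ∈ Ioo (0 : ℝ) 2) (μ : Measure E2) [SFinite μ] :
    ∫⁻ t in Ioi (0 : ℝ), ENNReal.ofReal (t ^ (α / 2 - 1)) * heatEnergy μ t =
      ENNReal.ofReal (rieszConst α) * rieszEnergy α μ := by
  have hm : Measurable fun p : (ℝ × E2) × E2 => ENNReal.ofReal (p.1.1 ^ (α / 2 - 1)) *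
      ENNReal.ofReal (gaussKernel p.1.1 (p.1.2 - p.2)) := by
    refine Measurable.mul (by fun_prop) (Measurable.ennreal_ofReal ?_)
    exact measurable_gaussKernel_uncurry.comp
      (by fun_prop : Measurable fun p : (ℝ × E2) × E2 => (p.1.1, p.1.2 - p.2))
  have hk : ∀ t, Measurable fun p : E2 × E2 => ENNReal.ofReal (gaussKernel t (p.1 - p.2)) := by
    intro t
    have := continuous_gaussKernel t
    fun_prop
  have hk' : ∀ t x, Measurable fun y : E2 => ENNReal.ofReal (gaussKernel t (x - y)) := by
    intro t x
    have := continuous_gaussKernel t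
    fun_prop
  calc ∫⁻ t in Ioi (0 : ℝ), ENNReal.ofReal (t ^ (α / 2 - 1)) * heatEnergy μ t
      = ∫⁻ t in Ioi (0 : ℝ), ∫⁻ x, ∫⁻ y, ENNReal.ofReal (t ^ (α / 2 - 1)) *
          ENNReal.ofReal (gaussKernel t (x - y)) ∂μ ∂μ := by
        refine lintegral_congr fun t => ?_
        rw [heatEnergy, ← lintegral_const_mul _ (Measurable.lintegral_prod_right' (hk t))]
        refine lintegral_congr fun x => ?_
        rw [lintegral_const_mul _ (hk' t x)]
    _ = ∫⁻ x, ∫⁻ t in Ioi (0 : ℝ), ∫⁻ y, ENNReal.ofReal (t ^ (α / 2 - 1)) *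
          ENNReal.ofReal (gaussKernel t (x - y)) ∂μ ∂volume ∂μ :=
        lintegral_lintegral_swap (Measurable.lintegral_prod_right' hm).aemeasurable
    _ = ∫⁻ x, ∫⁻ y, (∫⁻ t in Ioi (0 : ℝ), ENNReal.ofReal (t ^ (α / 2 - 1)) *
          ENNReal.ofReal (gaussKernel t (x - y))) ∂μ ∂μ := by
        refine lintegral_congr fun x => ?_
        refine lintegral_lintegral_swap (Measurable.aemeasurable ?_)
        exact hm.comp (by fun_prop : Measurable fun p : ℝ × E2 => ((p.1, x), p.2))
    _ = ∫⁻ x, ∫⁻ y, ENNReal.ofReal (rieszConst α) * edist x y ^ (α - 2) ∂μ ∂μ := by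
        simp_rw [lintegral_rpow_mul_gaussKernel hα]
    _ = _ := by
        have hd : Measurable fun p : E2 × E2 => edist p.1 p.2 ^ (α - 2) := by fun_prop
        rw [rieszEnergy, ← lintegral_const_mul _ (Measurable.lintegral_prod_right' hd)]
        refine lintegral_congr fun x => ?_
        rw [lintegral_const_mul _ (by fun_prop)]

/-- The weight `e^(-ε t) t^(α/2-1)`. -/
def dampedPow (α ε t : ℝ) : ℝ := Real.exp (-(ε * t)) * t ^ (α / 2 - 1)

/-- The integral of `dampedPow` over the cell `(n τ, (n + 1) τ]`. -/
def cellWeight (α ε τ : ℝ) (n : ℕ) : ℝ := ∫ t in Ioc 0 τ, dampedPow α ε (t + n * τ)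

lemma iUnion_Ioc_mul {τ : ℝ} (hτ : 0 < τ) :
    ⋃ n : ℕ, Ioc (n * τ) ((n + 1) * τ) = Ioi (0 : ℝ) := by
  ext t
  simp only [mem_iUnion, mem_Ioc, mem_Ioi]
  constructor
  · rintro ⟨n, h, _⟩
    exact lt_of_le_of_lt (by positivity) h
  · intro ht
    have hc : 0 < t / τ := div_pos ht hτ
    obtain ⟨n, hn⟩ := Nat.exists_eq_succ_of_ne_zero (Nat.ceil_pos.2 hc).ne'
    refine ⟨n, ?_, ?_⟩
    · rw [← lt_div_iff₀ hτ]
      exact Nat.lt_ceil.1 (by omega)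
    · rw [← div_le_iff₀ hτ]
      have := Nat.le_ceil (t / τ)
      rw [hn] at this
      simpa using this

lemma lintegral_Ioi_eq_tsum_cell {τ : ℝ} (hτ : 0 < τ) (f : ℝ → ℝ≥0∞) :
    ∫⁻ t in Ioi (0 : ℝ), f t = ∑' n : ℕ, ∫⁻ t in Ioc (n * τ) ((n + 1) * τ), f t := by
  rw [← iUnion_Ioc_mul hτ, lintegral_iUnion (fun _ => measurableSet_Ioc)]
  have hmono : Monotone fun n : ℕ => (n : ℝ) * τ := fun a b h => by
    have : (a : ℝ) ≤ b := by exact_mod_cast h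
    exact mul_le_mul_of_nonneg_right this hτ.le
  have := hmono.pairwise_disjoint_on_Ioc_succ
  simpa using this

section Weights

variable {α ε τ : ℝ}

lemma dampedPow_pos {t : ℝ} (ht : 0 < t) : 0 < dampedPow α ε t :=
  mul_pos (Real.exp_pos _) (Real.rpow_pos_of_pos ht _)

lemma measurable_dampedPow : Measurable (dampedPow α ε) := by unfold dampedPow; fun_prop

lemma dampedPow_mid (hα : α ∈ Ioo (0 : ℝ) 2) {a d : ℝ} (ha : 0 < a) (hd : 0 ≤ d) :
    dampedPow α ε (a + d) ^ 2 ≤ dampedPow α ε a * dampedPow α ε (a + 2 * d) := by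
  unfold dampedPow
  have hb : 0 < a + d := by linarith
  have hc : 0 < a + 2 * d := by linarith
  rw [mul_pow, mul_mul_mul_comm, ← Real.exp_add, pow_two (Real.exp _), ← Real.exp_add,
    ← Real.mul_rpow ha.le hc.le, pow_two, ← Real.mul_rpow hb.le hb.le]
  rw [show -(ε * (a + d)) + -(ε * (a + d)) = -(ε * a) + -(ε * (a + 2 * d)) by ring]
  refine mul_le_mul_of_nonneg_left ?_ (Real.exp_pos _).le
  exact Real.rpow_le_rpow_of_nonpos (by positivity) (by nlinarith) (by linarith [hα.2])

lemma dampedPow_antitone (hα : α ∈ Ioo (0 : ℝ) 2) (hε : 0 < ε)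
    {s t : ℝ} (hs : 0 < s) (hst : s ≤ t) :
    dampedPow α ε t ≤ dampedPow α ε s := by
  unfold dampedPow
  have h1 : t ^ (α / 2 - 1) ≤ s ^ (α / 2 - 1) :=
    Real.rpow_le_rpow_of_nonpos hs hst (by linarith [hα.2])
  gcongr
  exact Real.rpow_nonneg (hs.le.trans hst) _

lemma integrableOn_dampedPow (hα : α ∈ Ioo (0 : ℝ) 2) (hε : 0 < ε) :
    IntegrableOn (dampedPow α ε) (Ioi 0) := by
  refine Integrable.of_integral_ne_zero ?_
  have h := Real.integral_rpow_mul_exp_neg_mul_Ioi (a := α / 2) (r := ε) (by linarith [hα.1]) hε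
  have h2 := Real.Gamma_pos_of_pos (s := α / 2) (by linarith [hα.1])
  simp only [dampedPow]
  simp_rw [mul_comm (Real.exp _)]
  rw [h]
  positivity

lemma integrableOn_dampedPow_cell (hα : α ∈ Ioo (0 : ℝ) 2) (hε : 0 < ε) (hτ : 0 < τ) (n : ℕ) :
    IntegrableOn (fun t => dampedPow α ε (t + n * τ)) (Ioc 0 τ) := by
  refine Integrable.mono' ((integrableOn_dampedPow hα hε).mono_set Ioc_subset_Ioi_self)
    (measurable_dampedPow.comp (measurable_add_const _)).aestronglyMeasurable ?_
  rw [ae_restrict_iff' measurableSet_Ioc]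
  refine Eventually.of_forall fun t ht => ?_
  have h1 : t ≤ t + n * τ := by
    have : 0 ≤ (n : ℝ) * τ := by positivity
    linarith
  rw [Real.norm_of_nonneg (dampedPow_pos (ht.1.trans_le h1)).le]
  exact dampedPow_antitone hα hε ht.1 h1

lemma cellWeight_pos (hα : α ∈ Ioo (0 : ℝ) 2) (hε : 0 < ε) (hτ : 0 < τ)
    (n : ℕ) : 0 < cellWeight α ε τ n := by
  have hp : ∀ t ∈ Ioc 0 τ, 0 < dampedPow α ε (t + n * τ) := fun t ht => by
    have : 0 < t := ht.1
    exact dampedPow_pos (by positivity)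
  unfold cellWeight
  rw [setIntegral_pos_iff_support_of_nonneg_ae ?_ (integrableOn_dampedPow_cell hα hε hτ n)]
  · have : Ioc 0 τ ⊆ (Function.support fun t => dampedPow α ε (t + n * τ)) ∩ Ioc 0 τ :=
      fun t ht => ⟨(hp t ht).ne', ht⟩
    refine lt_of_lt_of_le ?_ (measure_mono this)
    simpa using hτ
  · rw [EventuallyLE, ae_restrict_iff' measurableSet_Ioc]
    exact Eventually.of_forall fun t ht => (hp t ht).le

lemma cellWeight_antitone (hα : α ∈ Ioo (0 : ℝ) 2) (hε : 0 < ε) (hτ : 0 < τ) :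
    Antitone (cellWeight α ε τ) := by
  refine antitone_nat_of_succ_le fun n => ?_
  refine setIntegral_mono_on (integrableOn_dampedPow_cell hα hε hτ _)
    (integrableOn_dampedPow_cell hα hε hτ _) measurableSet_Ioc fun t ht => ?_
  have : 0 < t := ht.1
  refine dampedPow_antitone hα hε (by positivity) ?_
  push_cast
  linarith

lemma cellWeight_logConvex (hα : α ∈ Ioo (0 : ℝ) 2) (hε : 0 < ε) (hτ : 0 < τ) (n : ℕ) :
    cellWeight α ε τ (n + 1) ^ 2 ≤ cellWeight α ε τ n * cellWeight α ε τ (n + 2) := by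
  have hw := cellWeight_pos hα hε hτ
  have key : ∀ l : ℝ, 0 < l → 2 * cellWeight α ε τ (n + 1) ≤
      l * cellWeight α ε τ n + l⁻¹ * cellWeight α ε τ (n + 2) := by
    intro l hl
    unfold cellWeight
    have hi := integrableOn_dampedPow_cell hα hε hτ
    rw [← integral_const_mul, ← integral_const_mul, ← integral_const_mul,
      ← integral_add ((hi n).const_mul l) ((hi (n + 2)).const_mul l⁻¹)]
    refine setIntegral_mono_on ((hi (n + 1)).const_mul 2)
      (((hi n).const_mul l).add ((hi (n + 2)).const_mul l⁻¹)) measurableSet_Ioc fun t ht => ?_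
    have ht0 : 0 < t := ht.1
    have hmid := dampedPow_mid (ε := ε) hα (a := t + n * τ) (d := τ) (by positivity) hτ.le
    have e1 : t + ((n + 1 : ℕ) : ℝ) * τ = t + n * τ + τ := by push_cast; ring
    have e2 : t + ((n + 2 : ℕ) : ℝ) * τ = t + n * τ + 2 * τ := by push_cast; ring
    simp only [e1, e2]
    have p0 : 0 < dampedPow α ε (t + n * τ) := dampedPow_pos (by positivity)
    have p2 : 0 < dampedPow α ε (t + n * τ + 2 * τ) := dampedPow_pos (by positivity)
    refine abs_le_of_sq_le_sq' ?_ (by positivity) |>.2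
    have h3 : (l * dampedPow α ε (t + n * τ)) * (l⁻¹ * dampedPow α ε (t + n * τ + 2 * τ)) =
        dampedPow α ε (t + n * τ) * dampedPow α ε (t + n * τ + 2 * τ) := by
      field_simp
    nlinarith [sq_nonneg (l * dampedPow α ε (t + n * τ) -
      l⁻¹ * dampedPow α ε (t + n * τ + 2 * τ))]
  have h := key (cellWeight α ε τ (n + 1) / cellWeight α ε τ n) (div_pos (hw _) (hw _))
  rw [div_mul_cancel₀ _ (hw n).ne', inv_div] at h
  have h2 : cellWeight α ε τ (n + 1) ≤
      cellWeight α ε τ n / cellWeight α ε τ (n + 1) * cellWeight α ε τ (n + 2) := by linarith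
  have h3 := mul_le_mul_of_nonneg_right h2 (hw (n + 1)).le
  calc _ = cellWeight α ε τ (n + 1) * cellWeight α ε τ (n + 1) := by ring
    _ ≤ _ := h3
    _ = _ := by have := (hw (n + 1)).ne'; field_simp

lemma lintegral_cell (hα : α ∈ Ioo (0 : ℝ) 2) (hε : 0 < ε) (hτ : 0 < τ) (n : ℕ) :
    ∫⁻ t in Ioc (n * τ) ((n + 1) * τ), ENNReal.ofReal (dampedPow α ε t) =
      ENNReal.ofReal (cellWeight α ε τ n) := by
  unfold cellWeight
  rw [ofReal_integral_eq_lintegral_ofReal (integrableOn_dampedPow_cell hα hε hτ n)]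
  · have h := (measurePreserving_add_right volume ((n : ℝ) * τ)).setLIntegral_comp_preimage_emb
      (measurableEmbedding_addRight _) (fun t => ENNReal.ofReal (dampedPow α ε t))
      (Ioc (n * τ) ((n + 1) * τ))
    rw [← h, preimage_add_const_Ioc, sub_self]
    congr 3
    ring
  · rw [EventuallyLE, ae_restrict_iff' measurableSet_Ioc]
    refine Eventually.of_forall fun t ht => ?_
    have : 0 < t := ht.1
    exact (dampedPow_pos (by positivity)).le

lemma summable_cellWeight (hα : α ∈ Ioo (0 : ℝ) 2) (hε : 0 < ε) (hτ : 0 < τ) :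
    Summable (cellWeight α ε τ) := by
  have h : ∑' n, ENNReal.ofReal (cellWeight α ε τ n) ≠ ∞ := by
    simp_rw [← lintegral_cell hα hε hτ]
    rw [← lintegral_Ioi_eq_tsum_cell hτ]
    exact (integrableOn_dampedPow hα hε).lintegral_lt_top.ne
  refine (ENNReal.summable_toReal h).congr fun n => ?_
  exact ENNReal.toReal_ofReal (cellWeight_pos hα hε hτ n).le

lemma cellWeight_zero_le (hα : α ∈ Ioo (0 : ℝ) 2) (hε : 0 < ε) (hτ : 0 < τ) :
    cellWeight α ε τ 0 ≤ τ ^ (α / 2) / (α / 2) := by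
  have h1 : -1 < α / 2 - 1 := by linarith [hα.1]
  calc cellWeight α ε τ 0 ≤ ∫ t in Ioc 0 τ, t ^ (α / 2 - 1) := by
        refine setIntegral_mono_on (integrableOn_dampedPow_cell hα hε hτ 0)
          (intervalIntegral.intervalIntegrable_rpow' h1).1 measurableSet_Ioc fun t ht => ?_
        have ht0 : 0 < t := ht.1
        simp only [Nat.cast_zero, zero_mul, add_zero, dampedPow]
        refine mul_le_of_le_one_left (by positivity) ?_
        rw [Real.exp_le_one_iff]
        have : 0 ≤ ε * t := by positivity
        linarith
    _ = τ ^ (α / 2) / (α / 2) := by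
        rw [← intervalIntegral.integral_of_le hτ.le, integral_rpow (Or.inl h1)]
        rw [sub_add_cancel, Real.zero_rpow (by linarith [hα.1]), sub_zero]

lemma lintegral_le_tsum_cellWeight (hα : α ∈ Ioo (0 : ℝ) 2) (hε : 0 < ε) (hτ : 0 < τ) {φ : ℝ → ℝ}
    (hφ : ∀ s t, 0 ≤ s → s ≤ t → φ t ≤ φ s) :
    ∫⁻ t in Ioi (0 : ℝ), ENNReal.ofReal (dampedPow α ε t) * ENNReal.ofReal (φ t) ≤
      ∑' n : ℕ, ENNReal.ofReal (cellWeight α ε τ n * φ (n * τ)) := by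
  rw [lintegral_Ioi_eq_tsum_cell hτ]
  refine ENNReal.tsum_le_tsum fun n => ?_
  rw [ENNReal.ofReal_mul (cellWeight_pos hα hε hτ n).le, ← lintegral_cell hα hε hτ,
    ← lintegral_mul_const _ measurable_dampedPow.ennreal_ofReal]
  refine setLIntegral_mono_ae' measurableSet_Ioc (Eventually.of_forall fun t ht => ?_)
  gcongr
  exact hφ _ _ (by positivity) ht.1.le

lemma tsum_cellWeight_le (hα : α ∈ Ioo (0 : ℝ) 2) (hε : 0 < ε) (hτ : 0 < τ)
    {φ : ℝ → ℝ} (hφ0 : ∀ t, 0 ≤ t → 0 ≤ φ t)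
    (hφ : ∀ s t, 0 ≤ s → s ≤ t → φ t ≤ φ s) :
    ∑' n : ℕ, ENNReal.ofReal (cellWeight α ε τ n * φ (n * τ)) ≤
      ENNReal.ofReal (cellWeight α ε τ 0 * φ 0) +
        ∫⁻ t in Ioi (0 : ℝ), ENNReal.ofReal (t ^ (α / 2 - 1)) * ENNReal.ofReal (φ t) := by
  rw [tsum_eq_zero_add' ENNReal.summable, lintegral_Ioi_eq_tsum_cell hτ]
  simp only [Nat.cast_zero, zero_mul]
  refine add_le_add_right (ENNReal.tsum_le_tsum fun n => ?_) _
  have hw := cellWeight_pos hα hε hτ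
  calc ENNReal.ofReal (cellWeight α ε τ (n + 1) * φ ((n + 1 : ℕ) * τ))
      ≤ ENNReal.ofReal (cellWeight α ε τ n * φ ((n + 1 : ℕ) * τ)) := by
        refine ENNReal.ofReal_le_ofReal (mul_le_mul_of_nonneg_right ?_ (hφ0 _ (by positivity)))
        exact cellWeight_antitone hα hε hτ n.le_succ
    _ = ∫⁻ t in Ioc (n * τ) ((n + 1) * τ), ENNReal.ofReal (dampedPow α ε t) *
          ENNReal.ofReal (φ ((n + 1 : ℕ) * τ)) := by
        rw [ENNReal.ofReal_mul (hw n).le, ← lintegral_cell hα hε hτ,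
          ← lintegral_mul_const _ measurable_dampedPow.ennreal_ofReal]
    _ ≤ _ := by
        refine setLIntegral_mono_ae' measurableSet_Ioc (Eventually.of_forall fun t ht => ?_)
        have ht0 : 0 < t := lt_of_le_of_lt (by positivity) ht.1
        gcongr
        · refine mul_le_of_le_one_left (by positivity) ?_
          rw [Real.exp_le_one_iff]
          have : 0 ≤ ε * t := by positivity
          linarith
        · refine hφ _ _ ht0.le ?_
          push_cast
          exact ht.2

end Weights

/-- The measure with density `m`. -/
def densityMeasure (m : PlaneL2) : Measure E2 := volume.withDensity fun x => ENNReal.ofReal (m x)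

lemma measurable_ofReal_planeL2 (m : PlaneL2) : Measurable fun x => ENNReal.ofReal (m x) :=
  (Lp.stronglyMeasurable m).measurable.ennreal_ofReal

lemma isProbabilityMeasure_densityMeasure {m : PlaneL2} (hm0 : ∀ᵐ x, 0 ≤ m x)
    (hm1 : ∫ x, m x = 1) : IsProbabilityMeasure (densityMeasure m) := by
  refine ⟨?_⟩
  rw [densityMeasure, withDensity_apply _ MeasurableSet.univ, Measure.restrict_univ,
    ← ofReal_integral_eq_lintegral_ofReal (Integrable.of_integral_ne_zero (by rw [hm1]; norm_num))
      hm0, hm1, ENNReal.ofReal_one]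

lemma densityMeasure_apply_eq_one {m : PlaneL2} (hm0 : ∀ᵐ x, 0 ≤ m x)
    (hm1 : ∫ x, m x = 1) {H : Set E2} (hH : MeasurableSet H) (hmH : ∀ᵐ x, x ∉ H → m x = 0) :
    densityMeasure m H = 1 := by
  have := isProbabilityMeasure_densityMeasure hm0 hm1
  rw [← prob_compl_eq_zero_iff hH, densityMeasure, withDensity_apply _ hH.compl,
    setLIntegral_eq_zero_iff hH.compl (measurable_ofReal_planeL2 m)]
  filter_upwards [hmH] with x hx hxH
  simp [hx hxH]

lemma heatEnergy_densityMeasure {m : PlaneL2} (hm0 : ∀ᵐ x, 0 ≤ m x) {t : ℝ} (ht : 0 < t) :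
    heatEnergy (densityMeasure m) t = ENNReal.ofReal ⟪m, heatCLM t m⟫ := by
  have hmm := measurable_ofReal_planeL2 m
  have hk : Measurable fun p : E2 × E2 => ENNReal.ofReal (gaussKernel t (p.1 - p.2)) := by
    have := continuous_gaussKernel t
    fun_prop
  have hk' : ∀ x, Measurable fun y : E2 => ENNReal.ofReal (gaussKernel t (x - y)) := by
    intro x
    have := continuous_gaussKernel t
    fun_prop
  have h1 : ∀ᵐ p : E2 × E2 ∂(volume.prod volume), 0 ≤ m p.1 :=
    Measure.quasiMeasurePreserving_fst.ae hm0
  have h2 : ∀ᵐ p : E2 × E2 ∂(volume.prod volume), 0 ≤ m p.2 :=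
    Measure.quasiMeasurePreserving_snd.ae hm0
  rw [inner_heatCLM ht, ofReal_integral_eq_lintegral_ofReal
    (integrable_gaussKernel_mul_mul ht (Lp.memLp m) (Lp.memLp m))]
  · have h3 : ∫⁻ p : E2 × E2, ENNReal.ofReal (gaussKernel t (p.1 - p.2) * (m p.1 * m p.2))
        ∂(volume.prod volume) = ∫⁻ p : E2 × E2, ENNReal.ofReal (m p.1) *
          (ENNReal.ofReal (m p.2) * ENNReal.ofReal (gaussKernel t (p.1 - p.2)))
        ∂(volume.prod volume) := by
      refine lintegral_congr_ae ?_
      filter_upwards [h1, h2] with p hp1 hp2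
      rw [← ENNReal.ofReal_mul hp2, ← ENNReal.ofReal_mul hp1]
      congr 1; ring
    rw [h3, lintegral_prod _ (by
      exact ((hmm.comp measurable_fst).mul ((hmm.comp measurable_snd).mul hk)).aemeasurable)]
    unfold heatEnergy densityMeasure
    rw [lintegral_withDensity_eq_lintegral_mul _ hmm (Measurable.lintegral_prod_right' hk)]
    refine lintegral_congr fun x => ?_
    rw [Pi.mul_apply, lintegral_withDensity_eq_lintegral_mul _ hmm (hk' x),
      ← lintegral_const_mul _ (hmm.mul (hk' x))]
    rfl
  · filter_upwards [h1, h2] with p hp1 hp2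
    exact mul_nonneg (gaussKernel_nonneg ht _) (mul_nonneg hp1 hp2)

lemma heatEnergy_le {μ : Measure E2} [IsProbabilityMeasure μ] {t : ℝ} (ht : 0 < t) :
    heatEnergy μ t ≤ ENNReal.ofReal (π * t)⁻¹ := by
  have h : ∀ x y : E2, ENNReal.ofReal (gaussKernel t (x - y)) ≤ ENNReal.ofReal (π * t)⁻¹ := by
    intro x y
    refine ENNReal.ofReal_le_ofReal (mul_le_of_le_one_right (by positivity) ?_)
    rw [Real.exp_le_one_iff]
    have : 0 ≤ ‖x - y‖ ^ 2 / t := by positivity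
    linarith
  calc heatEnergy μ t ≤ ∫⁻ _x, ∫⁻ _y, ENNReal.ofReal (π * t)⁻¹ ∂μ ∂μ :=
        lintegral_mono fun x => lintegral_mono fun y => h x y
    _ = _ := by simp

/-- The error made by damping the Riesz kernel at large times. -/
lemma lintegral_one_sub_exp_le {α ε : ℝ} (hα : α ∈ Ioo (0 : ℝ) 2) (hε : 0 < ε) :
    ∫⁻ t in Ioi (0 : ℝ), ENNReal.ofReal ((1 - Real.exp (-(ε * t))) * t ^ (α / 2 - 1)) *
      ENNReal.ofReal (π * t)⁻¹ ≤
        ENNReal.ofReal (ε ^ (1 - α / 2) * (1 / (α / 2) + 1 / (1 - α / 2))) := by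
  have ha : 0 < α / 2 := by linarith [hα.1]
  have ha' : 0 < 1 - α / 2 := by linarith [hα.2]
  have hT : 0 < ε⁻¹ := inv_pos.2 hε
  have hpi : (1 : ℝ) ≤ π := by linarith [pi_gt_three]
  have h1 : -1 < α / 2 - 1 := by linarith
  have hbound : ∀ t : ℝ, 0 < t → ∀ c : ℝ, 1 - Real.exp (-(ε * t)) ≤ c →
      ENNReal.ofReal ((1 - Real.exp (-(ε * t))) * t ^ (α / 2 - 1)) * ENNReal.ofReal (π * t)⁻¹ ≤
        ENNReal.ofReal (c * t ^ (α / 2 - 2)) := by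
    intro t ht c hc
    have he : 0 ≤ 1 - Real.exp (-(ε * t)) := by
      have : 0 ≤ ε * t := by positivity
      have : Real.exp (-(ε * t)) ≤ 1 := Real.exp_le_one_iff.2 (by linarith)
      linarith
    have hc0 := he.trans hc
    rw [← ENNReal.ofReal_mul (by positivity)]
    refine ENNReal.ofReal_le_ofReal ?_
    rw [show α / 2 - 2 = (α / 2 - 1) + (-1) by ring, Real.rpow_add ht, Real.rpow_neg_one,
      ← mul_assoc]
    gcongr
    nlinarith
  rw [← Ioc_union_Ioi_eq_Ioi hT.le, lintegral_union measurableSet_Ioi (Ioc_disjoint_Ioi le_rfl)]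
  have hA : ∫⁻ t in Ioc 0 ε⁻¹, ENNReal.ofReal ((1 - Real.exp (-(ε * t))) * t ^ (α / 2 - 1)) *
      ENNReal.ofReal (π * t)⁻¹ ≤ ENNReal.ofReal (ε * (ε⁻¹ ^ (α / 2) / (α / 2))) := by
    calc _ ≤ ∫⁻ t in Ioc 0 ε⁻¹, ENNReal.ofReal (ε * t ^ (α / 2 - 1)) := by
          refine setLIntegral_mono_ae' measurableSet_Ioc (Eventually.of_forall fun t ht => ?_)
          have ht0 : 0 < t := ht.1
          refine (hbound t ht0 (ε * t) (by linarith [Real.add_one_le_exp (-(ε * t))])).trans_eq ?_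
          rw [mul_assoc, show t * t ^ (α / 2 - 2) = t ^ (α / 2 - 1) by
            nth_rewrite 1 [← Real.rpow_one t]
            rw [← Real.rpow_add ht0]; congr 1; ring]
      _ = ENNReal.ofReal (∫ t in Ioc 0 ε⁻¹, ε * t ^ (α / 2 - 1)) := by
          rw [ofReal_integral_eq_lintegral_ofReal]
          · exact ((intervalIntegral.intervalIntegrable_rpow' h1).1).const_mul ε
          · rw [EventuallyLE, ae_restrict_iff' measurableSet_Ioc]
            refine Eventually.of_forall fun t ht => ?_
            have ht0 : 0 < t := ht.1
            simp only [Pi.zero_apply]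
            positivity
      _ = _ := by
          rw [integral_const_mul, ← intervalIntegral.integral_of_le hT.le, integral_rpow (Or.inl h1)]
          rw [sub_add_cancel, Real.zero_rpow ha.ne', sub_zero]
  have hB : ∫⁻ t in Ioi ε⁻¹, ENNReal.ofReal ((1 - Real.exp (-(ε * t))) * t ^ (α / 2 - 1)) *
      ENNReal.ofReal (π * t)⁻¹ ≤ ENNReal.ofReal (ε⁻¹ ^ (α / 2 - 1) / (1 - α / 2)) := by
    calc _ ≤ ∫⁻ t in Ioi ε⁻¹, ENNReal.ofReal (t ^ (α / 2 - 2)) := by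
          refine setLIntegral_mono_ae' measurableSet_Ioi (Eventually.of_forall fun t ht => ?_)
          have ht0 : 0 < t := hT.trans ht
          refine (hbound t ht0 1 (by linarith [Real.exp_pos (-(ε * t))])).trans_eq ?_
          rw [one_mul]
      _ = ENNReal.ofReal (∫ t in Ioi ε⁻¹, t ^ (α / 2 - 2)) := by
          rw [ofReal_integral_eq_lintegral_ofReal]
          · exact integrableOn_Ioi_rpow_of_lt (by linarith) hT
          · rw [EventuallyLE, ae_restrict_iff' measurableSet_Ioi]
            refine Eventually.of_forall fun t ht => ?_
            have ht0 : 0 < t := hT.trans ht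
            simp only [Pi.zero_apply]
            positivity
      _ = _ := by
          rw [integral_Ioi_rpow_of_lt (by linarith) hT]
          rw [show α / 2 - 2 + 1 = -(1 - α / 2) by ring, neg_div_neg_eq, neg_sub]
  refine (add_le_add hA hB).trans_eq ?_
  rw [← ENNReal.ofReal_add (by positivity) (by positivity)]
  congr 1
  have e1 : ε * ε⁻¹ ^ (α / 2) = ε ^ (1 - α / 2) := by
    rw [Real.inv_rpow hε.le, ← Real.rpow_neg hε.le]
    nth_rewrite 1 [← Real.rpow_one ε]
    rw [← Real.rpow_add hε]; rfl
  have e2 : ε⁻¹ ^ (α / 2 - 1) = ε ^ (1 - α / 2) := by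
    rw [Real.inv_rpow hε.le, ← Real.rpow_neg hε.le, neg_sub]
  rw [e2, ← mul_div_assoc, e1]; ring

lemma rieszW_le_rieszEnergy {α : ℝ} {μ : Measure E2} (hμ : IsProbabilityMeasure μ) {H : Set E2}
    (hH : μ H = 1) : rieszW α H ≤ rieszEnergy α μ := by
  refine (iInf_le_of_le μ (iInf_le_of_le hμ (iInf_le_of_le hH le_rfl))).trans ?_
  exact (setLIntegral_le_lintegral _ _).trans
    (lintegral_mono fun x => setLIntegral_le_lintegral _ _)

lemma HeatDom.rieszW_le_add {α ε τ : ℝ} (hα : α ∈ Ioo (0 : ℝ) 2) (hε : 0 < ε) (hτ : 0 < τ)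
    {H F : Set E2} (hH : MeasurableSet H) (hH0 : volume H ≠ 0) (hHt : volume H ≠ ∞)
    (hdom : HeatDom H F) {m : PlaneL2} (hm0 : ∀ᵐ x, 0 ≤ m x) (hmF : ∀ᵐ x, x ∉ F → m x = 0)
    (hm1 : ∫ x, m x = 1) :
    ENNReal.ofReal (rieszConst α) * rieszW α H ≤
      ENNReal.ofReal (τ ^ (α / 2) / (α / 2) * ‖m‖ ^ 2) +
        ENNReal.ofReal (rieszConst α) * rieszEnergy α (densityMeasure m) +
        ENNReal.ofReal (ε ^ (1 - α / 2) * (1 / (α / 2) + 1 / (1 - α / 2))) := by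
  set w := cellWeight α ε τ with hw
  have hw0 := cellWeight_pos hα hε hτ
  have hφ0 : ∀ (f : PlaneL2) t, 0 ≤ t → 0 ≤ ⟪f, heatCLM t f⟫ := by
    intro f t ht
    rcases ht.eq_or_lt with rfl | ht
    · rw [heatCLM_zero]; exact real_inner_self_nonneg
    · exact inner_heatCLM_self_nonneg ht f
  have hφ : ∀ (f : PlaneL2) s t, 0 ≤ s → s ≤ t → ⟪f, heatCLM t f⟫ ≤ ⟪f, heatCLM s f⟫ :=
    fun f s t hs hst => inner_heatCLM_antitone hs hst f
  obtain ⟨ν, hν0, hνH, hν1, a, b, ha, hb, hab⟩ := hdom.exists_energy_le hτ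
    (u := fun n => w n / w 0) (div_self (hw0 0).ne') (fun n => div_pos (hw0 n) (hw0 0))
    (fun i j hij => div_le_div_of_nonneg_right (cellWeight_antitone hα hε hτ hij) (hw0 0).le)
    (fun n => by
      rw [div_pow, div_mul_div_comm, ← pow_two]
      exact div_le_div_of_nonneg_right (cellWeight_logConvex hα hε hτ n) (sq_nonneg _))
    ((summable_cellWeight hα hε hτ).div_const _) hH hH0 hHt hm0 hmF hm1
  have hsum : ∀ (f : PlaneL2) (c : ℝ),
      HasSum (fun n : ℕ => w n / w 0 * ⟪f, heatCLM (n * τ) f⟫) c →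
      ∑' n : ℕ, ENNReal.ofReal (w n * ⟪f, heatCLM (n * τ) f⟫) = ENNReal.ofReal (w 0 * c) := by
    intro f c hc
    have h1 : HasSum (fun n : ℕ => w n * ⟪f, heatCLM (n * τ) f⟫) (w 0 * c) := by
      have h0 : w 0 ≠ 0 := (hw0 0).ne'
      refine (hc.mul_left (w 0)).congr_fun fun n => ?_
      rw [← mul_assoc, mul_div_cancel₀ _ h0]
    rw [← h1.tsum_eq, ENNReal.ofReal_tsum_of_nonneg _ h1.summable]
    intro n
    exact mul_nonneg (hw0 n).le (hφ0 f _ (by positivity))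
  have hνp := isProbabilityMeasure_densityMeasure hν0 hν1
  have hmp := isProbabilityMeasure_densityMeasure hm0 hm1
  have hfin : ∀ {f : PlaneL2} (_ : ∀ᵐ x, 0 ≤ f x) (ψ : ℝ → ℝ≥0∞),
      ∫⁻ t in Ioi (0 : ℝ), ψ t * ENNReal.ofReal ⟪f, heatCLM t f⟫ =
        ∫⁻ t in Ioi (0 : ℝ), ψ t * heatEnergy (densityMeasure f) t := by
    intro f hf ψ
    refine setLIntegral_congr_fun measurableSet_Ioi fun t ht => ?_
    simp only [heatEnergy_densityMeasure hf ht]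
  have hdamp : ∫⁻ t in Ioi (0 : ℝ), ENNReal.ofReal (dampedPow α ε t) *
      heatEnergy (densityMeasure ν) t ≤ ENNReal.ofReal (τ ^ (α / 2) / (α / 2) * ‖m‖ ^ 2) +
        ENNReal.ofReal (rieszConst α) * rieszEnergy α (densityMeasure m) := by
    rw [← hfin hν0, ← lintegral_heatEnergy hα, ← hfin hm0]
    refine (lintegral_le_tsum_cellWeight hα hε hτ (hφ ν)).trans ?_
    rw [← hw, hsum ν a ha]
    refine (ENNReal.ofReal_le_ofReal (mul_le_mul_of_nonneg_left hab (hw0 0).le)).trans ?_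
    rw [← hsum m b hb]
    refine (tsum_cellWeight_le hα hε hτ (hφ0 m) (hφ m)).trans ?_
    rw [heatCLM_zero, one_apply_eq_self, real_inner_self_eq_norm_sq]
    gcongr
    exact cellWeight_zero_le hα hε hτ
  calc ENNReal.ofReal (rieszConst α) * rieszW α H
      ≤ ENNReal.ofReal (rieszConst α) * rieszEnergy α (densityMeasure ν) := by
        gcongr
        exact rieszW_le_rieszEnergy hνp (densityMeasure_apply_eq_one hν0 hν1 hH hνH)
    _ = ∫⁻ t in Ioi (0 : ℝ), (ENNReal.ofReal (dampedPow α ε t) *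
          heatEnergy (densityMeasure ν) t +
          ENNReal.ofReal ((1 - Real.exp (-(ε * t))) * t ^ (α / 2 - 1)) *
            heatEnergy (densityMeasure ν) t) := by
        rw [← lintegral_heatEnergy hα]
        refine setLIntegral_congr_fun measurableSet_Ioi fun t ht => ?_
        have ht0 : 0 < t := ht
        have hexp : Real.exp (-(ε * t)) ≤ 1 := by
          rw [Real.exp_le_one_iff]
          have : 0 ≤ ε * t := by positivity
          linarith
        rw [← add_mul, ← ENNReal.ofReal_add (dampedPow_pos ht0).le
          (mul_nonneg (by linarith) (by positivity)), dampedPow]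
        congr 2
        ring
    _ ≤ ∫⁻ t in Ioi (0 : ℝ), (ENNReal.ofReal (dampedPow α ε t) *
          heatEnergy (densityMeasure ν) t +
          ENNReal.ofReal ((1 - Real.exp (-(ε * t))) * t ^ (α / 2 - 1)) *
            ENNReal.ofReal (π * t)⁻¹) := by
        refine setLIntegral_mono_ae' measurableSet_Ioi (Eventually.of_forall fun t ht => ?_)
        gcongr
        exact heatEnergy_le ht
    _ ≤ _ := by
        rw [lintegral_add_right _ (by fun_prop)]
        exact add_le_add hdamp (lintegral_one_sub_exp_le hα hε)

/-- If `H` dominates `F` then the Riesz energy constant of `H` is at most the Riesz energy of any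
square-integrable density on `F`. -/
lemma HeatDom.rieszW_le {α : ℝ} (hα : α ∈ Ioo (0 : ℝ) 2)
    {H F : Set E2} (hH : MeasurableSet H) (hH0 : volume H ≠ 0) (hHt : volume H ≠ ∞)
    (hdom : HeatDom H F) {m : PlaneL2} (hm0 : ∀ᵐ x, 0 ≤ m x) (hmF : ∀ᵐ x, x ∉ F → m x = 0)
    (hm1 : ∫ x, m x = 1) : rieszW α H ≤ rieszEnergy α (densityMeasure m) := by
  have ha : 0 < α / 2 := by linarith [hα.1]
  have ha' : 0 < 1 - α / 2 := by linarith [hα.2]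
  have h1 : Tendsto (fun δ : ℝ => ENNReal.ofReal (δ ^ (α / 2) / (α / 2) * ‖m‖ ^ 2) +
        ENNReal.ofReal (rieszConst α) * rieszEnergy α (densityMeasure m) +
        ENNReal.ofReal (δ ^ (1 - α / 2) * (1 / (α / 2) + 1 / (1 - α / 2)))) (𝓝[>] 0)
      (𝓝 (ENNReal.ofReal ((0 : ℝ) ^ (α / 2) / (α / 2) * ‖m‖ ^ 2) +
        ENNReal.ofReal (rieszConst α) * rieszEnergy α (densityMeasure m) +
        ENNReal.ofReal ((0 : ℝ) ^ (1 - α / 2) * (1 / (α / 2) + 1 / (1 - α / 2))))) := by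
    have hp : ∀ p : ℝ, 0 < p → Tendsto (fun δ : ℝ => δ ^ p) (𝓝[>] 0) (𝓝 ((0 : ℝ) ^ p)) :=
      fun p hp => ((Real.continuousAt_rpow_const 0 p (Or.inr hp.le)).tendsto).mono_left
        nhdsWithin_le_nhds
    refine Tendsto.add (Tendsto.add ?_ tendsto_const_nhds) ?_
    · exact ENNReal.tendsto_ofReal (((hp _ ha).div_const _).mul_const _)
    · exact ENNReal.tendsto_ofReal ((hp _ ha').mul_const _)
  have h2 := ge_of_tendsto h1 (by
    filter_upwards [self_mem_nhdsWithin] with δ hδ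
    exact hdom.rieszW_le_add hα hδ hδ hH hH0 hHt hm0 hmF hm1)
  rw [Real.zero_rpow ha.ne', Real.zero_rpow ha'.ne'] at h2
  simp only [zero_div, zero_mul, ENNReal.ofReal_zero, zero_add, add_zero] at h2
  refine (ENNReal.mul_le_mul_iff_right ?_ ENNReal.ofReal_ne_top).1 h2
  simpa using rieszConst_pos hα

lemma ennreal_two_mul_le (a b : ℝ≥0∞) : 2 * (a * b) ≤ a * a + b * b := by
  wlog h : a ≤ b generalizing a b
  · have := this b a (le_of_not_ge h)
    rwa [mul_comm b a, add_comm] at this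
  obtain ⟨c, rfl⟩ := exists_add_of_le h
  calc 2 * (a * (a + c)) ≤ 2 * (a * (a + c)) + c * c := le_self_add
    _ = _ := by ring

lemma lintegral_gaussKernel_mul {t : ℝ} (ht : 0 < t) (a b : E2) :
    ∫⁻ x, ENNReal.ofReal (gaussKernel t (x - a)) * ENNReal.ofReal (gaussKernel t (x - b)) =
      ENNReal.ofReal (gaussKernel (t + t) (a - b)) := by
  have h1 : ∫ x, gaussKernel t (x - b) * gaussKernel t (x - a) = gaussKernel (t + t) (a - b) := by
    rw [← integral_gaussKernel_mul ht ht (a - b),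
      ← integral_sub_right_eq_self (fun z => gaussKernel t z * gaussKernel t (a - b - z)) b]
    refine integral_congr_ae (Eventually.of_forall fun x => ?_)
    simp only [sub_sub_sub_cancel_right]
    rw [gaussKernel_sub_comm t x a]
  have h2 : Integrable fun x => gaussKernel t (x - b) * gaussKernel t (x - a) :=
    Integrable.of_integral_ne_zero (by rw [h1]; exact (gaussKernel_pos (by positivity) _).ne')
  rw [← h1, ofReal_integral_eq_lintegral_ofReal h2 (Eventually.of_forall fun x =>
    mul_nonneg (gaussKernel_nonneg ht _) (gaussKernel_nonneg ht _))]
  refine lintegral_congr fun x => ?_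
  rw [mul_comm, ENNReal.ofReal_mul (gaussKernel_nonneg ht _)]

lemma measurable_ofReal_gaussKernel (t : ℝ) :
    Measurable fun x : E2 => ENNReal.ofReal (gaussKernel t x) :=
  (continuous_gaussKernel t).measurable.ennreal_ofReal

/-- The potential of a measure for the heat kernel. -/
def heatPotential (μ : Measure E2) (t : ℝ) (x : E2) : ℝ≥0∞ :=
  ∫⁻ a, ENNReal.ofReal (gaussKernel t (x - a)) ∂μ

lemma lintegral_potential_mul {k : E2 → ℝ≥0∞} (hk : Measurable k) (μ : Measure E2) [SFinite μ]
    (u : E2) : ∫⁻ x, (∫⁻ a, k (x - u - a) ∂μ) * ∫⁻ b, k (x - b) ∂μ =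
      ∫⁻ a, ∫⁻ b, ∫⁻ x, k (x - (a + u)) * k (x - b) ∂volume ∂μ ∂μ := by
  have hm : Measurable fun p : (E2 × E2) × E2 => k (p.1.2 - (p.1.1 + u)) * k (p.1.2 - p.2) := by
    fun_prop
  symm
  calc ∫⁻ a, ∫⁻ b, ∫⁻ x, k (x - (a + u)) * k (x - b) ∂volume ∂μ ∂μ
      = ∫⁻ a, ∫⁻ x, ∫⁻ b, k (x - (a + u)) * k (x - b) ∂μ ∂volume ∂μ := by
        refine lintegral_congr fun a => lintegral_lintegral_swap (Measurable.aemeasurable ?_)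
        unfold Function.uncurry
        fun_prop
    _ = ∫⁻ x, ∫⁻ a, ∫⁻ b, k (x - (a + u)) * k (x - b) ∂μ ∂μ :=
        lintegral_lintegral_swap (Measurable.lintegral_prod_right' hm).aemeasurable
    _ = _ := by
        refine lintegral_congr fun x => ?_
        have h1 : ∀ a, ∫⁻ b, k (x - (a + u)) * k (x - b) ∂μ =
            k (x - (a + u)) * ∫⁻ b, k (x - b) ∂μ := fun a =>
          lintegral_const_mul _ (by fun_prop)
        simp_rw [h1]
        rw [lintegral_mul_const _ (by fun_prop)]
        congr 1
        refine lintegral_congr fun a => ?_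
        rw [sub_add_eq_sub_sub_swap]

lemma lintegral_heatPotential_mul {μ : Measure E2} [SFinite μ] {t : ℝ} (ht : 0 < t) (u : E2) :
    ∫⁻ x, heatPotential μ t (x - u) * heatPotential μ t x =
      ∫⁻ a, ∫⁻ b, ENNReal.ofReal (gaussKernel (t + t) (a + u - b)) ∂μ ∂μ := by
  unfold heatPotential
  rw [lintegral_potential_mul (measurable_ofReal_gaussKernel t)]
  simp_rw [lintegral_gaussKernel_mul ht]

lemma lintegral_gaussKernel_shift_le {μ : Measure E2} [SFinite μ] {t : ℝ} (ht : 0 < t) (u : E2) :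
    ∫⁻ a, ∫⁻ b, ENNReal.ofReal (gaussKernel t (a + u - b)) ∂μ ∂μ ≤ heatEnergy μ t := by
  have ht2 : 0 < t / 2 := by positivity
  have hF : Measurable (heatPotential μ (t / 2)) := by
    unfold heatPotential
    exact Measurable.lintegral_prod_right'
      (f := fun p : E2 × E2 => ENNReal.ofReal (gaussKernel (t / 2) (p.1 - p.2)))
      ((measurable_ofReal_gaussKernel _).comp (by fun_prop))
  have h := lintegral_heatPotential_mul (μ := μ) ht2 u
  have h0 := lintegral_heatPotential_mul (μ := μ) ht2 0
  simp only [add_halves, add_zero, sub_zero] at h h0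
  rw [← h, heatEnergy, ← h0]
  have h2 : 2 * ∫⁻ x, heatPotential μ (t / 2) (x - u) * heatPotential μ (t / 2) x ≤
      2 * ∫⁻ x, heatPotential μ (t / 2) x * heatPotential μ (t / 2) x := by
    rw [← lintegral_const_mul _ (by fun_prop)]
    refine (lintegral_mono fun x => ennreal_two_mul_le _ _).trans_eq ?_
    rw [lintegral_add_right _ (by fun_prop), two_mul]
    congr 1
    exact lintegral_sub_right_eq_self
      (fun x => heatPotential μ (t / 2) x * heatPotential μ (t / 2) x) u
  exact (ENNReal.mul_le_mul_iff_right two_ne_zero ENNReal.ofNat_ne_top).1 h2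

section Smear

variable (μ : Measure E2) (δ : ℝ)

/-- The average of `μ` over the ball of radius `δ` around `x`. -/
def smear (x : E2) : ℝ := (volume.real (ball (0 : E2) δ))⁻¹ * μ.real (ball x δ)

lemma smear_nonneg (x : E2) : 0 ≤ smear μ δ x := by unfold smear; positivity

lemma measurable_measure_ball [SFinite μ] : Measurable fun x => μ (ball x δ) := by
  have : MeasurableSet {p : E2 × E2 | dist p.2 p.1 < δ} :=
    measurableSet_lt (by fun_prop) measurable_const
  exact measurable_measure_prodMk_left this

lemma measurable_smear [SFinite μ] : Measurable (smear μ δ) :=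
  ((measurable_measure_ball μ δ).ennreal_toReal).const_mul _

variable {δ} [IsProbabilityMeasure μ]

lemma volume_real_ball_pos (hδ : 0 < δ) : 0 < volume.real (ball (0 : E2) δ) :=
  ENNReal.toReal_pos (measure_ball_pos _ _ hδ).ne' measure_ball_lt_top.ne

lemma ofReal_smear (hδ : 0 < δ) (x : E2) :
    ENNReal.ofReal (smear μ δ x) = (volume (ball (0 : E2) δ))⁻¹ * μ (ball x δ) := by
  have hv := volume_real_ball_pos hδ
  rw [smear, ENNReal.ofReal_mul (by positivity), ENNReal.ofReal_inv_of_pos hv,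
    ofReal_measureReal measure_ball_lt_top.ne, ofReal_measureReal]

lemma lintegral_mul_smear (hδ : 0 < δ) {f : E2 → ℝ≥0∞} (hf : Measurable f) :
    ∫⁻ x, ENNReal.ofReal (smear μ δ x) * f x =
      (volume (ball (0 : E2) δ))⁻¹ * ∫⁻ z in ball (0 : E2) δ, ∫⁻ a, f (a + z) ∂μ := by
  have hB := measurableSet_ball (x := (0 : E2)) (ε := δ)
  have hmp : Measurable fun p : E2 × E2 => (ball (0 : E2) δ).indicator 1 (p.1 - p.2) * f p.1 :=
    ((measurable_one.indicator hB).comp (by fun_prop)).mul (by fun_prop)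
  have h1 : ∀ x, μ (ball x δ) * f x =
      ∫⁻ a, (ball (0 : E2) δ).indicator 1 (x - a) * f x ∂μ := by
    intro x
    have hi : Measurable fun a => (ball (0 : E2) δ).indicator (1 : E2 → ℝ≥0∞) (x - a) :=
      (measurable_one.indicator hB).comp (by fun_prop)
    rw [lintegral_mul_const _ hi]
    congr 1
    rw [← lintegral_indicator_one measurableSet_ball]
    refine lintegral_congr fun a => ?_
    simp only [indicator, mem_ball, dist_zero_right]
    rw [dist_eq_norm, norm_sub_rev]
    rfl
  simp_rw [ofReal_smear μ hδ, mul_assoc]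
  have hbf : Measurable fun x => μ (ball x δ) * f x := (measurable_measure_ball μ δ).mul hf
  rw [lintegral_const_mul _ hbf]
  congr 1
  simp_rw [h1]
  rw [lintegral_lintegral_swap hmp.aemeasurable]
  have hfa : Measurable fun p : E2 × E2 => f (p.2 + p.1) := by fun_prop
  refine Eq.trans ?_ (lintegral_lintegral_swap (f := fun z a => f (a + z)) hfa.aemeasurable).symm
  refine lintegral_congr fun a => ?_
  rw [← lintegral_add_left_eq_self _ a, ← lintegral_indicator hB]
  refine lintegral_congr fun z => ?_
  have hz : a + z - a = z := add_sub_cancel_left a z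
  simp only [hz]
  by_cases hzB : z ∈ ball (0 : E2) δ
  · rw [indicator_of_mem hzB, indicator_of_mem hzB, Pi.one_apply, one_mul]
  · rw [indicator_of_notMem hzB, indicator_of_notMem hzB, zero_mul]

lemma lintegral_smear (hδ : 0 < δ) : ∫⁻ x, ENNReal.ofReal (smear μ δ x) = 1 := by
  have h := lintegral_mul_smear μ hδ (f := fun _ => 1) measurable_const
  simp only [mul_one, lintegral_const, measure_univ, Measure.restrict_apply, MeasurableSet.univ,
    univ_inter, one_mul] at h
  rw [h, ENNReal.inv_mul_cancel (measure_ball_pos _ _ hδ).ne' measure_ball_lt_top.ne]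

lemma integrable_smear (hδ : 0 < δ) : Integrable (smear μ δ) := by
  refine ⟨(measurable_smear μ δ).aestronglyMeasurable, ?_⟩
  rw [hasFiniteIntegral_iff_ofReal (Eventually.of_forall (smear_nonneg μ δ)), lintegral_smear μ hδ]
  exact ENNReal.one_lt_top

lemma integral_smear (hδ : 0 < δ) : ∫ x, smear μ δ x = 1 := by
  rw [integral_eq_lintegral_of_nonneg_ae (Eventually.of_forall (smear_nonneg μ δ))
    (measurable_smear μ δ).aestronglyMeasurable, lintegral_smear μ hδ, ENNReal.toReal_one]

lemma memLp_smear (hδ : 0 < δ) : MemLp (smear μ δ) 2 volume := by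
  refine (memLp_two_iff_integrable_sq (measurable_smear μ δ).aestronglyMeasurable).2 ?_
  refine Integrable.mono' ((integrable_smear μ hδ).const_mul (volume.real (ball (0 : E2) δ))⁻¹)
    ((measurable_smear μ δ).pow_const 2).aestronglyMeasurable (Eventually.of_forall fun x => ?_)
  rw [Real.norm_of_nonneg (sq_nonneg _), pow_two]
  refine mul_le_mul_of_nonneg_right ?_ (smear_nonneg μ δ x)
  have := volume_real_ball_pos hδ
  exact mul_le_of_le_one_right (by positivity) measureReal_le_one

lemma lintegral_smear_smear_le (hδ : 0 < δ) {k : E2 → ℝ≥0∞} (hk : Measurable k) {C : ℝ≥0∞}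
    (hC : ∀ u, ∫⁻ a, ∫⁻ b, k (a + u - b) ∂μ ∂μ ≤ C) :
    ∫⁻ x, ENNReal.ofReal (smear μ δ x) * ∫⁻ y, ENNReal.ofReal (smear μ δ y) * k (x - y) ≤ C := by
  have hB0 : volume (ball (0 : E2) δ) ≠ 0 := (measure_ball_pos _ _ hδ).ne'
  have hBt : volume (ball (0 : E2) δ) ≠ ∞ := measure_ball_lt_top.ne
  have havg : (volume (ball (0 : E2) δ))⁻¹ * ∫⁻ _z in ball (0 : E2) δ, C = C := by
    rw [setLIntegral_const, mul_comm C, ← mul_assoc, ENNReal.inv_mul_cancel hB0 hBt, one_mul]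
  have hs := (measurable_smear μ δ).ennreal_ofReal
  have hin : ∀ x, ∫⁻ y, ENNReal.ofReal (smear μ δ y) * k (x - y) =
      (volume (ball (0 : E2) δ))⁻¹ * ∫⁻ z in ball (0 : E2) δ, ∫⁻ b, k (x - (b + z)) ∂μ := fun x =>
    lintegral_mul_smear μ hδ (f := fun y => k (x - y)) (by fun_prop)
  have hmx : Measurable fun x => ∫⁻ y, ENNReal.ofReal (smear μ δ y) * k (x - y) :=
    Measurable.lintegral_prod_right'
      (f := fun p : E2 × E2 => ENNReal.ofReal (smear μ δ p.2) * k (p.1 - p.2))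
      ((hs.comp measurable_snd).mul (by fun_prop))
  rw [lintegral_mul_smear μ hδ hmx]
  refine le_trans ?_ havg.le
  gcongr with w
  simp_rw [hin]
  have hmb : Measurable fun p : (E2 × E2) × E2 => k (p.1.1 + w - (p.2 + p.1.2)) := by fun_prop
  have hma : Measurable fun p : E2 × E2 => ∫⁻ b, k (p.1 + w - (b + p.2)) ∂μ :=
    Measurable.lintegral_prod_right' hmb
  have hma' : Measurable fun a => ∫⁻ z in ball (0 : E2) δ, ∫⁻ b, k (a + w - (b + z)) ∂μ :=
    Measurable.lintegral_prod_right' hma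
  rw [lintegral_const_mul _ hma', lintegral_lintegral_swap hma.aemeasurable]
  refine le_trans ?_ havg.le
  gcongr with z
  refine le_trans (le_of_eq ?_) (hC (w - z))
  refine lintegral_congr fun a => lintegral_congr fun b => ?_
  congr 1
  abel

lemma heatEnergy_smear_le (hδ : 0 < δ) {t : ℝ} (ht : 0 < t) :
    heatEnergy (volume.withDensity fun x => ENNReal.ofReal (smear μ δ x)) t ≤ heatEnergy μ t := by
  have hs := (measurable_smear μ δ).ennreal_ofReal
  have hk := measurable_ofReal_gaussKernel t
  refine le_trans (le_of_eq ?_) (lintegral_smear_smear_le μ hδ hk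
    fun u => lintegral_gaussKernel_shift_le ht u)
  generalize hss : (fun x : E2 => ENNReal.ofReal (smear μ δ x)) = s at hs
  have hsx : ∀ x, ENNReal.ofReal (smear μ δ x) = s x := congrFun hss
  unfold heatEnergy
  generalize hkk : (fun x : E2 => ENNReal.ofReal (gaussKernel t x)) = k at hk
  have hkx : ∀ x, ENNReal.ofReal (gaussKernel t x) = k x := congrFun hkk
  simp_rw [hkx, hsx]
  have hin : ∀ x, ∫⁻ y, k (x - y) ∂(volume.withDensity s) = ∫⁻ y, s y * k (x - y) := fun x =>
    lintegral_withDensity_eq_lintegral_mul _ hs (by fun_prop : Measurable fun y => k (x - y))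
  simp_rw [hin]
  have hmx : Measurable fun x => ∫⁻ y, s y * k (x - y) :=
    Measurable.lintegral_prod_right'
      (f := fun p : E2 × E2 => s p.2 * k (p.1 - p.2)) (by fun_prop)
  exact lintegral_withDensity_eq_lintegral_mul _ hs hmx

end Smear

/-- If `H` dominates a neighbourhood of `F` then its energy constant is at most that of `F`. -/
lemma HeatDom.rieszW_le_rieszEnergy {α : ℝ} (hα : α ∈ Ioo (0 : ℝ) 2)
    {H F F' : Set E2} (hH : MeasurableSet H) (hH0 : volume H ≠ 0) (hHt : volume H ≠ ∞)
    (hdom : HeatDom H F') {δ : ℝ} (hδ : 0 < δ) (hF : MeasurableSet F)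
    (hFF : ∀ x ∈ F, ∀ y, dist y x < δ → y ∈ F')
    (μ : Measure E2) [IsProbabilityMeasure μ] (hμ : μ F = 1) :
    rieszW α H ≤ rieszEnergy α μ := by
  set m : PlaneL2 := (memLp_smear μ hδ).toLp _ with hm
  have hae := (memLp_smear μ hδ).coeFn_toLp
  have hm0 : ∀ᵐ x, 0 ≤ m x := by
    filter_upwards [hae] with x hx
    rw [hm, hx]; exact smear_nonneg μ δ x
  have hm1 : ∫ x, m x = 1 := by rw [integral_congr_ae hae, integral_smear μ hδ]
  have hmF : ∀ᵐ x, x ∉ F' → m x = 0 := by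
    filter_upwards [hae] with x hx hxF
    have h0 : μ (ball x δ) = 0 := by
      rw [← prob_compl_eq_zero_iff hF] at hμ
      refine measure_mono_null (fun y hy hyF => hxF (hFF y hyF x ?_)) hμ
      rwa [dist_comm]
    rw [hm, hx]; simp [smear, Measure.real, h0]
  refine (hdom.rieszW_le hα hH hH0 hHt hm0 hmF hm1).trans ?_
  have hden : densityMeasure m = volume.withDensity fun x => ENNReal.ofReal (smear μ δ x) := by
    refine withDensity_congr_ae ?_
    filter_upwards [hae] with x hx
    rw [hm, hx]
  have hsf : SFinite (densityMeasure m) := by unfold densityMeasure; infer_instance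
  refine (ENNReal.mul_le_mul_iff_right (a := ENNReal.ofReal (rieszConst α)) ?_
    ENNReal.ofReal_ne_top).1 ?_
  · simpa using rieszConst_pos hα
  · rw [← lintegral_heatEnergy hα, ← lintegral_heatEnergy hα]
    refine setLIntegral_mono_ae' measurableSet_Ioi (Eventually.of_forall fun t ht => ?_)
    gcongr
    rw [hden]
    exact heatEnergy_smear_le μ hδ ht

lemma Isometry.measurePreserving_plane {g : E2 → E2} (hg : Isometry g) :
    MeasurePreserving g volume volume := by
  let L : E2 ≃ₗᵢ[ℝ] E2 := hg.affineIsometryOfStrictConvexSpace.linearIsometry.toLinearIsometryEquiv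
    rfl
  have h : g = fun x => L x + g 0 := by
    funext x
    have := hg.affineIsometryOfStrictConvexSpace.map_vadd 0 x
    simp only [vadd_eq_add, add_zero] at this
    exact this
  rw [h]
  exact (measurePreserving_add_right volume (g 0)).comp L.measurePreserving

lemma inner_heatCLM_toLp {t : ℝ} (ht : 0 < t) {f : E2 → ℝ} (hf : MemLp f 2 volume) :
    ⟪hf.toLp f, heatCLM t (hf.toLp f)⟫ =
      ∫ p : E2 × E2, gaussKernel t (p.1 - p.2) * (f p.1 * f p.2) ∂(volume.prod volume) := by
  rw [inner_heatCLM ht]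
  refine integral_congr_ae ?_
  filter_upwards [Measure.quasiMeasurePreserving_fst.ae_eq_comp hf.coeFn_toLp,
    Measure.quasiMeasurePreserving_snd.ae_eq_comp hf.coeFn_toLp] with p h1 h2
  simp only [Function.comp_apply] at h1 h2
  rw [h1, h2]

lemma MeasurePreserving.integral_comp_of_integrable {X : Type*} [MeasurableSpace X]
    {μ : Measure X} {g : X → X} (hg : MeasurePreserving g μ μ) {f : X → ℝ} (hf : Integrable f μ) :
    ∫ x, f (g x) ∂μ = ∫ x, f x ∂μ := by
  conv_rhs => rw [← hg.map_eq]
  rw [integral_map hg.aemeasurable]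
  rw [hg.map_eq]
  exact hf.aestronglyMeasurable

lemma gaussKernel_sub_congr {t : ℝ} {x y z w : E2} (h : dist x y = dist z w) :
    gaussKernel t (x - y) = gaussKernel t (z - w) := by
  simp only [gaussKernel, ← dist_eq_norm, h]

lemma HeatDom.preimage_isometry {g : E2 → E2} (hg : Isometry g) (E : Set E2) :
    HeatDom E (g ⁻¹' E) := by
  intro f hf
  have hmp := hg.measurePreserving_plane
  have hmem : MemLp (fun x => f (g x)) 2 volume := (Lp.memLp f).comp_measurePreserving hmp
  refine ⟨hmem.toLp _, ?_, ?_, fun t ht => ?_⟩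
  · filter_upwards [hmem.coeFn_toLp, hmp.quasiMeasurePreserving.ae hf] with x hx hfx hxE
    rw [hx]
    exact hfx hxE
  · have : hmem.toLp _ = Lp.compMeasurePreserving g hmp f := by
      refine Lp.ext ?_
      filter_upwards [hmem.coeFn_toLp, Lp.coeFn_compMeasurePreserving f hmp] with x hx hx'
      rw [hx, hx']; rfl
    rw [this, Lp.norm_compMeasurePreserving]
  · rw [inner_heatCLM_toLp ht, inner_heatCLM ht]
    refine le_of_eq ?_
    rw [← MeasurePreserving.integral_comp_of_integrable (hmp.prod hmp)
      (integrable_gaussKernel_mul_mul ht (Lp.memLp f) (Lp.memLp f))]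
    refine integral_congr_ae (Eventually.of_forall fun p => ?_)
    simp only [Prod.map_fst, Prod.map_snd]
    rw [gaussKernel_sub_congr (hg.dist_eq p.1 p.2)]

lemma HeatDom.of_isometry {g : E2 → E2} (hg : Isometry g) {E F : Set E2}
    (h : ∀ x ∈ F, g x ∈ E) : HeatDom E F :=
  (HeatDom.preimage_isometry hg E).trans (HeatDom.of_subset h)

/-- Reflection in the second coordinate axis. -/
def axisRefl (x : E2) : E2 := !₂[-x 0, x 1]

@[simp] lemma axisRefl_zero (x : E2) : axisRefl x 0 = -x 0 := by simp [axisRefl]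

@[simp] lemma axisRefl_one (x : E2) : axisRefl x 1 = x 1 := by simp [axisRefl]

lemma plane_ext {x y : E2} (h0 : x 0 = y 0) (h1 : x 1 = y 1) : x = y := by
  ext i; fin_cases i
  · exact h0
  · exact h1

lemma plane_norm_sq (x : E2) : ‖x‖ ^ 2 = x 0 ^ 2 + x 1 ^ 2 := by
  rw [EuclideanSpace.norm_sq_eq, Fin.sum_univ_two]; simp

lemma axisRefl_axisRefl (x : E2) : axisRefl (axisRefl x) = x := plane_ext (by simp) (by simp)

lemma isometry_of_norm_sq {g : E2 → E2}
    (h : ∀ x y, ((g x) 0 - (g y) 0) ^ 2 + ((g x) 1 - (g y) 1) ^ 2 =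
      (x 0 - y 0) ^ 2 + (x 1 - y 1) ^ 2) : Isometry g := by
  refine Isometry.of_dist_eq fun x y => ?_
  rw [dist_eq_norm, dist_eq_norm, ← sq_eq_sq₀ (norm_nonneg _) (norm_nonneg _), plane_norm_sq,
    plane_norm_sq]
  simpa using h x y

lemma isometry_axisRefl : Isometry axisRefl :=
  isometry_of_norm_sq fun x y => by simp only [axisRefl_zero, axisRefl_one]; ring

/-- The two-point rearrangement towards the half plane `x 0 ≤ 0`. -/
def polarize (f : E2 → ℝ) (x : E2) : ℝ :=
  if x 0 ≤ 0 then max (f x) (f (axisRefl x)) else min (f x) (f (axisRefl x))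

lemma polarize_of_nonpos (f : E2 → ℝ) {x : E2} (hx : x 0 ≤ 0) :
    polarize f x = max (f x) (f (axisRefl x)) ∧
      polarize f (axisRefl x) = min (f x) (f (axisRefl x)) := by
  refine ⟨if_pos hx, ?_⟩
  rcases hx.eq_or_lt with h0 | h0
  · have : axisRefl x = x := plane_ext (by simp [h0]) (by simp)
    simp [polarize, this]
  · rw [polarize, if_neg (by simpa using h0), axisRefl_axisRefl, min_comm]

lemma polarize_sq_add (f : E2 → ℝ) (x : E2) :
    polarize f x ^ 2 + polarize f (axisRefl x) ^ 2 = f x ^ 2 + f (axisRefl x) ^ 2 := by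
  wlog hx : x 0 ≤ 0 generalizing x
  · have := this (axisRefl x) (by simp only [axisRefl_zero]; linarith)
    rw [axisRefl_axisRefl] at this
    linarith
  obtain ⟨h1, h2⟩ := polarize_of_nonpos f hx
  rw [h1, h2]
  rcases le_total (f x) (f (axisRefl x)) with h | h
  · rw [max_eq_right h, min_eq_left h]; ring
  · rw [max_eq_left h, min_eq_right h]

lemma two_point_rearrangement {a b : ℝ} (hab : b ≤ a) (p q r s : ℝ) :
    a * (p * r) + a * (q * s) + b * (p * s) + b * (q * r) ≤
      a * (max p q * max r s) + a * (min p q * min r s) + b * (max p q * min r s) +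
        b * (min p q * max r s) := by
  rcases le_total p q with h | h <;> rcases le_total r s with h' | h' <;>
    simp only [max_eq_left, max_eq_right, min_eq_left, min_eq_right, h, h'] <;>
    nlinarith [mul_nonneg (sub_nonneg.2 hab) (mul_nonneg (sub_nonneg.2 h) (sub_nonneg.2 h'))]

lemma dist_axisRefl_right (x y : E2) : dist (axisRefl x) y = dist x (axisRefl y) := by
  conv_lhs => rw [← axisRefl_axisRefl y]
  exact isometry_axisRefl.dist_eq _ _

lemma gaussKernel_axisRefl_le {t : ℝ} (ht : 0 < t) {x y : E2} (hx : x 0 ≤ 0) (hy : y 0 ≤ 0) :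
    gaussKernel t (x - axisRefl y) ≤ gaussKernel t (x - y) := by
  refine gaussKernel_le_of_norm_le ht ?_
  rw [← sq_le_sq₀ (norm_nonneg _) (norm_nonneg _), plane_norm_sq, plane_norm_sq]
  simp only [PiLp.sub_apply, axisRefl_zero, axisRefl_one]
  nlinarith [mul_nonneg_of_nonpos_of_nonpos hx hy]

/-- The integrand of the heat form. -/
def heatIntegrand (t : ℝ) (f : E2 → ℝ) (p : E2 × E2) : ℝ :=
  gaussKernel t (p.1 - p.2) * (f p.1 * f p.2)

lemma heatIntegrand_polarize {t : ℝ} (ht : 0 < t) (f : E2 → ℝ) (x y : E2) :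
    heatIntegrand t f (x, y) + heatIntegrand t f (axisRefl x, axisRefl y) +
      heatIntegrand t f (x, axisRefl y) + heatIntegrand t f (axisRefl x, y) ≤
    heatIntegrand t (polarize f) (x, y) + heatIntegrand t (polarize f) (axisRefl x, axisRefl y) +
      heatIntegrand t (polarize f) (x, axisRefl y) +
      heatIntegrand t (polarize f) (axisRefl x, y) := by
  wlog hx : x 0 ≤ 0 generalizing x
  · have := this (axisRefl x) (by simp only [axisRefl_zero]; linarith)
    rw [axisRefl_axisRefl] at this
    linarith
  wlog hy : y 0 ≤ 0 generalizing y
  · have := this (axisRefl y) (by simp only [axisRefl_zero]; linarith)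
    rw [axisRefl_axisRefl] at this
    linarith
  obtain ⟨h1, h2⟩ := polarize_of_nonpos f hx
  obtain ⟨h3, h4⟩ := polarize_of_nonpos f hy
  have e1 : gaussKernel t (axisRefl x - axisRefl y) = gaussKernel t (x - y) :=
    gaussKernel_sub_congr (isometry_axisRefl.dist_eq _ _)
  have e2 : gaussKernel t (axisRefl x - y) = gaussKernel t (x - axisRefl y) :=
    gaussKernel_sub_congr (dist_axisRefl_right _ _)
  simp only [heatIntegrand, h1, h2, h3, h4, e1, e2]
  exact two_point_rearrangement (gaussKernel_axisRefl_le ht hx hy) _ _ _ _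

lemma integral_heatIntegrand_symm {t : ℝ} (ht : 0 < t) {f : E2 → ℝ} (hf : MemLp f 2 volume) :
    Integrable (fun p : E2 × E2 => heatIntegrand t f (p.1, p.2) +
      heatIntegrand t f (axisRefl p.1, axisRefl p.2) + heatIntegrand t f (p.1, axisRefl p.2) +
      heatIntegrand t f (axisRefl p.1, p.2)) (volume.prod volume) ∧
    ∫ p : E2 × E2, heatIntegrand t f (p.1, p.2) +
      heatIntegrand t f (axisRefl p.1, axisRefl p.2) + heatIntegrand t f (p.1, axisRefl p.2) +
      heatIntegrand t f (axisRefl p.1, p.2) ∂(volume.prod volume) =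
    4 * ∫ p : E2 × E2, heatIntegrand t f p ∂(volume.prod volume) := by
  have hi : Integrable (heatIntegrand t f) (volume.prod volume) :=
    integrable_gaussKernel_mul_mul ht hf hf
  have hmp := isometry_axisRefl.measurePreserving_plane
  have hid := MeasurePreserving.id (volume : Measure E2)
  have h1 := (hmp.prod hmp).integrable_comp_of_integrable hi
  have h2 := (hid.prod hmp).integrable_comp_of_integrable hi
  have h3 := (hmp.prod hid).integrable_comp_of_integrable hi
  have i1 := MeasurePreserving.integral_comp_of_integrable (hmp.prod hmp) hi
  have i2 := MeasurePreserving.integral_comp_of_integrable (hid.prod hmp) hi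
  have i3 := MeasurePreserving.integral_comp_of_integrable (hmp.prod hid) hi
  refine ⟨((hi.add h1).add h2).add h3, ?_⟩
  refine (integral_add ((hi.add h1).add h2) h3).trans ?_
  rw [integral_add' (hi.add h1) h2, integral_add' hi h1]
  simp only [Function.comp_apply]
  linarith

lemma memLp_polarize {f : E2 → ℝ} (hf : MemLp f 2 volume) : MemLp (polarize f) 2 volume := by
  have hmp := isometry_axisRefl.measurePreserving_plane
  have hfr : MemLp (fun x => f (axisRefl x)) 2 volume := hf.comp_measurePreserving hmp
  have hs : MeasurableSet {x : E2 | x 0 ≤ 0} := measurableSet_le (by fun_prop) measurable_const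
  have h := ((hf.sup hfr).indicator hs).add ((hf.inf hfr).indicator hs.compl)
  refine h.ae_eq (Eventually.of_forall fun x => ?_)
  by_cases hx : x 0 ≤ 0 <;> simp [polarize, hx, indicator]

lemma HeatDom.polarize {E F : Set E2} (hF : ∀ x : E2, x 0 ≤ 0 → x ∈ F → x ∈ E ∨ axisRefl x ∈ E)
    (hF' : ∀ x : E2, 0 < x 0 → x ∈ F → x ∈ E ∧ axisRefl x ∈ E) : HeatDom E F := by
  intro f hf
  have hfm := Lp.memLp f
  have hmp := isometry_axisRefl.measurePreserving_plane
  have hpm := memLp_polarize hfm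
  refine ⟨hpm.toLp _, ?_, ?_, fun t ht => ?_⟩
  · filter_upwards [hpm.coeFn_toLp, hf, hmp.quasiMeasurePreserving.ae hf] with x hx h1 h2 hxF
    rw [hx, _root_.polarize]
    split_ifs with h
    · exact le_max_iff.2 ((hF x h hxF).imp h1 h2)
    · exact le_min_iff.2 ((hF' x (not_le.1 h) hxF).imp h1 h2)
  · refine le_of_eq ?_
    have key : ∫ x, _root_.polarize f x ^ 2 = ∫ x, f x ^ 2 := by
      have hs := fun {k : E2 → ℝ} (hk : MemLp k 2 volume) =>
        (integral_add hk.integrable_sq (hmp.integrable_comp_of_integrable hk.integrable_sq)).trans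
          (congrArg (_ + ·) (MeasurePreserving.integral_comp_of_integrable hmp hk.integrable_sq))
      have h1 := hs hfm
      have h2 := hs hpm
      have h3 : ∫ x, _root_.polarize f x ^ 2 + _root_.polarize f (axisRefl x) ^ 2 =
          ∫ x, f x ^ 2 + f (axisRefl x) ^ 2 := by simp_rw [polarize_sq_add]
      simp only [Function.comp_apply] at h1 h2
      linarith
    rw [← sq_eq_sq₀ (norm_nonneg _) (norm_nonneg _), ← real_inner_self_eq_norm_sq,
      ← real_inner_self_eq_norm_sq, inner_planeL2, inner_planeL2]
    simp only [← pow_two]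
    rw [← key]
    refine integral_congr_ae ?_
    filter_upwards [hpm.coeFn_toLp] with x hx
    rw [hx]
  · rw [inner_heatCLM_toLp ht, inner_heatCLM ht]
    obtain ⟨i1, e1⟩ := integral_heatIntegrand_symm ht hfm
    obtain ⟨i2, e2⟩ := integral_heatIntegrand_symm ht hpm
    have := integral_mono i1 i2 fun p => heatIntegrand_polarize ht f p.1 p.2
    rw [e1, e2] at this
    exact le_of_mul_le_mul_left this (by norm_num)

/-- The set whose horizontal section at height `y` has centre `c y` and half-width `ρ y`. -/
def fiberSet (c ρ : ℝ → ℝ) : Set E2 := {x | |x 0 - c (x 1)| ≤ ρ (x 1)}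

lemma HeatDom.fiberSet_fold (c ρ : ℝ → ℝ) :
    HeatDom (fiberSet c ρ) (fiberSet (fun y => -|c y|) ρ) := by
  refine HeatDom.polarize (fun x hx hxF => ?_) fun x hx hxF => ?_
  all_goals
    simp only [fiberSet, mem_ofPred_eq, axisRefl_zero, axisRefl_one, abs_le] at hxF ⊢
    rcases le_total 0 (c (x 1)) with h | h
    · rw [abs_of_nonneg h] at hxF
      first | exact Or.inr ⟨by linarith, by linarith⟩ |
        exact ⟨⟨by linarith, by linarith⟩, ⟨by linarith, by linarith⟩⟩
    · rw [abs_of_nonpos h] at hxF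
      first | exact Or.inl ⟨by linarith, by linarith⟩ |
        exact ⟨⟨by linarith, by linarith⟩, ⟨by linarith, by linarith⟩⟩

lemma HeatDom.fiberSet_translate (c ρ : ℝ → ℝ) (s : ℝ) :
    HeatDom (fiberSet c ρ) (fiberSet (fun y => c y + s) ρ) := by
  refine HeatDom.of_isometry (g := fun x => !₂[x 0 - s, x 1])
    (isometry_of_norm_sq fun x y => by simp) fun x hx => ?_
  simp only [fiberSet, mem_ofPred_eq] at hx ⊢
  simpa [sub_sub, add_comm] using hx

lemma HeatDom.exists_fiberSet_small {c : ℝ → ℝ} {M : ℝ} (hc : ∀ y, |c y| ≤ M) (ρ : ℝ → ℝ) (n : ℕ) :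
    ∃ c' : ℝ → ℝ, (∀ y, |c' y| ≤ M / 2 ^ n) ∧ HeatDom (fiberSet c ρ) (fiberSet c' ρ) := by
  induction n with
  | zero => exact ⟨c, by simpa using hc, HeatDom.of_subset subset_rfl⟩
  | succ n ih =>
    obtain ⟨c', hc', hdom⟩ := ih
    refine ⟨_, fun y => ?_, (hdom.trans (HeatDom.fiberSet_fold c' ρ)).trans
      (HeatDom.fiberSet_translate _ ρ (M / 2 ^ n / 2))⟩
    have := hc' y
    have := abs_nonneg (c' y)
    rw [pow_succ, ← div_div, abs_le]
    constructor <;> linarith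

/-- Approximate Steiner symmetrization. -/
lemma HeatDom.fiberSet_steiner {c : ℝ → ℝ} {M : ℝ} (hc : ∀ y, |c y| ≤ M) (ρ : ℝ → ℝ) {ε : ℝ}
    (hε : 0 < ε) : HeatDom (fiberSet c ρ) (fiberSet 0 fun y => ρ y - ε) := by
  obtain ⟨n, hn⟩ := ((tendsto_const_nhds (x := M)).div_atTop
    (tendsto_pow_atTop_atTop_of_one_lt (one_lt_two (α := ℝ)))).eventually_lt_const hε |>.exists
  obtain ⟨c', hc', hdom⟩ := HeatDom.exists_fiberSet_small hc ρ n
  refine hdom.trans (HeatDom.of_subset fun x hx => ?_)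
  simp only [fiberSet, mem_ofPred_eq, Pi.zero_apply, sub_zero] at hx ⊢
  have := abs_sub (x 0) (c' (x 1))
  have := hc' (x 1)
  linarith

lemma measurePreserving_coords :
    MeasurePreserving (fun x : E2 => (x 0, x 1)) volume (volume : Measure (ℝ × ℝ)) :=
  (volume_preserving_finTwoArrow ℝ).comp (PiLp.volume_preserving_ofLp (Fin 2))

lemma measurePreserving_coords_swap :
    MeasurePreserving (fun x : E2 => (x 1, x 0)) volume (volume : Measure (ℝ × ℝ)) :=
  (Measure.measurePreserving_swap (μ := (volume : Measure ℝ)) (ν := volume)).comp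
    measurePreserving_coords

lemma volume_fiberSet {c ρ : ℝ → ℝ} (hc : Measurable c) (hρ : Measurable ρ) :
    volume (fiberSet c ρ) = ∫⁻ y, ENNReal.ofReal (2 * ρ y) := by
  have hS : MeasurableSet {p : ℝ × ℝ | |p.2 - c p.1| ≤ ρ p.1} :=
    measurableSet_le (by fun_prop) (by fun_prop)
  have h := measurePreserving_coords_swap.measure_preimage hS.nullMeasurableSet
  refine h.trans ?_
  rw [Measure.volume_eq_prod, Measure.prod_apply hS]
  refine lintegral_congr fun y => ?_
  have : Prod.mk y ⁻¹' {p : ℝ × ℝ | |p.2 - c p.1| ≤ ρ p.1} = Icc (c y - ρ y) (c y + ρ y) := by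
    ext x
    simp only [mem_preimage, mem_ofPred_eq, mem_Icc, abs_le]
    constructor <;> rintro ⟨h1, h2⟩ <;> constructor <;> linarith
  rw [this, Real.volume_Icc]
  congr 1; ring

/-- The hexagon with vertices `(±a, ±b)` and `(0, ±(b + h))`. -/
def hexSet (a b h : ℝ) : Set E2 := {x | |x 0| ≤ a ∧ h * |x 0| ≤ a * (b + h - |x 1|)}

/-- The half-width of `hexSet a b h` at height `y`. -/
def hexWidth (a b h y : ℝ) : ℝ :=
  if |y| ≤ b then a else if |y| ≤ b + h then a * ((b + h - |y|) / h) else -1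

lemma measurable_hexWidth (a b h : ℝ) : Measurable (hexWidth a b h) := by
  unfold hexWidth
  exact Measurable.ite (measurableSet_le (by fun_prop) measurable_const) measurable_const
    (Measurable.ite (measurableSet_le (by fun_prop) measurable_const) (by fun_prop)
      measurable_const)

lemma hexSet_eq_fiberSet {a b h : ℝ} (ha : 0 < a) (hh : 0 ≤ h) :
    hexSet a b h = fiberSet 0 (hexWidth a b h) := by
  ext x
  simp only [hexSet, fiberSet, hexWidth, mem_ofPred_eq, Pi.zero_apply, sub_zero]
  split_ifs with h1 h2
  · refine ⟨And.left, fun hx => ⟨hx, ?_⟩⟩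
    nlinarith [mul_nonneg hh (sub_nonneg.2 hx)]
  · have hpos : 0 < h := by linarith
    rw [← mul_div_assoc, le_div_iff₀ hpos, mul_comm |x 0| h]
    refine ⟨And.right, fun hx => ⟨?_, hx⟩⟩
    nlinarith
  · refine ⟨fun hx => ?_, fun hx => ?_⟩
    · nlinarith [mul_nonneg hh (abs_nonneg (x 0))]
    · linarith [abs_nonneg (x 0)]

lemma volume_hexSet {a b h : ℝ} (ha : 0 < a) (hb : 0 ≤ b) (hh : 0 ≤ h) :
    volume (hexSet a b h) = ENNReal.ofReal (4 * a * b + 2 * a * h) := by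
  have hS : MeasurableSet {p : ℝ × ℝ | |p.1| ≤ a ∧ h * |p.1| ≤ a * (b + h - |p.2|)} := by
    have h1 : MeasurableSet {p : ℝ × ℝ | |p.1| ≤ a} := measurableSet_le (by fun_prop) (by fun_prop)
    have h2 : MeasurableSet {p : ℝ × ℝ | h * |p.1| ≤ a * (b + h - |p.2|)} :=
      measurableSet_le (by fun_prop) (by fun_prop)
    exact h1.inter h2
  refine (measurePreserving_coords.measure_preimage hS.nullMeasurableSet).trans ?_
  rw [Measure.volume_eq_prod, Measure.prod_apply hS]
  have hfib : ∀ x, volume (Prod.mk x ⁻¹' {p : ℝ × ℝ | |p.1| ≤ a ∧ h * |p.1| ≤ a * (b + h - |p.2|)})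
      = (Icc (-a) a).indicator (fun x => ENNReal.ofReal (2 * (b + h - h * |x| / a))) x := by
    intro x
    by_cases hx : x ∈ Icc (-a) a
    · rw [indicator_of_mem hx]
      have hx' : |x| ≤ a := abs_le.2 hx
      have : Prod.mk x ⁻¹' {p : ℝ × ℝ | |p.1| ≤ a ∧ h * |p.1| ≤ a * (b + h - |p.2|)} =
          Icc (-(b + h - h * |x| / a)) (b + h - h * |x| / a) := by
        ext y
        simp only [mem_preimage, mem_ofPred_eq, mem_Icc, hx', true_and]
        rw [← abs_le, le_sub_comm, div_le_iff₀ ha, mul_comm a]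
      rw [this, Real.volume_Icc]
      congr 1; ring
    · rw [indicator_of_notMem hx]
      have hx' : ¬ |x| ≤ a := fun h => hx (abs_le.1 h)
      have : Prod.mk x ⁻¹' {p : ℝ × ℝ | |p.1| ≤ a ∧ h * |p.1| ≤ a * (b + h - |p.2|)} = ∅ := by
        ext y; simp [hx']
      rw [this, measure_empty]
  simp_rw [hfib]
  rw [lintegral_indicator measurableSet_Icc, ← ofReal_integral_eq_lintegral_ofReal]
  · congr 1
    rw [integral_Icc_eq_integral_Ioc, ← intervalIntegral.integral_of_le (by linarith)]
    have habs : ∫ x in (-a)..a, |x| = a ^ 2 := by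
      rw [← intervalIntegral.integral_add_adjacent_intervals (b := 0)
        (continuous_abs.intervalIntegrable _ _) (continuous_abs.intervalIntegrable _ _)]
      have h1 : ∫ x in (-a)..0, |x| = ∫ x in (-a)..0, -x := by
        refine intervalIntegral.integral_congr fun x hx => ?_
        rw [uIcc_of_le (by linarith)] at hx
        exact abs_of_nonpos hx.2
      have h2 : ∫ x in (0 : ℝ)..a, |x| = ∫ x in (0 : ℝ)..a, x := by
        refine intervalIntegral.integral_congr fun x hx => ?_
        rw [uIcc_of_le ha.le] at hx
        exact abs_of_nonneg hx.1
      rw [h1, h2, intervalIntegral.integral_neg, integral_id, integral_id]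
      ring
    rw [intervalIntegral.integral_const_mul, intervalIntegral.integral_sub
      (by simp) (Continuous.intervalIntegrable (by fun_prop) _ _),
      intervalIntegral.integral_div, intervalIntegral.integral_const_mul, habs,
      intervalIntegral.integral_const, smul_eq_mul]
    field_simp
    ring
  · exact (Continuous.integrableOn_Icc (by fun_prop))
  · refine (ae_restrict_iff' measurableSet_Icc).2 (Eventually.of_forall fun x hx => ?_)
    have hx' : |x| ≤ a := abs_le.2 hx
    have : h * |x| / a ≤ h := (div_le_iff₀ ha).2 (by gcongr)
    simp only [Pi.zero_apply]
    linarith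

lemma volume_fiberSet_hexWidth {a b h : ℝ} (ha : 0 < a) (hb : 0 ≤ b) (hh : 0 ≤ h) {c : ℝ → ℝ}
    (hc : Measurable c) :
    volume (fiberSet c (hexWidth a b h)) = ENNReal.ofReal (4 * a * b + 2 * a * h) := by
  rw [← volume_hexSet ha hb hh, hexSet_eq_fiberSet ha hh,
    volume_fiberSet hc (measurable_hexWidth a b h),
    volume_fiberSet measurable_zero (measurable_hexWidth a b h)]

lemma hexSet_scale_subset {a b h : ℝ} (ha : 0 < a) (hb : 0 ≤ b) (hh : 0 ≤ h) {θ : ℝ} (hθ : 0 < θ)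
    (hθ1 : θ < 1) : hexSet (θ * a) (θ * b) (θ * h) ⊆
      fiberSet 0 fun y => hexWidth a b h y - (1 - θ) * a := by
  rintro x ⟨h1, h2⟩
  have h3 : h * |x 0| ≤ a * (θ * (b + h) - |x 1|) := by
    refine le_of_mul_le_mul_left ?_ hθ
    linarith
  simp only [fiberSet, hexWidth, mem_ofPred_eq, Pi.zero_apply, sub_zero]
  have hx0 := abs_nonneg (x 0)
  have hle : |x 1| ≤ θ * (b + h) := by
    by_contra! hc
    nlinarith [mul_nonneg hh hx0, mul_pos ha (sub_pos.2 hc)]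
  split_ifs with h4 h5
  · linarith
  · have hpos : 0 < h := by linarith
    rw [← mul_div_assoc, le_sub_iff_add_le, le_div_iff₀ hpos]
    have := mul_nonneg (mul_nonneg (sub_nonneg.2 hθ1.le) ha.le) hb
    nlinarith
  · exfalso
    nlinarith [abs_nonneg (x 1)]

section Aligned

variable {C : Set E2}

lemma Convex.smul_add_smul_mem_of_symm (hC : Convex ℝ C) (hsymm : ∀ x ∈ C, -x ∈ C)
    {p r : E2} (hp : p ∈ C) (hr : r ∈ C) {x y : ℝ}
    (hxy : |x| + |y| ≤ 1) : x • p + y • r ∈ C := by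
  have habs : ∀ {p : E2} (_ : p ∈ C) (x : ℝ), ∃ p' ∈ C, x • p = |x| • p' := by
    intro p hp x
    rcases le_total 0 x with h | h
    · exact ⟨p, hp, by rw [abs_of_nonneg h]⟩
    · exact ⟨-p, hsymm p hp, by rw [abs_of_nonpos h]; simp⟩
  obtain ⟨p', hp', e1⟩ := habs hp x
  obtain ⟨r', hr', e2⟩ := habs hr y
  have h0 : (0 : E2) ∈ C := by
    simpa using hC hp (hsymm p hp) (a := 1 / 2) (b := 1 / 2) (by norm_num) (by norm_num)
      (by norm_num)
  rw [e1, e2]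
  rcases (abs_nonneg x).eq_or_lt with hx | hx
  · rw [← hx, zero_smul, zero_add]
    exact hC.smul_mem_of_zero_mem h0 hr' ⟨abs_nonneg _, by linarith⟩
  have hx1 : |x| + |y| ≠ 0 := (add_pos_of_pos_of_nonneg hx (abs_nonneg y)).ne'
  have h1 := hC hp' hr' (a := |x| / (|x| + |y|)) (b := |y| / (|x| + |y|)) (by positivity)
    (by positivity) (by field_simp)
  have h2 := hC.smul_mem_of_zero_mem h0 h1 (t := |x| + |y|) ⟨by positivity, hxy⟩
  rw [smul_add, smul_smul, smul_smul, mul_div_cancel₀ _ hx1, mul_div_cancel₀ _ hx1] at h2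
  exact h2

lemma exists_center_of_nonneg (hC : Convex ℝ C) (hsymm : ∀ x ∈ C, -x ∈ C)
    {m a b q h : ℝ} (ha : 0 < a) (hb : 0 < b)
    (hp : !₂[m + a, b] ∈ C) (hr : !₂[m - a, b] ∈ C) (hq : !₂[q, b + h] ∈ C) {y : ℝ} (hy : 0 ≤ y) :
    ∃ c : ℝ, |c| ≤ |m| + |q| ∧ ∀ x : E2, x 1 = y → |x 0 - c| ≤ hexWidth a b h y → x ∈ C := by
  rw [hexWidth, abs_of_nonneg hy]
  split_ifs with h1 h2
  · have hl : |y / b| ≤ 1 := by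
      rw [abs_of_nonneg (by positivity)]; exact (div_le_one hb).2 h1
    refine ⟨m * (y / b), ?_, fun x hx1 hx0 => ?_⟩
    · rw [abs_mul]
      nlinarith [abs_nonneg m, abs_nonneg q]
    · set l := y / b with hldef
      have hyl : y = l * b := by rw [hldef]; field_simp
      set t := (x 0 - m * l) / a with ht
      have hxt : x 0 = m * l + a * t := by rw [ht]; field_simp; ring
      have ht1 : |t| ≤ 1 := by rw [ht, abs_div, abs_of_pos ha]; exact (div_le_one ha).2 hx0
      have h := Convex.smul_add_smul_mem_of_symm hC hsymm hp hr (x := (l + t) / 2)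
        (y := (l - t) / 2) (by
          rw [abs_le] at hl ht1
          rcases abs_cases ((l + t) / 2) with h | h <;> rcases abs_cases ((l - t) / 2) with h' | h' <;>
            linarith)
      convert h using 1
      refine plane_ext ?_ ?_
      · rw [hxt]; simp; ring
      · rw [hx1, hyl]; simp; ring
  · have hpos : 0 < h := by linarith
    set τ := (b + h - y) / h with hτ
    have hyτ : y = b + h - τ * h := by rw [hτ]; field_simp; ring
    have hτ0 : 0 ≤ τ := div_nonneg (by linarith) hpos.le
    have hτ1 : τ ≤ 1 := (div_le_one hpos).2 (by linarith)
    refine ⟨τ * m + (1 - τ) * q, ?_, fun x hx1 hx0 => ?_⟩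
    · refine (abs_add_le _ _).trans ?_
      rw [abs_mul, abs_mul, abs_of_nonneg hτ0, abs_of_nonneg (sub_nonneg.2 hτ1)]
      nlinarith [abs_nonneg m, abs_nonneg q]
    · set t := (x 0 - (τ * m + (1 - τ) * q)) / a with ht
      have hxt : x 0 = τ * m + (1 - τ) * q + a * t := by rw [ht]; field_simp; ring
      have ht1 : |t| ≤ τ := by
        rw [ht, abs_div, abs_of_pos ha]; exact (div_le_iff₀ ha).2 (by linarith)
      rw [abs_le] at ht1
      have h := hC.sum_mem (t := Finset.univ) (w := ![(τ + t) / 2, (τ - t) / 2, 1 - τ])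
        (z := ![!₂[m + a, b], !₂[m - a, b], !₂[q, b + h]])
        (by intro i _; fin_cases i <;> simp <;> linarith)
        (by simp [Fin.sum_univ_three]; ring)
        (by intro i _; fin_cases i <;> simpa)
      convert h using 1
      refine plane_ext ?_ ?_
      · rw [hxt]; simp [Fin.sum_univ_three]; ring
      · rw [hx1, hyτ]; simp [Fin.sum_univ_three]; ring
  · exact ⟨0, by simp; positivity, fun x _ hx => absurd hx (by linarith [abs_nonneg (x 0 - 0)])⟩

lemma HeatDom.hexSet_of_aligned (hC : Convex ℝ C) (hsymm : ∀ x ∈ C, -x ∈ C)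
    {m a b q h : ℝ} (ha : 0 < a) (hb : 0 < b) (hh : 0 ≤ h)
    (hp : !₂[m + a, b] ∈ C) (hr : !₂[m - a, b] ∈ C) (hq : !₂[q, b + h] ∈ C)
    {θ : ℝ} (hθ : 0 < θ) (hθ1 : θ < 1) : HeatDom C (hexSet (θ * a) (θ * b) (θ * h)) := by
  have key : ∀ y, ∃ c : ℝ, |c| ≤ |m| + |q| ∧
      ∀ x : E2, x 1 = y → |x 0 - c| ≤ hexWidth a b h y → x ∈ C := by
    intro y
    rcases le_total 0 y with hy | hy
    · exact exists_center_of_nonneg hC hsymm ha hb hp hr hq hy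
    · obtain ⟨c, hc, hcC⟩ := exists_center_of_nonneg hC hsymm ha hb hp hr hq (neg_nonneg.2 hy)
      refine ⟨-c, by rwa [abs_neg], fun x hx1 hx0 => ?_⟩
      have := hcC (-x) (by simp [hx1]) (by
        have e : (-x : E2) 0 - c = -(x 0 - -c) := by simp; ring
        rw [e, abs_neg]
        simpa [hexWidth] using hx0)
      simpa using hsymm _ this
  choose c hc hcC using key
  have h1 : fiberSet c (hexWidth a b h) ⊆ C := fun x hx => hcC (x 1) x rfl hx
  exact ((HeatDom.of_subset h1).trans (HeatDom.fiberSet_steiner hc _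
    (mul_pos (sub_pos.2 hθ1) ha))).trans (HeatDom.of_subset (hexSet_scale_subset ha hb.le hh hθ hθ1))

end Aligned

/-- The symmetric hexagon spanned by three points. -/
def symmHull (p q r : E2) : Set E2 := convexHull ℝ {p, q, r, -p, -q, -r}

lemma symmHull_subset {p q r : E2} {C : Set E2} (hC : Convex ℝ C) (hsymm : ∀ x ∈ C, -x ∈ C)
    (hp : p ∈ C) (hq : q ∈ C) (hr : r ∈ C) : symmHull p q r ⊆ C := by
  refine convexHull_min ?_ hC
  rintro x (rfl | rfl | rfl | rfl | rfl | rfl)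
  exacts [hp, hq, hr, hsymm _ hp, hsymm _ hq, hsymm _ hr]

lemma convex_symmHull (p q r : E2) : Convex ℝ (symmHull p q r) := convex_convexHull ℝ _

lemma mem_symmHull (p q r : E2) :
    p ∈ symmHull p q r ∧ q ∈ symmHull p q r ∧ r ∈ symmHull p q r := by
  refine ⟨?_, ?_, ?_⟩ <;> exact subset_convexHull ℝ _ (by simp)

lemma neg_mem_symmHull {p q r : E2} : ∀ x ∈ symmHull p q r, -x ∈ symmHull p q r := by
  intro x hx
  rw [← Set.mem_neg]
  refine convexHull_min ?_ (convex_symmHull p q r).neg hx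
  rintro x (rfl | rfl | rfl | rfl | rfl | rfl) <;> rw [Set.mem_neg] <;>
    exact subset_convexHull ℝ _ (by simp)

lemma abs_linear_le_of_mem_symmHull {p q r : E2} {u v B : ℝ} (hp : |u * p 0 + v * p 1| ≤ B)
    (hq : |u * q 0 + v * q 1| ≤ B) (hr : |u * r 0 + v * r 1| ≤ B) {x : E2}
    (hx : x ∈ symmHull p q r) : |u * x 0 + v * x 1| ≤ B := by
  let C : Set E2 := {x | |u * x 0 + v * x 1| ≤ B}
  have hC : Convex ℝ C := by
    intro x hx y hy s t hs ht hst
    have hx' : |u * x 0 + v * x 1| ≤ B := hx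
    have hy' : |u * y 0 + v * y 1| ≤ B := hy
    change |u * (s • x + t • y : E2) 0 + v * (s • x + t • y : E2) 1| ≤ B
    have e : u * (s • x + t • y : E2) 0 + v * (s • x + t • y : E2) 1 =
        s * (u * x 0 + v * x 1) + t * (u * y 0 + v * y 1) := by simp; ring
    rw [e]
    refine (abs_add_le _ _).trans ?_
    rw [abs_mul, abs_mul, abs_of_nonneg hs, abs_of_nonneg ht]
    calc _ ≤ s * B + t * B := by gcongr
      _ = B := by rw [← add_mul, hst, one_mul]
  have hsymm : ∀ x ∈ C, -x ∈ C := by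
    intro x hx
    have hx' : |u * x 0 + v * x 1| ≤ B := hx
    change |u * (-x : E2) 0 + v * (-x : E2) 1| ≤ B
    rw [← abs_neg] at hx'
    convert hx' using 2
    simp; ring
  exact symmHull_subset hC hsymm hp hq hr hx

/-- The centre of the section at height `y` of an aligned hexagon. -/
def hexCenter (m b q h y : ℝ) : ℝ :=
  if |y| ≤ b then m * (y / b) else
    (if 0 ≤ y then 1 else -1) * ((b + h - |y|) / h * m + (1 - (b + h - |y|) / h) * q)

lemma measurable_hexCenter (m b q h : ℝ) : Measurable (hexCenter m b q h) := by
  unfold hexCenter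
  refine Measurable.ite (measurableSet_le (by fun_prop) measurable_const) (by fun_prop) ?_
  exact (Measurable.ite (measurableSet_le measurable_const measurable_id) measurable_const
    measurable_const).mul (by fun_prop)

lemma abs_sub_center_le {m a b γ δ x y τ : ℝ} (hk : 1 < γ + δ) (hb : 0 < b)
    (hτ : (γ + δ - 1) * b * τ = (γ + δ) * b - y)
    (h3 : |(γ + δ - 1) * b * x + (m + a - ((γ + δ) * m + (γ - δ) * a)) * y| ≤ 2 * δ * a * b)
    (h4 : |(γ + δ - 1) * b * x + (m - a - ((γ + δ) * m + (γ - δ) * a)) * y| ≤ 2 * γ * a * b) :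
    |x - (τ * m + (1 - τ) * ((γ + δ) * m + (γ - δ) * a))| ≤ a * τ := by
  have hh : 0 < (γ + δ - 1) * b := mul_pos (by linarith) hb
  rw [abs_le] at h3 h4 ⊢
  constructor
  · refine le_of_mul_le_mul_left ?_ hh
    have e : (γ + δ - 1) * b * (x - (τ * m + (1 - τ) * ((γ + δ) * m + (γ - δ) * a))) -
        (γ + δ - 1) * b * (-(a * τ)) = ((γ + δ - 1) * b * x +
        (m - a - ((γ + δ) * m + (γ - δ) * a)) * y) + 2 * γ * a * b := by
      linear_combination (a - m + ((γ + δ) * m + (γ - δ) * a)) * hτ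
    linarith [h4.1]
  · refine le_of_mul_le_mul_left ?_ hh
    have e : (γ + δ - 1) * b * (x - (τ * m + (1 - τ) * ((γ + δ) * m + (γ - δ) * a))) -
        (γ + δ - 1) * b * (a * τ) = ((γ + δ - 1) * b * x +
        (m + a - ((γ + δ) * m + (γ - δ) * a)) * y) - 2 * δ * a * b := by
      linear_combination (-a - m + ((γ + δ) * m + (γ - δ) * a)) * hτ
    linarith [h3.2]

lemma symmHull_subset_fiberSet {m a b γ δ : ℝ} (ha : 0 < a) (hb : 0 < b) (hγ : 0 ≤ γ) (hδ : 0 ≤ δ)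
    (hγ1 : γ ≤ 1) (hδ1 : δ ≤ 1) (hk : 1 ≤ γ + δ) :
    symmHull !₂[m + a, b] !₂[(γ + δ) * m + (γ - δ) * a, (γ + δ) * b] !₂[m - a, b] ⊆
      fiberSet (hexCenter m b ((γ + δ) * m + (γ - δ) * a) ((γ + δ - 1) * b))
        (hexWidth a b ((γ + δ - 1) * b)) := by
  intro z hz
  have hab := mul_pos ha hb
  have f1 := abs_linear_le_of_mem_symmHull (u := 0) (v := 1) (B := (γ + δ) * b)
    (by simp [abs_of_pos hb]; nlinarith) (by simp [abs_of_pos hb, abs_of_nonneg (add_nonneg hγ hδ)])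
    (by simp [abs_of_pos hb]; nlinarith) hz
  have f2 := abs_linear_le_of_mem_symmHull (u := b) (v := -m) (B := a * b)
    (by simp [abs_le]; constructor <;> nlinarith) (by simp [abs_le]; constructor <;> nlinarith)
    (by simp [abs_le]; constructor <;> nlinarith) hz
  have f3 := abs_linear_le_of_mem_symmHull (u := (γ + δ - 1) * b)
    (v := m + a - ((γ + δ) * m + (γ - δ) * a)) (B := 2 * δ * a * b)
    (by simp [abs_le]; constructor <;> nlinarith) (by simp [abs_le]; constructor <;> nlinarith)
    (by simp [abs_le]; constructor <;> nlinarith) hz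
  have f4 := abs_linear_le_of_mem_symmHull (u := (γ + δ - 1) * b)
    (v := m - a - ((γ + δ) * m + (γ - δ) * a)) (B := 2 * γ * a * b)
    (by simp [abs_le]; constructor <;> nlinarith) (by simp [abs_le]; constructor <;> nlinarith)
    (by simp [abs_le]; constructor <;> nlinarith) hz
  simp only [zero_mul, one_mul, zero_add] at f1
  have hbh : b + (γ + δ - 1) * b = (γ + δ) * b := by ring
  simp only [fiberSet, hexCenter, hexWidth, mem_ofPred_eq]
  split_ifs with h1 h0 h2 h2
  · have e : z 0 - m * (z 1 / b) = (b * z 0 + -m * z 1) / b := by field_simp; ring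
    rw [e, abs_div, abs_of_pos hb]
    exact (div_le_iff₀ hb).2 f2
  · rw [abs_of_nonneg h0] at *
    have hk' : 1 < γ + δ := by
      by_contra! hc
      nlinarith
    rw [one_mul]
    refine abs_sub_center_le hk' hb ?_ f3 f4
    rw [mul_div_cancel₀ _ (mul_pos (sub_pos.2 hk') hb).ne', hbh]
  · exact absurd f1 (by rwa [← hbh])
  · have h0' : z 1 ≤ 0 := (not_le.1 h0).le
    rw [abs_of_nonpos h0'] at *
    have hk' : 1 < γ + δ := by
      by_contra! hc
      nlinarith
    rw [neg_one_mul, sub_neg_eq_add, ← abs_neg]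
    have := abs_sub_center_le (x := -z 0) (y := -z 1) (m := m) (a := a) hk' hb
      (τ := (b + (γ + δ - 1) * b - -z 1) / ((γ + δ - 1) * b)) ?_
      (by rw [← abs_neg]; convert f3 using 2; ring) (by rw [← abs_neg]; convert f4 using 2; ring)
    · convert this using 2
      ring
    · rw [mul_div_cancel₀ _ (mul_pos (sub_pos.2 hk') hb).ne', hbh]
  · exact absurd f1 (by rwa [← hbh])

lemma volume_symmHull_aligned_le {m a b γ δ : ℝ} (ha : 0 < a) (hb : 0 < b) (hγ : 0 ≤ γ)
    (hδ : 0 ≤ δ) (hγ1 : γ ≤ 1) (hδ1 : δ ≤ 1) (hk : 1 ≤ γ + δ) :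
    volume (symmHull !₂[m + a, b] !₂[(γ + δ) * m + (γ - δ) * a, (γ + δ) * b] !₂[m - a, b]) ≤
      ENNReal.ofReal (2 * (1 + γ + δ) * (a * b)) := by
  refine (measure_mono (symmHull_subset_fiberSet ha hb hγ hδ hγ1 hδ1 hk)).trans (le_of_eq ?_)
  rw [volume_fiberSet_hexWidth ha hb.le (mul_nonneg (by linarith) hb.le)
    (measurable_hexCenter _ _ _ _)]
  congr 1; ring

/-- The rigid rotation taking the first coordinate axis to the direction of `w`. -/
def alignRot (w x : E2) : E2 :=
  !₂[(x 0 * w 0 - x 1 * w 1) / ‖w‖, (x 0 * w 1 + x 1 * w 0) / ‖w‖]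

/-- The inverse of `alignRot w`. -/
def alignRotInv (w x : E2) : E2 :=
  !₂[(x 0 * w 0 + x 1 * w 1) / ‖w‖, (x 1 * w 0 - x 0 * w 1) / ‖w‖]

lemma alignRot_alignRotInv {w : E2} (hw : w ≠ 0) (x : E2) : alignRot w (alignRotInv w x) = x := by
  have hn : ‖w‖ ≠ 0 := norm_ne_zero_iff.2 hw
  have hs := plane_norm_sq w
  refine plane_ext ?_ ?_
  · simp only [alignRot, alignRotInv]
    simp
    field_simp
    rw [hs]; ring
  · simp only [alignRot, alignRotInv]
    simp
    field_simp
    rw [hs]; ring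

lemma isometry_alignRot {w : E2} (hw : w ≠ 0) : Isometry (alignRot w) := by
  have hn : ‖w‖ ≠ 0 := norm_ne_zero_iff.2 hw
  have hs := plane_norm_sq w
  refine isometry_of_norm_sq fun x y => ?_
  simp only [alignRot]
  simp
  field_simp
  rw [hs]; ring

/-- `alignRot w` as a linear map. -/
def alignRotLin (w : E2) : E2 →ₗ[ℝ] E2 where
  toFun := alignRot w
  map_add' x y := plane_ext (by simp [alignRot]; ring) (by simp [alignRot]; ring)
  map_smul' s x := plane_ext (by simp [alignRot]; ring) (by simp [alignRot]; ring)

lemma alignRotLin_apply (w x : E2) : alignRotLin w x = alignRot w x := rfl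

section Rotate

variable {p r : E2}

lemma norm_sub_pos_of_det2_pos (hD : 0 < det2 p r) : 0 < ‖p - r‖ := by
  refine norm_pos_iff.2 fun h => ?_
  rw [sub_eq_zero.1 h, det2] at hD
  linarith [mul_comm (r 0) (r 1)]

lemma exists_alignRotInv_eq (hD : 0 < det2 p r) (γ δ : ℝ) : ∃ m : ℝ,
    alignRotInv (p - r) p = !₂[m + ‖p - r‖ / 2, det2 p r / ‖p - r‖] ∧
    alignRotInv (p - r) r = !₂[m - ‖p - r‖ / 2, det2 p r / ‖p - r‖] ∧
    alignRotInv (p - r) (γ • p + δ • r) =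
      !₂[(γ + δ) * m + (γ - δ) * (‖p - r‖ / 2), (γ + δ) * (det2 p r / ‖p - r‖)] := by
  have hn := (norm_sub_pos_of_det2_pos hD).ne'
  have hs := plane_norm_sq (p - r)
  simp only [PiLp.sub_apply] at hs
  set L := ‖p - r‖ with hL
  refine ⟨(p 0 ^ 2 + p 1 ^ 2 - r 0 ^ 2 - r 1 ^ 2) / (2 * L), ?_, ?_, ?_⟩ <;>
    refine plane_ext ?_ ?_ <;> simp [alignRotInv, det2, ← hL] <;> field_simp <;>
    (try rw [hs]) <;> ring

lemma HeatDom.hexSet_of_mem (hD : 0 < det2 p r)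
    {C : Set E2} (hC : Convex ℝ C) (hsymm : ∀ x ∈ C, -x ∈ C)
    {γ δ : ℝ} (hk : 1 ≤ γ + δ) (hp : p ∈ C) (hr : r ∈ C) (hq : γ • p + δ • r ∈ C)
    {θ : ℝ} (hθ : 0 < θ) (hθ1 : θ < 1) :
    HeatDom C (hexSet (θ * (‖p - r‖ / 2)) (θ * (det2 p r / ‖p - r‖))
      (θ * ((γ + δ - 1) * (det2 p r / ‖p - r‖)))) := by
  have hn := norm_sub_pos_of_det2_pos hD
  have hw : p - r ≠ 0 := norm_pos_iff.1 hn
  obtain ⟨m, e1, e2, e3⟩ := exists_alignRotInv_eq hD γ δ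
  have hb : 0 < det2 p r / ‖p - r‖ := div_pos hD hn
  refine (HeatDom.preimage_isometry (isometry_alignRot hw) C).trans ?_
  refine HeatDom.hexSet_of_aligned (m := m) (q := (γ + δ) * m + (γ - δ) * (‖p - r‖ / 2))
    (hC.linear_preimage (alignRotLin (p - r))) ?_ (half_pos hn) hb
    (mul_nonneg (by linarith) hb.le) ?_ ?_ ?_ hθ hθ1
  · intro x hx
    rw [mem_preimage, map_neg]
    exact hsymm _ hx
  · rw [← e1, mem_preimage, alignRotLin_apply, alignRot_alignRotInv hw]; exact hp
  · rw [← e2, mem_preimage, alignRotLin_apply, alignRot_alignRotInv hw]; exact hr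
  · have : det2 p r / ‖p - r‖ + (γ + δ - 1) * (det2 p r / ‖p - r‖) =
      (γ + δ) * (det2 p r / ‖p - r‖) := by ring
    rw [this, ← e3, mem_preimage, alignRotLin_apply, alignRot_alignRotInv hw]; exact hq

lemma volume_symmHull_le (hD : 0 < det2 p r)
    {γ δ : ℝ} (hγ : 0 ≤ γ) (hδ : 0 ≤ δ) (hγ1 : γ ≤ 1) (hδ1 : δ ≤ 1)
    (hk : 1 ≤ γ + δ) :
    volume (symmHull p (γ • p + δ • r) r) ≤ ENNReal.ofReal ((1 + γ + δ) * det2 p r) := by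
  have hn := norm_sub_pos_of_det2_pos hD
  have hw : p - r ≠ 0 := norm_pos_iff.1 hn
  obtain ⟨m, e1, e2, e3⟩ := exists_alignRotInv_eq hD γ δ
  have hb : 0 < det2 p r / ‖p - r‖ := div_pos hD hn
  have hsub : symmHull p (γ • p + δ • r) r ⊆ alignRotLin (p - r) ''
      symmHull (alignRotInv (p - r) p) (alignRotInv (p - r) (γ • p + δ • r))
        (alignRotInv (p - r) r) := by
    have hmem := mem_symmHull (alignRotInv (p - r) p) (alignRotInv (p - r) (γ • p + δ • r))
        (alignRotInv (p - r) r)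
    refine symmHull_subset ((convex_symmHull _ _ _).linear_image _) ?_ ?_ ?_ ?_
    · rintro _ ⟨x, hx, rfl⟩
      exact ⟨-x, neg_mem_symmHull x hx, map_neg _ _⟩
    · exact ⟨_, hmem.1, alignRot_alignRotInv hw _⟩
    · exact ⟨_, hmem.2.1, alignRot_alignRotInv hw _⟩
    · exact ⟨_, hmem.2.2, alignRot_alignRotInv hw _⟩
  have himg := (isometry_alignRot hw).measurePreserving_plane
  have hinj : Function.Injective (alignRot (p - r)) := (isometry_alignRot hw).injective
  have hemb : MeasurableEmbedding (alignRot (p - r)) :=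
    (isometry_alignRot hw).isClosedEmbedding.measurableEmbedding
  refine (measure_mono hsub).trans ?_
  change volume (alignRot (p - r) '' _) ≤ _
  rw [← himg.measure_preimage_emb hemb, preimage_image_eq _ hinj, e1, e2, e3]
  refine (volume_symmHull_aligned_le (half_pos hn) hb hγ hδ hγ1 hδ1 hk).trans (le_of_eq ?_)
  congr 1
  field_simp

end Rotate

/-- The symmetric hexagon of unit area and horizontal width `2 * √A`, whose central rectangle has
area `s`, dilated by the factor `θ`. -/
def unitHex (θ A s : ℝ) : Set E2 :=
  hexSet (θ * √A) (θ * (s / (4 * √A))) (θ * ((1 - s) / (2 * √A)))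

/-- Domination of all the smaller copies of a unit area hexagon. -/
def Reaches (H : Set E2) (A s : ℝ) : Prop :=
  ∀ θ : ℝ, 0 < θ → θ < 1 → HeatDom H (unitHex θ A s)

lemma exists_reaches_of_mem {p r : E2} (hD : 0 < det2 p r) {C : Set E2} (hC : Convex ℝ C)
    (hsymm : ∀ x ∈ C, -x ∈ C) {γ δ : ℝ} (hk : 1 ≤ γ + δ) (hp : p ∈ C) (hr : r ∈ C)
    (hq : γ • p + δ • r ∈ C) (hV : 1 ≤ (1 + γ + δ) * det2 p r) :
    ∃ A s : ℝ, 0 < A ∧ 0 < s ∧ s ≤ 1 ∧ Reaches C A s := by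
  have hL := norm_sub_pos_of_det2_pos hD
  have hs1 := Real.one_le_sqrt.2 hV
  have hs2 := Real.sq_sqrt (zero_le_one.trans hV)
  set S := √((1 + γ + δ) * det2 p r)
  set L := ‖p - r‖
  set D := det2 p r
  have hS : 0 < S := by linarith
  have hk1 : 0 < 1 + γ + δ := by linarith
  have hDS : D = S ^ 2 / (1 + γ + δ) := by rw [hs2]; field_simp
  refine ⟨(L / (2 * S)) ^ 2, 2 / (1 + γ + δ), by positivity, by positivity,
    (div_le_one hk1).2 (by linarith), fun θ h0 h1 => ?_⟩
  have h := HeatDom.hexSet_of_mem hD hC hsymm hk hp hr hq (θ := θ / S) (by positivity)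
    ((div_lt_one hS).2 (by linarith))
  convert h using 1
  rw [unitHex, Real.sqrt_sq (by positivity)]
  change _ = hexSet (θ / S * (L / 2)) (θ / S * (D / L)) (θ / S * ((γ + δ - 1) * (D / L)))
  congr 1
  · field_simp
  · rw [hDS]; field_simp; norm_num
  · rw [hDS]; field_simp; ring

section Core

variable {C : Set E2}

lemma exists_reaches_of_det_pos (hC : Convex ℝ C) (hsymm : ∀ x ∈ C, -x ∈ C) (hV : 1 ≤ volume C)
    {p r : E2} {γ δ : ℝ} (hD : 0 < det2 p r) (hγ : 0 ≤ γ) (hδ : 0 ≤ δ)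
    (hγ1 : γ ≤ 1) (hδ1 : δ ≤ 1) (hp : p ∈ C) (hr : r ∈ C) (hq : γ • p + δ • r ∈ C)
    (hsub : C ⊆ symmHull p (γ • p + δ • r) r) :
    ∃ A s : ℝ, 0 < A ∧ 0 < s ∧ s ≤ 1 ∧ Reaches C A s := by
  rcases le_total 1 (γ + δ) with hk | hk
  · refine exists_reaches_of_mem hD hC hsymm hk hp hr hq ?_
    have := (hV.trans (measure_mono hsub)).trans (volume_symmHull_le hD hγ hδ hγ1 hδ1 hk)
    exact ENNReal.one_le_ofReal.1 this
  · refine exists_reaches_of_mem (γ := 1) (δ := 0) hD hC hsymm (by norm_num) hp hr (by simpa) ?_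
    have hmem := mem_symmHull p ((1 : ℝ) • p + (0 : ℝ) • r) r
    have hsub' : symmHull p (γ • p + δ • r) r ⊆ symmHull p ((1 : ℝ) • p + (0 : ℝ) • r) r := by
      refine symmHull_subset (convex_symmHull _ _ _) neg_mem_symmHull hmem.1 ?_ hmem.2.2
      refine Convex.smul_add_smul_mem_of_symm (convex_symmHull _ _ _) neg_mem_symmHull
        hmem.1 hmem.2.2 ?_
      rwa [abs_of_nonneg hγ, abs_of_nonneg hδ]
    have := (hV.trans (measure_mono (hsub.trans hsub'))).trans
      (volume_symmHull_le hD zero_le_one le_rfl le_rfl zero_le_one (by norm_num))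
    exact ENNReal.one_le_ofReal.1 this

lemma exists_reaches_of_det_ne_zero (hC : Convex ℝ C) (hsymm : ∀ x ∈ C, -x ∈ C) (hV : 1 ≤ volume C)
    {p r : E2} {γ δ : ℝ} (hD : det2 p r ≠ 0) (hγ : 0 ≤ γ)
    (hδ : 0 ≤ δ) (hγ1 : γ ≤ 1) (hδ1 : δ ≤ 1) (hp : p ∈ C) (hr : r ∈ C) (hq : γ • p + δ • r ∈ C)
    (hsub : C ⊆ symmHull p (γ • p + δ • r) r) :
    ∃ A s : ℝ, 0 < A ∧ 0 < s ∧ s ≤ 1 ∧ Reaches C A s := by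
  rcases hD.lt_or_gt with hD | hD
  · rw [add_comm] at hq hsub
    have hmem := mem_symmHull r (δ • r + γ • p) p
    refine exists_reaches_of_det_pos hC hsymm hV (p := r) (r := p) ?_ hδ hγ hδ1 hγ1 hr hp hq
      (hsub.trans (symmHull_subset (convex_symmHull _ _ _) neg_mem_symmHull hmem.2.2 hmem.2.1
        hmem.1))
    unfold det2 at hD ⊢
    linarith
  · exact exists_reaches_of_det_pos hC hsymm hV hD hγ hδ hγ1 hδ1 hp hr hq hsub

lemma exists_reaches_of_abs_le (hC : Convex ℝ C) (hsymm : ∀ x ∈ C, -x ∈ C) (hV : 1 ≤ volume C)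
    {p q r : E2} {γ δ : ℝ} (hD : det2 p r ≠ 0)
    (hγ1 : |γ| ≤ 1) (hδ1 : |δ| ≤ 1) (hp : p ∈ C) (hr : r ∈ C) (hq : q ∈ C)
    (hqe : q = γ • p + δ • r) (hsub : C ⊆ symmHull p q r) :
    ∃ A s : ℝ, 0 < A ∧ 0 < s ∧ s ≤ 1 ∧ Reaches C A s := by
  wlog hγ : 0 ≤ γ generalizing p γ
  · have hmem := mem_symmHull (-p) q r
    refine this (p := -p) (γ := -γ) ?_ (by rwa [abs_neg]) (hsymm p hp) (by simpa using hqe)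
      (hsub.trans (symmHull_subset (convex_symmHull _ _ _) neg_mem_symmHull
        (by simpa using neg_mem_symmHull _ hmem.1) hmem.2.1 hmem.2.2)) (by linarith)
    have : det2 (-p) r = -det2 p r := by simp [det2]; ring
    rwa [this, neg_ne_zero]
  wlog hδ : 0 ≤ δ generalizing r δ
  · have hmem := mem_symmHull p q (-r)
    refine this (r := -r) (δ := -δ) (by rwa [abs_neg]) (hsymm r hr) ?_ (by simpa using hqe)
      (hsub.trans (symmHull_subset (convex_symmHull _ _ _) neg_mem_symmHull
        hmem.1 hmem.2.1 (by simpa using neg_mem_symmHull _ hmem.2.2))) (by linarith)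
    have : det2 p (-r) = -det2 p r := by simp [det2]; ring
    rwa [this, neg_ne_zero]
  subst hqe
  exact exists_reaches_of_det_ne_zero hC hsymm hV hD hγ hδ ((le_abs_self _).trans hγ1)
    ((le_abs_self _).trans hδ1) hp hr hq hsub

lemma exists_reaches_of_det_max (hC : Convex ℝ C) (hsymm : ∀ x ∈ C, -x ∈ C) (hV : 1 ≤ volume C)
    {p q r : E2} (hD : det2 p r ≠ 0)
    (h1 : |det2 p q| ≤ |det2 p r|) (h2 : |det2 q r| ≤ |det2 p r|)
    (hp : p ∈ C) (hr : r ∈ C) (hq : q ∈ C) (hsub : C ⊆ symmHull p q r) :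
    ∃ A s : ℝ, 0 < A ∧ 0 < s ∧ s ≤ 1 ∧ Reaches C A s := by
  have hDpos := abs_pos.2 hD
  refine exists_reaches_of_abs_le hC hsymm hV (γ := det2 q r / det2 p r)
    (δ := det2 p q / det2 p r) hD ?_ ?_ hp hr hq ?_ hsub
  · rw [abs_div]; exact (div_le_one hDpos).2 h2
  · rw [abs_div]; exact (div_le_one hDpos).2 h1
  · refine plane_ext ?_ ?_ <;> simp <;> field_simp <;> simp [det2] <;> ring

lemma exists_reaches_of_symmHull (hC : Convex ℝ C) (hsymm : ∀ x ∈ C, -x ∈ C) (hV : 1 ≤ volume C)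
    {p q r : E2} (hp : p ∈ C) (hr : r ∈ C) (hq : q ∈ C)
    (hsub : C ⊆ symmHull p q r) :
    ∃ A s : ℝ, 0 < A ∧ 0 < s ∧ s ≤ 1 ∧ Reaches C A s := by
  have hsw : ∀ u v : E2, |det2 u v| = |det2 v u| := by
    intro u v
    rw [← abs_neg]
    congr 1
    simp [det2]; ring
  by_cases hzero : det2 p q = 0 ∧ det2 p r = 0 ∧ det2 q r = 0
  · exfalso
    obtain ⟨w, hw, hwp, hwq, hwr⟩ : ∃ w : E2, w ≠ 0 ∧ det2 w p = 0 ∧ det2 w q = 0 ∧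
        det2 w r = 0 := by
      obtain ⟨z1, z2, z3⟩ := hzero
      by_cases h1 : p = 0
      · by_cases h2 : q = 0
        · by_cases h3 : r = 0
          · refine ⟨!₂[1, 0], fun h => ?_, ?_, ?_, ?_⟩
            · simpa using congrArg (fun x : E2 => x 0) h
            · simp [h1, det2]
            · simp [h2, det2]
            · simp [h3, det2]
          · refine ⟨r, h3, ?_, ?_, ?_⟩
            · simp [h1, det2]
            · simp [h2, det2]
            · simp [det2, mul_comm]
        · refine ⟨q, h2, ?_, ?_, z3⟩
          · simp [h1, det2]
          · simp [det2, mul_comm]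
      · exact ⟨p, h1, by simp [det2, mul_comm], z1, z2⟩
    let φ : E2 →ₗ[ℝ] ℝ :=
      { toFun := det2 w
        map_add' := fun x y => by simp [det2]; ring
        map_smul' := fun s x => by simp [det2]; ring }
    have hker : C ⊆ (LinearMap.ker φ : Set E2) := by
      refine hsub.trans (symmHull_subset (LinearMap.ker φ).convex (fun x hx => ?_) hwp hwq hwr)
      exact neg_mem hx
    have htop : LinearMap.ker φ ≠ ⊤ := by
      intro h
      have h0 : φ !₂[-w 1, w 0] = 0 := by
        rw [← LinearMap.mem_ker, h]; trivial
      have h1 : φ !₂[-w 1, w 0] = w 0 * w 0 + w 1 * w 1 := by simp [φ, det2]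
      have hw' := plane_norm_sq w
      have := norm_pos_iff.2 hw
      nlinarith
    have := (hV.trans (measure_mono hker)).trans_eq (Measure.addHaar_submodule volume _ htop)
    simp at this
  · have hmem := fun u v w : E2 => mem_symmHull u v w
    rcases le_total |det2 p q| |det2 p r| with h1 | h1
    · rcases le_total |det2 q r| |det2 p r| with h2 | h2
      · refine exists_reaches_of_det_max hC hsymm hV (fun h => hzero ?_) h1 h2 hp hr hq hsub
        rw [h, abs_zero, abs_nonpos_iff] at h1 h2
        exact ⟨h1, h, h2⟩
      · have h3 := h1.trans h2
        refine exists_reaches_of_det_max hC hsymm hV (p := q) (q := p) (r := r)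
          (fun h => hzero ?_) (by rwa [hsw]) h2 hq hr hp
          (hsub.trans (symmHull_subset (convex_symmHull _ _ _) neg_mem_symmHull (hmem _ _ _).2.1
            (hmem _ _ _).1 (hmem _ _ _).2.2))
        rw [h, abs_zero, abs_nonpos_iff] at h2 h3
        exact ⟨h3, h2, h⟩
    · rcases le_total |det2 q r| |det2 p q| with h2 | h2
      · refine exists_reaches_of_det_max hC hsymm hV (p := p) (q := r) (r := q)
          (fun h => hzero ?_) h1 (by rwa [hsw]) hp hq hr
          (hsub.trans (symmHull_subset (convex_symmHull _ _ _) neg_mem_symmHull (hmem _ _ _).1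
            (hmem _ _ _).2.2 (hmem _ _ _).2.1))
        rw [h, abs_zero, abs_nonpos_iff] at h1 h2
        exact ⟨h, h1, h2⟩
      · have h3 := h1.trans h2
        refine exists_reaches_of_det_max hC hsymm hV (p := q) (q := p) (r := r)
          (fun h => hzero ?_) (by rwa [hsw]) h3 hq hr hp
          (hsub.trans (symmHull_subset (convex_symmHull _ _ _) neg_mem_symmHull (hmem _ _ _).2.1
            (hmem _ _ _).1 (hmem _ _ _).2.2))
        rw [h, abs_zero, abs_nonpos_iff] at h2 h3
        exact ⟨h2, h3, h⟩

end Core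

lemma Hex.exists_reaches {H : Set E2} (hH : Hex H) (hV : volume H = 1) :
    ∃ A s : ℝ, 0 < A ∧ 0 < s ∧ s ≤ 1 ∧ Reaches H A s := by
  obtain ⟨⟨x₀, p, q, r, rfl⟩, -⟩ := hH
  have hmem := mem_symmHull p q r
  have hvol : volume (symmHull p q r) = 1 := by
    rw [← hV, image_add_left, measure_preimage_add]; rfl
  obtain ⟨A, s, hA, hs, hs1, hr⟩ := exists_reaches_of_symmHull (convex_symmHull p q r)
    neg_mem_symmHull hvol.ge hmem.1 hmem.2.2 hmem.2.1 subset_rfl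
  refine ⟨A, s, hA, hs, hs1, fun θ h0 h1 => HeatDom.trans ?_ (hr θ h0 h1)⟩
  exact HeatDom.of_isometry (isometry_add_left x₀) fun x hx => mem_image_of_mem _ hx

lemma convex_hexSet {a b h : ℝ} (ha : 0 ≤ a) (hh : 0 ≤ h) : Convex ℝ (hexSet a b h) := by
  rintro x ⟨hx1, hx2⟩ y ⟨hy1, hy2⟩ s t hs ht hst
  have habs : ∀ i, |(s • x + t • y : E2) i| ≤ s * |x i| + t * |y i| := by
    intro i
    refine (abs_add_le _ _).trans ?_
    simp [abs_mul, abs_of_nonneg hs, abs_of_nonneg ht]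
  have h0 := habs 0
  have h1 := habs 1
  have hst' : t = 1 - s := by linarith
  refine ⟨h0.trans ?_, ?_⟩
  · calc _ ≤ s * a + t * a := by gcongr
      _ = a := by rw [← add_mul, hst, one_mul]
  · have e1 := mul_le_mul_of_nonneg_left h0 hh
    have e2 := mul_le_mul_of_nonneg_left h1 ha
    have e3 := mul_le_mul_of_nonneg_left hx2 hs
    have e4 := mul_le_mul_of_nonneg_left hy2 ht
    have e5 : s * (a * (b + h - |x 1|)) + t * (a * (b + h - |y 1|)) =
      a * (b + h) - a * (s * |x 1| + t * |y 1|) := by rw [hst']; ring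
    linarith

lemma neg_mem_hexSet {a b h : ℝ} : ∀ x ∈ hexSet a b h, -x ∈ hexSet a b h := by
  rintro x ⟨h1, h2⟩
  exact ⟨by simpa using h1, by simpa using h2⟩

lemma Reaches.step {H : Set E2} {A s : ℝ} (hA : 0 < A) (hs : 0 < s) (hs1 : s ≤ 1)
    (h : Reaches H A s) : Reaches H (A / 4 + 1 / (16 * A)) (1 - s / 2) := by
  intro θ h0 h1
  set η := √θ with hη
  have hη0 : 0 < η := Real.sqrt_pos.2 h0
  have hη1 : η < 1 := by rw [hη, Real.sqrt_lt' one_pos]; simpa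
  have hηθ : η ^ 2 = θ := Real.sq_sqrt h0.le
  refine (h η hη0 hη1).trans ?_
  unfold unitHex
  set R := √A with hR
  have hR0 : 0 < R := Real.sqrt_pos.2 hA
  have hRA : A = R ^ 2 := (Real.sq_sqrt hA.le).symm
  set a := η * R
  set b := η * (s / (4 * R))
  set c := η * ((1 - s) / (2 * R))
  have ha : 0 < a := by positivity
  have hb : 0 < b := by positivity
  have hc : 0 ≤ c := mul_nonneg hη0.le (div_nonneg (by linarith) (by positivity))
  have hbc : 0 < b + c := by linarith
  set A' := A / 4 + 1 / (16 * A)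
  have hA' : 0 < A' := by positivity
  have hsA := Real.sq_sqrt hA'.le
  have hsA0 := Real.sqrt_pos.2 hA'
  have hdet : det2 !₂[a, -b] !₂[0, b + c] = a * (b + c) := by simp [det2]
  have hD : 0 < det2 !₂[a, -b] !₂[0, b + c] := by rw [hdet]; positivity
  have hL : ‖!₂[a, -b] - !₂[0, b + c]‖ = 2 * η * √A' := by
    rw [← sq_eq_sq₀ (norm_nonneg _) (by positivity), plane_norm_sq, mul_pow, hsA]
    simp [a, b, c, A', hRA]
    field_simp
    ring
  have hstep := HeatDom.hexSet_of_mem hD (convex_hexSet (b := b) ha.le hc) neg_mem_hexSet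
    (γ := 1) (δ := 2 * b / (b + c)) (by linarith [show 0 < 2 * b / (b + c) by positivity])
    (by
      refine ⟨by simp [abs_of_pos ha], ?_⟩
      simp [abs_of_pos ha, abs_of_pos hb, mul_comm])
    (by
      refine ⟨by simp [ha.le], ?_⟩
      simp [abs_of_pos hbc])
    (by
      have e : (1 : ℝ) • !₂[a, -b] + (2 * b / (b + c)) • !₂[0, b + c] = !₂[a, b] := by
        refine plane_ext (by simp) ?_
        simp
        field_simp
        ring
      rw [e]
      refine ⟨by simp [abs_of_pos ha], ?_⟩
      simp [abs_of_pos ha, abs_of_pos hb, mul_comm]) hη0 hη1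
  convert hstep using 1
  rw [hL, hdet, ← hηθ]
  congr 1
  · ring
  · simp only [a, b, c]
    field_simp
    ring
  · have : (1 + 2 * b / (b + c) - 1) * (a * (b + c) / (2 * η * √A')) =
      a * b / (η * √A') := by field_simp; ring
    rw [this]
    simp only [a, b]
    field_simp
    ring

lemma mem_hexSet_mul {θ a b h : ℝ} (hθ : 0 < θ) {x : E2} :
    x ∈ hexSet (θ * a) (θ * b) (θ * h) ↔
      |x 0| ≤ θ * a ∧ h * |x 0| + a * |x 1| ≤ θ * (a * (b + h)) := by
  refine and_congr_right fun _ => ?_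
  rw [mul_assoc, mul_assoc, mul_le_mul_iff_of_pos_left hθ]
  constructor <;> intro _ <;> linarith

lemma hexSet_mul_subset {θ η a b h a' b' h' : ℝ} (hθ : 0 < θ) (hη : 0 < η) (ha : 0 < a)
    (hh : 0 ≤ h) (haa : θ * a ≤ η * a')
    (hle : θ * (a * (b + h) + |h' - h| * a + |a' - a| * (b + h)) ≤ η * (a' * (b' + h'))) :
    hexSet (θ * a) (θ * b) (θ * h) ⊆ hexSet (η * a') (η * b') (η * h') := by
  intro x hx
  rw [mem_hexSet_mul hθ] at hx
  obtain ⟨hx0, hx1⟩ := hx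
  rw [mem_hexSet_mul hη]
  refine ⟨hx0.trans haa, ?_⟩
  have h2 : |x 1| ≤ θ * (b + h) := by
    have : 0 ≤ h * |x 0| := by positivity
    refine le_of_mul_le_mul_left ?_ ha
    linarith
  have h3 : (h' - h) * |x 0| ≤ |h' - h| * (θ * a) :=
    mul_le_mul (le_abs_self _) hx0 (abs_nonneg _) (abs_nonneg _)
  have h4 : (a' - a) * |x 1| ≤ |a' - a| * (θ * (b + h)) :=
    mul_le_mul (le_abs_self _) h2 (abs_nonneg _) (abs_nonneg _)
  linarith

lemma Reaches.of_tendsto {H : Set E2} {A s : ℕ → ℝ} {A' s' : ℝ} (hA' : 0 < A') (hs' : 0 < s')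
    (hs1 : s' ≤ 1) (hA : Tendsto A atTop (𝓝 A')) (hs : Tendsto s atTop (𝓝 s'))
    (hr : ∀ n, Reaches H (A n) (s n)) : Reaches H A' s' := by
  intro θ h0 h1
  set η := (1 + θ) / 2 with hη
  have hθη : θ < η := by rw [hη]; linarith
  have hη0 : 0 < η := h0.trans hθη
  have ha : 0 < √A' := Real.sqrt_pos.2 hA'
  have ta : Tendsto (fun n => √(A n)) atTop (𝓝 √A') := hA.sqrt
  have tb : Tendsto (fun n => s n / (4 * √(A n))) atTop (𝓝 (s' / (4 * √A'))) :=
    hs.div (ta.const_mul 4) (by positivity)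
  have th : Tendsto (fun n => (1 - s n) / (2 * √(A n))) atTop (𝓝 ((1 - s') / (2 * √A'))) :=
    (hs.const_sub 1).div (ta.const_mul 2) (by positivity)
  have hb : 0 < s' / (4 * √A') := by positivity
  have hh : 0 ≤ (1 - s') / (2 * √A') := div_nonneg (by linarith) (by positivity)
  have e1 : ∀ᶠ n in atTop, θ * √A' < η * √(A n) :=
    (ta.const_mul η).eventually_const_lt (by gcongr)
  have tL := ((((th.sub_const ((1 - s') / (2 * √A'))).abs.mul_const √A').const_add
      (√A' * (s' / (4 * √A') + (1 - s') / (2 * √A')))).add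
    ((ta.sub_const √A').abs.mul_const (s' / (4 * √A') + (1 - s') / (2 * √A')))).const_mul θ
  have tR := (ta.mul (tb.add th)).const_mul η
  have e2 := tL.eventually_lt tR (by
    simp only [sub_self, abs_zero, zero_mul, add_zero]
    gcongr)
  obtain ⟨n, hn1, hn2⟩ := (e1.and e2).exists
  exact (hr n η hη0 (by rw [hη]; linarith)).trans
    (HeatDom.of_subset (hexSet_mul_subset h0 hη0 ha hh hn1.le hn2.le))

lemma tendsto_of_abs_sub_le {u : ℕ → ℝ} {l k : ℝ} (hk0 : 0 ≤ k) (hk1 : k < 1)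
    (h : ∀ n, |u (n + 1) - l| ≤ k * |u n - l|) : Tendsto u atTop (𝓝 l) := by
  have hb : ∀ n, |u n - l| ≤ |u 0 - l| * k ^ n := by
    intro n
    induction n with
    | zero => simp
    | succ n ih =>
      calc |u (n + 1) - l| ≤ k * |u n - l| := h n
        _ ≤ k * (|u 0 - l| * k ^ n) := by gcongr
        _ = |u 0 - l| * k ^ (n + 1) := by ring
  rw [tendsto_iff_dist_tendsto_zero]
  refine squeeze_zero (fun _ => dist_nonneg) (fun n => (Real.dist_eq _ _).trans_le (hb n)) ?_
  simpa using (tendsto_pow_atTop_nhds_zero_of_lt_one hk0 hk1).const_mul |u 0 - l|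

lemma quarter_le_step {A : ℝ} (hA : 0 < A) : 1 / 4 ≤ A / 4 + 1 / (16 * A) := by
  have : A / 4 + 1 / (16 * A) - 1 / 4 = (2 * A - 1) ^ 2 / (16 * A) := by field_simp; ring
  have : 0 ≤ (2 * A - 1) ^ 2 / (16 * A) := by positivity
  linarith

lemma abs_step_sub_le {A : ℝ} (hA : 1 / 4 ≤ A) :
    |A / 4 + 1 / (16 * A) - √3 / 6| ≤ 3 / 4 * |A - √3 / 6| := by
  have h3 : √3 ^ 2 = 3 := Real.sq_sqrt (by norm_num)
  have h32 : 3 / 2 ≤ √3 := Real.le_sqrt_of_sq_le (by norm_num)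
  have hA0 : 0 < A := by linarith
  have : A / 4 + 1 / (16 * A) - √3 / 6 = (1 / 4 - √3 / (8 * A)) * (A - √3 / 6) := by
    field_simp
    linear_combination (-64) * h3
  rw [this, abs_mul]
  gcongr
  have h1 : 0 ≤ √3 / (8 * A) := by positivity
  have h2 : √3 / (8 * A) ≤ 1 := (div_le_one (by positivity)).2 (by nlinarith)
  rw [abs_le]
  constructor <;> linarith

/-- Every unit area hexagon dominates all the smaller copies of the regular one. -/
lemma Hex.reaches_regular {H : Set E2} (hH : Hex H) (hV : volume H = 1) :
    Reaches H (√3 / 6) (2 / 3) := by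
  obtain ⟨A₀, s₀, hA₀, hs₀, hs₁, h₀⟩ := hH.exists_reaches hV
  let A : ℕ → ℝ := fun n => (fun x => x / 4 + 1 / (16 * x))^[n] (A₀ / 4 + 1 / (16 * A₀))
  let s : ℕ → ℝ := fun n => (fun x => 1 - x / 2)^[n] (1 - s₀ / 2)
  have hAs : ∀ n, A (n + 1) = A n / 4 + 1 / (16 * A n) := fun n =>
    Function.iterate_succ_apply' _ _ _
  have hss : ∀ n, s (n + 1) = 1 - s n / 2 := fun n => Function.iterate_succ_apply' _ _ _
  have key : ∀ n, 1 / 4 ≤ A n ∧ 0 < s n ∧ s n ≤ 1 ∧ Reaches H (A n) (s n) := by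
    intro n
    induction n with
    | zero =>
      exact ⟨quarter_le_step hA₀, by change 0 < 1 - s₀ / 2; linarith,
        by change 1 - s₀ / 2 ≤ 1; linarith, h₀.step hA₀ hs₀ hs₁⟩
    | succ n ih =>
      obtain ⟨i1, i2, i3, i4⟩ := ih
      have i0 : 0 < A n := by linarith
      rw [hAs, hss]
      exact ⟨quarter_le_step i0, by linarith, by linarith, i4.step i0 i2 i3⟩
  refine Reaches.of_tendsto (by positivity) (by norm_num) (by norm_num)
    (tendsto_of_abs_sub_le (k := 3 / 4) (by norm_num) (by norm_num) fun n => ?_)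
    (tendsto_of_abs_sub_le (k := 1 / 2) (by norm_num) (by norm_num) fun n => ?_)
    fun n => (key n).2.2.2
  · rw [hAs]
    exact abs_step_sub_le (key n).1
  · rw [hss, show 1 - s n / 2 - 2 / 3 = -(1 / 2) * (s n - 2 / 3) by ring, abs_mul]
    norm_num

/-- The reflection exchanging the two coordinates of the plane. -/
def swapAxes : E2 ≃ₗᵢ[ℝ] E2 :=
  LinearIsometryEquiv.piLpCongrLeft 2 ℝ ℝ (Equiv.swap (0 : Fin 2) 1)

lemma swapAxes_zero (x : E2) : swapAxes x 0 = x 1 := rfl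

lemma swapAxes_one (x : E2) : swapAxes x 1 = x 0 := rfl

lemma swapAxes_swapAxes (x : E2) : swapAxes (swapAxes x) = x := plane_ext rfl rfl

lemma hexVertex_zero : hexVertex 0 = !₂[1, 0] := by
  simp [hexVertex]

lemma hexVertex_one : hexVertex 1 = !₂[1 / 2, √3 / 2] := by
  simp [hexVertex]

lemma hexVertex_two : hexVertex 2 = !₂[-(1 / 2), √3 / 2] := by
  have h : 2 * π / 3 = π - π / 3 := by ring
  simp [hexVertex, h, Real.cos_pi_sub, Real.sin_pi_sub]

lemma hexVertex_add_three (k : ℕ) : hexVertex (k + 3) = -hexVertex k := by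
  have h : ((k : ℝ) + 3) * π / 3 = k * π / 3 + π := by ring
  refine plane_ext ?_ ?_ <;> simp [hexVertex, h]

lemma hexVertex_mem_stdHexagon (k : Fin 6) : hexVertex k ∈ stdHexagon :=
  subset_convexHull ℝ _ ⟨k, rfl⟩

lemma neg_mem_stdHexagon : ∀ x ∈ stdHexagon, -x ∈ stdHexagon := by
  intro x hx
  have hsub : stdHexagon ⊆ (-LinearMap.id : E2 →ₗ[ℝ] E2) ⁻¹' stdHexagon := by
    refine convexHull_min ?_ ((convex_convexHull ℝ _).linear_preimage _)
    rintro _ ⟨k, rfl⟩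
    change -hexVertex k ∈ stdHexagon
    have h0 := hexVertex_add_three
    fin_cases k
    · simpa [← h0] using hexVertex_mem_stdHexagon 3
    · simpa [← h0] using hexVertex_mem_stdHexagon 4
    · simpa [← h0] using hexVertex_mem_stdHexagon 5
    · simpa [h0 0] using hexVertex_mem_stdHexagon 0
    · simpa [h0 1] using hexVertex_mem_stdHexagon 1
    · simpa [h0 2] using hexVertex_mem_stdHexagon 2
  exact hsub hx

lemma abs_sub_add_abs_le {t w : ℝ} (hs : 0 ≤ t * w) (hw : |w| ≤ 1 - |t|) (ht : 1 / 2 < |t|) :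
    |t - w| + |2 * w| ≤ 1 := by
  rcases mul_nonneg_iff.1 hs with ⟨h1, h2⟩ | ⟨h1, h2⟩
  · rw [abs_of_nonneg h1] at hw ht
    rw [abs_of_nonneg h2] at hw
    rw [abs_of_nonneg (by linarith), abs_of_nonneg (by linarith)]
    linarith
  · rw [abs_of_nonpos h1] at hw ht
    rw [abs_of_nonpos h2] at hw
    rw [abs_of_nonpos (by linarith), abs_of_nonpos (by linarith)]
    linarith

lemma stdHexagon_eq : stdHexagon = swapAxes ⁻¹' hexSet (√3 / 2) (1 / 2) (1 / 2) := by
  have h0 : 0 < √3 := by positivity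
  apply Subset.antisymm
  · refine convexHull_min ?_ ((convex_hexSet (by positivity) (by norm_num)).linear_preimage
      swapAxes.toLinearEquiv.toLinearMap)
    have m0 : swapAxes (hexVertex 0) ∈ hexSet (√3 / 2) (1 / 2) (1 / 2) := by
      constructor <;> norm_num [swapAxes_zero, swapAxes_one, hexVertex_zero]
      positivity
    have m1 : swapAxes (hexVertex 1) ∈ hexSet (√3 / 2) (1 / 2) (1 / 2) := by
      constructor <;> norm_num [swapAxes_zero, swapAxes_one, hexVertex_one, abs_of_pos (half_pos h0)]
      linarith
    have m2 : swapAxes (hexVertex 2) ∈ hexSet (√3 / 2) (1 / 2) (1 / 2) := by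
      constructor <;> norm_num [swapAxes_zero, swapAxes_one, hexVertex_two, abs_of_pos (half_pos h0)]
      linarith
    have hneg : ∀ k, swapAxes (hexVertex k) ∈ hexSet (√3 / 2) (1 / 2) (1 / 2) →
        swapAxes (hexVertex (k + 3)) ∈ hexSet (√3 / 2) (1 / 2) (1 / 2) := by
      intro k hk
      rw [hexVertex_add_three, map_neg]
      exact neg_mem_hexSet _ hk
    rintro _ ⟨k, rfl⟩
    change swapAxes (hexVertex k) ∈ hexSet (√3 / 2) (1 / 2) (1 / 2)
    fin_cases k
    exacts [m0, m1, m2, hneg 0 m0, hneg 1 m1, hneg 2 m2]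
  · rintro x ⟨hx1, hx2⟩
    rw [swapAxes_zero] at hx1 hx2
    rw [swapAxes_one] at hx2
    have hmem : ∀ {p r : E2}, p ∈ stdHexagon → r ∈ stdHexagon → ∀ {u v : ℝ}, |u| + |v| ≤ 1 →
        u • p + v • r ∈ stdHexagon := fun {_ _} hp hr {_ _} huv =>
      Convex.smul_add_smul_mem_of_symm (convex_convexHull ℝ _) neg_mem_stdHexagon hp hr huv
    have v0 : !₂[1, 0] ∈ stdHexagon := hexVertex_zero ▸ hexVertex_mem_stdHexagon 0
    have v1 : !₂[1 / 2, √3 / 2] ∈ stdHexagon := hexVertex_one ▸ hexVertex_mem_stdHexagon 1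
    have v2 : !₂[-(1 / 2), √3 / 2] ∈ stdHexagon := hexVertex_two ▸ hexVertex_mem_stdHexagon 2
    obtain ⟨w, hw⟩ : ∃ w, x 1 = √3 * w := ⟨x 1 / √3, by field_simp⟩
    rw [hw, abs_mul, abs_of_pos h0] at hx1 hx2
    have hw1 : |w| ≤ 1 / 2 := le_of_mul_le_mul_left (by linarith) h0
    have hw2 : |w| ≤ 1 - |x 0| := le_of_mul_le_mul_left (by linarith) h0
    rcases le_or_gt |x 0| (1 / 2) with hx | hx
    · have h : x = (w + x 0) • !₂[1 / 2, √3 / 2] + (w - x 0) • !₂[-(1 / 2), √3 / 2] := by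
        refine plane_ext ?_ ?_
        · simp; ring
        · simp [hw]; ring
      rw [h]
      refine hmem v1 v2 ?_
      grind
    rcases le_total 0 (x 0 * w) with hs | hs
    · have h : x = (x 0 - w) • !₂[1, 0] + (2 * w) • !₂[1 / 2, √3 / 2] := by
        refine plane_ext ?_ ?_
        · simp; ring
        · simp [hw]; ring
      rw [h]
      refine hmem v0 v1 ?_
      exact abs_sub_add_abs_le hs hw2 hx
    · have h : x = (x 0 + w) • !₂[1, 0] + (2 * w) • !₂[-(1 / 2), √3 / 2] := by
        refine plane_ext ?_ ?_
        · simp; ring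
        · simp [hw]; ring
      rw [h]
      refine hmem v0 v2 ?_
      simpa using abs_sub_add_abs_le (w := -w) (by linarith) (by rwa [abs_neg]) hx

/-- An isometry of the plane into itself is bijective. -/
lemma Isometry.exists_isometryEquiv_plane {g : E2 → E2} (hg : Isometry g) :
    ∃ e : E2 ≃ᵢ E2, ⇑e = g := by
  let L : E2 ≃ₗᵢ[ℝ] E2 := hg.affineIsometryOfStrictConvexSpace.linearIsometry.toLinearIsometryEquiv
    rfl
  have h : ∀ x, g x = L x + g 0 := by
    intro x
    have := hg.affineIsometryOfStrictConvexSpace.map_vadd 0 x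
    simp only [vadd_eq_add, add_zero] at this
    exact this
  have hs : Function.Surjective g := fun y => ⟨L.symm (y - g 0), by rw [h]; simp⟩
  exact ⟨⟨Equiv.ofBijective g ⟨hg.injective, hs⟩, hg⟩, rfl⟩

lemma smul_mem_hexSet {a b h θ : ℝ} (hθ : 0 < θ) {x : E2} :
    θ • x ∈ hexSet (θ * a) (θ * b) (θ * h) ↔ x ∈ hexSet a b h := by
  rw [mem_hexSet_mul hθ, ← one_mul a, ← one_mul b, ← one_mul h, mem_hexSet_mul one_pos]
  simp only [PiLp.smul_apply, smul_eq_mul, abs_mul, abs_of_pos hθ, one_mul]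
  rw [mul_le_mul_iff_right₀ hθ, mul_left_comm h, mul_left_comm a θ |x 1|, ← mul_add,
    mul_le_mul_iff_right₀ hθ]

lemma IsRegularHexagon.exists_isometryEquiv {H : Set E2} (hH : IsRegularHexagon H) :
    ∃ s : ℝ, 0 < s ∧ ∃ e : E2 ≃ᵢ E2,
      H = e '' hexSet (s * (√3 / 2)) (s * (1 / 2)) (s * (1 / 2)) := by
  obtain ⟨f, ⟨s, hs, hf⟩, rfl⟩ := hH
  refine ⟨s, hs, ?_⟩
  have hi : Isometry fun x => f (s⁻¹ • swapAxes x) := by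
    refine Isometry.of_dist_eq fun x y => ?_
    rw [hf, dist_smul₀, swapAxes.dist_map, norm_inv, Real.norm_of_nonneg hs.le]
    field_simp
  obtain ⟨e, he⟩ := hi.exists_isometryEquiv_plane
  refine ⟨e, ?_⟩
  rw [he, stdHexagon_eq]
  ext y
  constructor
  · rintro ⟨v, hv, rfl⟩
    refine ⟨s • swapAxes v, (smul_mem_hexSet hs).2 hv, ?_⟩
    simp [swapAxes_swapAxes, smul_smul, hs.ne']
  · rintro ⟨x, hx, rfl⟩
    refine ⟨s⁻¹ • swapAxes x, ?_, rfl⟩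
    rw [mem_preimage, ← smul_mem_hexSet hs]
    simpa [swapAxes_swapAxes, smul_smul, hs.ne'] using hx

lemma measurableSet_hexSet (a b h : ℝ) : MeasurableSet (hexSet a b h) := by
  have h1 : IsClosed {x : E2 | |x 0| ≤ a} := isClosed_le (by fun_prop) (by fun_prop)
  have h2 : IsClosed {x : E2 | h * |x 0| ≤ a * (b + h - |x 1|)} :=
    isClosed_le (by fun_prop) (by fun_prop)
  exact (h1.inter h2).measurableSet

/-- A regular hexagon of unit area is isometric to the limit of the symmetrizations. -/
lemma IsRegularHexagon.exists_isometryEquiv_unitHex {H : Set E2} (hH : IsRegularHexagon H)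
    (hV : volume H = 1) : ∃ e : E2 ≃ᵢ E2, H = e '' unitHex 1 (√3 / 6) (2 / 3) := by
  obtain ⟨s, hs, e, rfl⟩ := hH.exists_isometryEquiv
  refine ⟨e, ?_⟩
  have hvol : volume (hexSet (s * (√3 / 2)) (s * (1 / 2)) (s * (1 / 2))) = 1 := by
    rw [← hV, ← IsometryEquiv.preimage_symm,
      e.symm.isometry.measurePreserving_plane.measure_preimage
        (measurableSet_hexSet _ _ _).nullMeasurableSet]
  rw [volume_hexSet (by positivity) (by positivity) (by positivity), ENNReal.ofReal_eq_one] at hvol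
  have ha : √(√3 / 6) = s * (√3 / 2) := by
    rw [← Real.sqrt_sq (show 0 ≤ s * (√3 / 2) by positivity)]
    congr 1
    linear_combination (-√3 / 6) * hvol 
  rw [unitHex, ha]
  congr 2
  · ring
  · field_simp
    linear_combination 8 * hvol
  · field_simp
    linear_combination 2 * hvol

lemma rieszEnergy_map {α k : ℝ} (hk : 0 < k) {f : E2 → E2}
    (hf : ∀ x y, dist (f x) (f y) = k * dist x y) (μ : Measure E2) [SFinite μ] :
    rieszEnergy α (μ.map f) = ENNReal.ofReal k ^ (α - 2) * rieszEnergy α μ := by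
  have hm : Measurable f :=
    (LipschitzWith.of_dist_le_mul (K := k.toNNReal) fun x y => by
      rw [hf, Real.coe_toNNReal _ hk.le]).continuous.measurable
  have he : ∀ x y, edist (f x) (f y) = ENNReal.ofReal k * edist x y := fun x y => by
    rw [edist_dist, hf, ENNReal.ofReal_mul hk.le, edist_dist]
  have hmeas : ∀ ν : Measure E2, ∀ [SFinite ν],
      Measurable fun x => ∫⁻ y, edist x y ^ (α - 2) ∂ν := fun ν _ =>
    Measurable.lintegral_prod_right (by fun_prop)
  rw [rieszEnergy, lintegral_map (hmeas _) hm]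
  rw [rieszEnergy, ← lintegral_const_mul _ (hmeas _)]
  refine lintegral_congr fun x => ?_
  rw [lintegral_map (by fun_prop) hm, ← lintegral_const_mul _ (by fun_prop)]
  refine lintegral_congr fun y => ?_
  rw [he, ENNReal.mul_rpow_of_ne_top ENNReal.ofReal_ne_top (edist_ne_top x y)]

lemma exists_pos_of_dist_lt_mem_unitHex {θ η A s : ℝ} (hA : 0 < A) (hs : 0 < s) (hs1 : s ≤ 1)
    (h0 : 0 < θ) (hθη : θ < η) :
    ∃ δ > 0, ∀ x ∈ unitHex θ A s, ∀ y, dist y x < δ → y ∈ unitHex η A s := by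
  have ha : 0 < √A := Real.sqrt_pos.2 hA
  have hb : 0 < s / (4 * √A) := by positivity
  have hh : 0 ≤ (1 - s) / (2 * √A) := div_nonneg (by linarith) (by positivity)
  simp only [unitHex]
  set a := √A
  set b := s / (4 * a)
  set h := (1 - s) / (2 * a)
  have hd : 0 < η - θ := by linarith
  refine ⟨min ((η - θ) * a) ((η - θ) * (a * (b + h)) / (h + a)), by positivity, ?_⟩
  intro x hx y hy
  rw [mem_hexSet_mul h0] at hx
  rw [mem_hexSet_mul (h0.trans hθη)]
  obtain ⟨hy1, hy2⟩ := lt_min_iff.1 hy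
  rw [lt_div_iff₀ (by positivity)] at hy2
  have hi : ∀ i, |y i| ≤ |x i| + dist y x := by
    intro i
    have h1 : |y i - x i| ≤ dist y x := by
      simpa [dist_eq_norm] using PiLp.norm_apply_le (y - x) i
    linarith [abs_sub_abs_le_abs_sub (y i) (x i)]
  have i0 := hi 0
  have i1 := hi 1
  refine ⟨by linarith, ?_⟩
  have j0 := mul_le_mul_of_nonneg_left i0 hh
  have j1 := mul_le_mul_of_nonneg_left i1 ha.le
  linarith

lemma Hex.measurableSet {H : Set E2} (hH : Hex H) : MeasurableSet H := by
  obtain ⟨⟨x₀, p, q, r, rfl⟩, -⟩ := hH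
  have hfin : ({p, q, r, -p, -q, -r} : Set E2).Finite := by simp
  exact ((hfin.isCompact_convexHull ℝ).image (by fun_prop)).measurableSet

lemma Hex.rieszW_le_rieszEnergy {α : ℝ} (hα : α ∈ Ioo (0 : ℝ) 2) {H Hstar : Set E2}
    (hH : Hex H) (hV : volume H = 1) (hreg : IsRegularHexagon Hstar) (hvol : volume Hstar = 1)
    (μ : Measure E2) [IsProbabilityMeasure μ] (hμ : μ Hstar = 1) :
    rieszW α H ≤ rieszEnergy α μ := by
  obtain ⟨e, rfl⟩ := hreg.exists_isometryEquiv_unitHex hvol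
  have hA : (0 : ℝ) < √3 / 6 := by positivity
  have key : ∀ θ : ℝ, 0 < θ → θ < 1 →
      rieszW α H ≤ ENNReal.ofReal θ ^ (α - 2) * rieszEnergy α μ := by
    intro θ h0 h1
    obtain ⟨δ, hδ, hδm⟩ := exists_pos_of_dist_lt_mem_unitHex (θ := θ) (η := (1 + θ) / 2) hA
      (show (0 : ℝ) < 2 / 3 by norm_num) (by norm_num) h0 (by linarith)
    have hm : Measurable fun x => θ • e.symm x := by
      have := e.symm.continuous
      exact (this.const_smul θ).measurable
    have := Measure.isProbabilityMeasure_map (μ := μ) hm.aemeasurable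
    rw [← rieszEnergy_map h0 (f := fun x => θ • e.symm x) (fun x y => by
      rw [dist_smul₀, e.symm.dist_eq, Real.norm_of_nonneg h0.le])]
    refine HeatDom.rieszW_le_rieszEnergy hα hH.measurableSet (by simp [hV]) (by simp [hV])
      (hH.reaches_regular hV ((1 + θ) / 2) (by linarith) (by linarith)) hδ
      (measurableSet_hexSet _ _ _) hδm _ ?_
    change μ.map _ (unitHex θ _ _) = 1
    refine le_antisymm prob_le_one ?_
    rw [← hμ, Measure.map_apply hm
      (show MeasurableSet (unitHex _ _ _) from measurableSet_hexSet _ _ _)]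
    refine measure_mono ?_
    rintro _ ⟨x, hx, rfl⟩
    rw [unitHex, one_mul, one_mul, one_mul] at hx
    rw [mem_preimage, e.symm_apply_apply]
    exact (smul_mem_hexSet h0).2 hx
  have ht : Tendsto (fun θ : ℝ => ENNReal.ofReal θ ^ (α - 2) * rieszEnergy α μ) (𝓝[<] 1)
      (𝓝 (ENNReal.ofReal 1 ^ (α - 2) * rieszEnergy α μ)) := by
    refine ENNReal.Tendsto.mul_const ?_ (Or.inl (by simp))
    refine Tendsto.mono_left ?_ nhdsWithin_le_nhds
    exact (ENNReal.continuous_rpow_const.comp ENNReal.continuous_ofReal).tendsto 1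
  have hle := ge_of_tendsto ht (by
    filter_upwards [Ioo_mem_nhdsLT (show (0 : ℝ) < 1 by norm_num)] with θ hθ
    exact key θ hθ.1 hθ.2)
  simpa using hle

/-- Among the hexagons of unit area the regular one has the largest energy. -/
lemma Hex.rieszW_le {α : ℝ} (hα : α ∈ Ioo (0 : ℝ) 2) {H Hstar : Set E2}
    (hH : Hex H) (hV : volume H = 1) (hreg : IsRegularHexagon Hstar) (hvol : volume Hstar = 1) :
    rieszW α H ≤ rieszW α Hstar := by
  refine le_iInf fun μ => le_iInf fun hp => le_iInf fun hμ => ?_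
  have hm : MeasurableSet Hstar := by
    obtain ⟨e, rfl⟩ := hreg.exists_isometryEquiv_unitHex hvol
    exact e.toHomeomorph.measurableEmbedding.measurableSet_image.2 (measurableSet_hexSet _ _ _)
  have hr : μ.restrict Hstar = μ :=
    Measure.restrict_eq_self_of_ae_mem ((prob_compl_eq_zero_iff hm).2 hμ)
  rw [hr]
  exact hH.rieszW_le_rieszEnergy hα hV hreg hvol μ hμ

/-- For `α ∈ (0,2)`, among convex polygons of unit area tiling the plane
by translations, the regular hexagon minimizes the Riesz `α`-capacity (equivalently,
maximizes `W_α`). -/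
theorem statement13 (α : ℝ) (hα : α ∈ Set.Ioo (0 : ℝ) 2)
    (Hstar : Set E2) (hreg : IsRegularHexagon Hstar) (hvolstar : volume Hstar = 1) :
    ∀ H : Set E2, Hex H → volume H = 1 →
      rieszCap α Hstar ≤ rieszCap α H ∧ rieszW α H ≤ rieszW α Hstar := by
  intro H hH hV
  have h := hH.rieszW_le hα hV hreg hvolstar
  exact ⟨ENNReal.div_le_div_left h 1, h⟩
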